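/- For every f ∈ 𝒮 with logarithmic coefficients γ_n and every r with 0 < r < 1, the sharp inequality ∑_{n=1}^∞ n |γ_n|² r^{2n} ≤ log(1/(1−r²)) holds (the Bazilevič inequality), with equality if and only if f(z) = z/(1−e^{iθ}z)² for some θ ∈ ℝ. -/

import Mathlib

/-!
Write `f z = z * exp (g z)` and `S g q = ∑ k ‖c_k‖² q ^ k`, where the `c_k` are the Taylor
coefficients of `g`. With `q = r²` the claim is that `Phi g q = S g q + 4 log (1 - q) ≤ 0`, with
equality for Koebe functions only. The proof is a discrete version of the Loewner method.

The rescaled map `u z = f (ρ z) / R`, with `R` large, sends the unit disc into itself. Starting from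
the whole disc, short straight slits that avoid the image of `u` are removed from the domain one at a
time. By the Riemann mapping theorem the `n`-th domain is the image of a univalent map
`expMap σ p z = z * exp (-σ * p z)`, where `p` lies in the Carathéodory class (`Re p ≥ 0`, `p 0 = 1`),
and removing a slit composes it with another such map `expMap τ P` (`slit_step`). On the logarithms
this replaces `h` by `varLog h τ P`, for which the step inequality

  `Phi (varLog h τ P) q ≤ Phi h (q (1 - lam q τ)) - τ * gain h P q + C τ²`, `lam q = (1 - q) / (1 + q)`

holds (`step_inequality`). Here `gain h P q ≥ 0`, because it is the mean over `‖z‖ = √q` of a sum of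
two terms that are nonnegative by the Schwarz lemma applied to `(P - 1) / (P + 1)`. Hence `Phi` stays
nonpositive up to an error `ε σ`, and by compactness a chain of slit maps reaches every parameter
`σ` smaller than that of `u` (`adm_exists`). The last piece of the way is one more step of size `τ`
(`chain_final`); `τ → 0` and then `ρ → 1` give `phi_nonpos`.

If `Phi g q = 0`, take `ρ² = 1 - τ²`. Then the last step loses at most `O(τ²)` altogether, so that its
`gain` is `O(τ)`, and in the limit some Carathéodory function `P` satisfies `gain g P q = 0`
(`exists_gain_eq_zero`). Both terms of the integrand vanish on the circle: `P (1 + z g') = 1`, and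
`(P - 1) / (P + 1)` has modulus `‖z‖`, hence is a rotation by the Schwarz lemma. The resulting
differential equation for `g` says that `f` is a rotated Koebe function (`koebe_of_gain_eq_zero`).
Conversely, the logarithmic coefficients of these are `exp (i n θ) / n` (`tsum_koebe`).
-/

open Complex Metric Real

/-- The class `𝒮` of normalized univalent (analytic and injective) functions
on the unit disk. -/
def InClassS (f : ℂ → ℂ) : Prop :=
  AnalyticOnNhd ℂ f (ball (0 : ℂ) 1) ∧ Set.InjOn f (ball (0 : ℂ) 1) ∧
    f 0 = 0 ∧ deriv f 0 = 1

/-- `γ` are the logarithmic coefficients of `f`: there is an analytic branch `g`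
of `log (f z / z)` on the unit disk with `g 0 = 0` whose Taylor coefficients at `0`
are `2 * γ n` for `n ≥ 1`. -/
def IsLogCoeffs (f : ℂ → ℂ) (γ : ℕ → ℂ) : Prop :=
  ∃ g : ℂ → ℂ, AnalyticOnNhd ℂ g (ball (0 : ℂ) 1) ∧ g 0 = 0 ∧
    (∀ z ∈ ball (0 : ℂ) 1, z ≠ 0 → Complex.exp (g z) = f z / z) ∧
    ∀ n : ℕ, 1 ≤ n → iteratedDeriv n g 0 = (n.factorial : ℂ) * (2 * γ n)

/-- `f` coincides on the unit disk with a rotation `z / (1 - e^{iθ} z)^2`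
of the Koebe function. -/
def IsKoebeRotation (f : ℂ → ℂ) : Prop :=
  ∃ θ : ℝ, Set.EqOn f
    (fun z => z / (1 - Complex.exp (θ * Complex.I) * z) ^ 2) (ball (0 : ℂ) 1)

open Filter Topology Set
open ComplexConjugate

/-! ### Univalent functions, Montel and Hurwitz -/

/-- The derivative of an injective holomorphic function has no zeros: near a zero of `deriv f`,
`f - f z₀` would be the `n`-th power, `n ≥ 2`, of a local coordinate. -/
lemma deriv_ne_zero_of_injOn {U : Set ℂ} (hU : IsOpen U) {f : ℂ → ℂ}
    (hf : DifferentiableOn ℂ f U) (hi : InjOn f U) {z₀ : ℂ} (hz : z₀ ∈ U) :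
    deriv f z₀ ≠ 0 := by
  intro hd
  have hfa : AnalyticAt ℂ f z₀ := hf.analyticAt (hU.mem_nhds hz)
  set g : ℂ → ℂ := fun z => f z - f z₀ with hg
  have hga : AnalyticAt ℂ g z₀ := hfa.sub analyticAt_const
  have hUn : U ∈ 𝓝 z₀ := hU.mem_nhds hz
  have htop : analyticOrderAt g z₀ ≠ ⊤ := by
    intro h
    rw [analyticOrderAt_eq_top] at h
    have h2 : ∀ᶠ z in 𝓝[≠] z₀, False := by
      filter_upwards [h.filter_mono nhdsWithin_le_nhds, self_mem_nhdsWithin,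
        mem_nhdsWithin_of_mem_nhds hUn] with z h1 h2 h3
      exact h2 (hi h3 hz (sub_eq_zero.1 h1))
    exact (h2.exists).elim fun _ h => h
  obtain ⟨k, hka, hk0, hk⟩ := (hga.analyticOrderAt_ne_top).1 htop
  set n := analyticOrderNatAt g z₀ with hn
  have hg0 : g z₀ = 0 := by simp [hg]
  have hn0 : n ≠ 0 := by
    intro h0
    have := hk.self_of_nhds
    rw [h0, hg0] at this
    simp at this
    exact hk0 this.symm
  have hn1 : n ≠ 1 := by
    intro h1
    have hder : deriv g z₀ = 0 := by simp [hg, hd]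
    rw [hk.deriv_eq, h1] at hder
    have h3 : HasDerivAt (fun z => (z - z₀) ^ 1 • k z)
        (1 * k z₀ + (z₀ - z₀) * deriv k z₀) z₀ := by
      simpa using ((hasDerivAt_id' z₀).sub_const z₀).fun_mul hka.differentiableAt.hasDerivAt
    rw [h3.deriv] at hder
    simp at hder
    exact hk0 hder
  obtain ⟨b, hb⟩ : ∃ b : ℂ, b ^ n = k z₀ := IsAlgClosed.exists_pow_nat_eq _ (Nat.pos_of_ne_zero hn0)
  have hb0 : b ≠ 0 := by
    rintro rfl
    rw [zero_pow hn0] at hb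
    exact hk0 hb.symm
  set κ : ℂ → ℂ := fun z => k z / k z₀ with hκ
  have hκa : AnalyticAt ℂ κ z₀ := hka.div analyticAt_const hk0
  have hκ0 : κ z₀ = 1 := div_self hk0
  set ρ : ℂ → ℂ := fun z => (z - z₀) * (b * Complex.exp (Complex.log (κ z) / n)) with hρ
  have hqa : AnalyticAt ℂ (fun z => b * Complex.exp (Complex.log (κ z) / n)) z₀ := by
    have : AnalyticAt ℂ (fun z => Complex.log (κ z)) z₀ := hκa.clog (by rw [hκ0]; simp)
    exact analyticAt_const.mul (AnalyticAt.cexp (this.div analyticAt_const (by exact_mod_cast hn0)))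
  have hρa : AnalyticAt ℂ ρ z₀ := (analyticAt_id.sub analyticAt_const).mul hqa
  have hρd : HasStrictDerivAt ρ b z₀ := by
    have h4 : HasDerivAt ρ b z₀ := by
      have := ((hasDerivAt_id' z₀).sub_const z₀).fun_mul hqa.differentiableAt.hasDerivAt
      simpa [hκ0, hρ] using this
    have := hρa.hasStrictDerivAt
    rwa [h4.deriv] at this
  have hmap := hρd.map_nhds_eq hb0
  have hρ0 : ρ z₀ = 0 := by simp [hρ]
  rw [hρ0] at hmap
  have hev : ∀ᶠ z in 𝓝 z₀, z ∈ U ∧ g z = ρ z ^ n := by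
    have hne : ∀ᶠ z in 𝓝 z₀, κ z ≠ 0 :=
      hκa.continuousAt.eventually_ne (by rw [hκ0]; exact one_ne_zero)
    filter_upwards [hUn, hk, hne] with z h1 h2 h3
    refine ⟨h1, ?_⟩
    rw [h2, hρ]
    simp only [smul_eq_mul]
    rw [mul_pow, mul_pow, hb, ← Complex.exp_nat_mul, mul_div_cancel₀ _ (by exact_mod_cast hn0),
      Complex.exp_log h3, hκ, mul_div_cancel₀ _ hk0]
  have himg : ρ '' {z | z ∈ U ∧ g z = ρ z ^ n} ∈ 𝓝 (0 : ℂ) := by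
    rw [← hmap]; exact image_mem_map hev
  obtain ⟨ε, hε, hball⟩ := Metric.mem_nhds_iff.1 himg
  have hζ := Complex.isPrimitiveRoot_exp n hn0
  set ζ := Complex.exp (2 * π * I / n) with hζd
  have hζ1 : ζ ≠ 1 := hζ.ne_one (by omega)
  have hζn : ‖ζ‖ = 1 := hζ.norm'_eq_one hn0
  have he1 : ((ε / 2 : ℝ) : ℂ) ∈ ball (0 : ℂ) ε := by
    simp [abs_of_pos hε, hε]
  have he2 : ζ * ((ε / 2 : ℝ) : ℂ) ∈ ball (0 : ℂ) ε := by
    rw [mem_ball_zero_iff, norm_mul, hζn, one_mul]; simpa using he1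
  obtain ⟨z1, ⟨h1U, h1g⟩, h1⟩ := hball he1
  obtain ⟨z2, ⟨h2U, h2g⟩, h2⟩ := hball he2
  have : f z1 = f z2 := by
    have : g z1 = g z2 := by rw [h1g, h2g, h1, h2, mul_pow, hζ.pow_eq_one, one_mul]
    simpa [hg] using this
  have hz12 := hi h1U h2U this
  rw [hz12, h2] at h1
  have : ((ε / 2 : ℝ) : ℂ) ≠ 0 := by
    have : (ε/2) ≠ 0 := by positivity
    exact_mod_cast this
  exact hζ1 (mul_right_cancel₀ this (by rw [one_mul]; exact h1))

/-- An injective holomorphic function on an open set maps open subsets to open sets. -/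
lemma isOpen_image_of_injOn {U : Set ℂ} (hU : IsOpen U) {f : ℂ → ℂ}
    (hf : DifferentiableOn ℂ f U) (hi : InjOn f U) {V : Set ℂ} (hVU : V ⊆ U) (hV : IsOpen V) :
    IsOpen (f '' V) := by
  rw [isOpen_iff_mem_nhds]
  rintro _ ⟨z, hz, rfl⟩
  have hfa : AnalyticAt ℂ f z := hf.analyticAt (hU.mem_nhds (hVU hz))
  rw [← hfa.hasStrictDerivAt.map_nhds_eq (deriv_ne_zero_of_injOn hU hf hi (hVU hz))]
  exact image_mem_map (hV.mem_nhds hz)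

lemma exists_inverse {U : Set ℂ} (hU : IsOpen U) {f : ℂ → ℂ}
    (hf : DifferentiableOn ℂ f U) (hi : InjOn f U) :
    ∃ g : ℂ → ℂ, DifferentiableOn ℂ g (f '' U) ∧ (∀ z ∈ U, g (f z) = z) := by
  refine ⟨Function.invFunOn f U, ?_, fun z hz => hi.leftInvOn_invFunOn hz⟩
  have hli : ∀ z ∈ U, Function.invFunOn f U (f z) = z := fun z hz => hi.leftInvOn_invFunOn hz
  rintro _ ⟨z, hz, rfl⟩
  have hfa : AnalyticAt ℂ f z := hf.analyticAt (hU.mem_nhds hz)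
  have hd := deriv_ne_zero_of_injOn hU hf hi hz
  have hc : ContinuousAt (Function.invFunOn f U) (f z) := by
    rw [ContinuousAt, hli z hz]
    intro s hs
    rw [mem_map, ← hfa.hasStrictDerivAt.map_nhds_eq hd, mem_map]
    filter_upwards [hs, hU.mem_nhds hz] with y h1 h2
    simpa [hli y h2] using h1
  have hopen : f '' U ∈ 𝓝 (f z) :=
    (isOpen_image_of_injOn hU hf hi subset_rfl hU).mem_nhds ⟨z, hz, rfl⟩
  refine (HasDerivAt.of_local_left_inverse (f := f) (f' := deriv f z) hc ?_ hd ?_).differentiableAt.differentiableWithinAt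
  · rw [hli z hz]; exact hfa.differentiableAt.hasDerivAt
  · filter_upwards [hopen] with y hy
    obtain ⟨x, hx, rfl⟩ := hy
    rw [hli x hx]

/-- Cauchy estimate as a local Lipschitz bound. -/
lemma lipschitz_of_bound {f : ℂ → ℂ} {z₀ : ℂ} {δ M : ℝ} (hδ : 0 < δ)
    (hf : DifferentiableOn ℂ f (ball z₀ (3 * δ))) (hM : ∀ z ∈ ball z₀ (3 * δ), ‖f z‖ ≤ M)
    {x y : ℂ} (hx : x ∈ ball z₀ δ) (hy : y ∈ ball z₀ δ) : ‖f y - f x‖ ≤ M / δ * ‖y - x‖ := by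
  have hsub : ∀ w ∈ ball z₀ δ, closedBall w δ ⊆ ball z₀ (3 * δ) := by
    intro w hw u hu
    rw [mem_ball] at *; rw [mem_closedBall] at hu
    linarith [dist_triangle u w z₀]
  refine Convex.norm_image_sub_le_of_norm_deriv_le (s := ball z₀ δ) ?_ ?_ (convex_ball _ _) hx hy
  · intro w hw
    exact (hf.differentiableAt (isOpen_ball.mem_nhds (hsub w hw (mem_closedBall_self hδ.le))))
  · intro w hw
    refine Complex.norm_deriv_le_of_forall_mem_sphere_norm_le hδ ?_ ?_
    · refine DifferentiableOn.diffContOnCl ?_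
      rw [closure_ball _ hδ.ne']
      exact hf.mono (hsub w hw)
    · intro u hu
      exact hM u (hsub w hw (sphere_subset_closedBall hu))

/-- Montel's theorem: a locally bounded family converges locally uniformly along any ultrafilter. -/
lemma montel {ι : Type*} (𝒰 : Ultrafilter ι) {U : Set ℂ} (hU : IsOpen U) {F : ι → ℂ → ℂ}
    (hF : ∀ i, DifferentiableOn ℂ (F i) U)
    (hb : ∀ z ∈ U, ∃ δ > 0, ∃ M : ℝ, ∀ i, ∀ w ∈ ball z δ, ‖F i w‖ ≤ M) :
    ∃ f : ℂ → ℂ, TendstoLocallyUniformlyOn F f (𝒰 : Filter ι) U := by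
  have hpt : ∀ z ∈ U, ∃ l, Tendsto (fun i => F i z) (𝒰 : Filter ι) (𝓝 l) := by
    intro z hz
    obtain ⟨δ, hδ, M, hM⟩ := hb z hz
    have hc : IsCompact (closedBall (0 : ℂ) M) := isCompact_closedBall _ _
    obtain ⟨l, -, hl⟩ := hc.ultrafilter_le_nhds (𝒰.map fun i => F i z) (by
      rw [Ultrafilter.coe_map, le_principal_iff, mem_map]
      refine univ_mem' fun i => ?_
      simpa using hM i z (mem_ball_self hδ))
    exact ⟨l, hl⟩
  choose! f hf using hpt
  refine ⟨f, ?_⟩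
  rw [Metric.tendstoLocallyUniformlyOn_iff]
  intro ε hε z hz
  obtain ⟨δ, hδ, M, hM⟩ := hb z hz
  obtain ⟨δ', hδ', hsub⟩ := Metric.isOpen_iff.1 hU z hz
  set η := min δ δ' / 3 with hη
  have hη0 : 0 < η := by positivity
  have h1 : ball z (3 * η) ⊆ ball z δ := ball_subset_ball (by rw [hη]; linarith [min_le_left δ δ'])
  have h2 : ball z (3 * η) ⊆ U := (ball_subset_ball (by rw [hη]; linarith [min_le_right δ δ'])).trans hsub
  have hlip : ∀ i, ∀ x ∈ ball z η, ‖F i x - F i z‖ ≤ M / η * ‖x - z‖ := fun i x hx =>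
    lipschitz_of_bound hη0 ((hF i).mono h2) (fun w hw => hM i w (h1 hw)) (mem_ball_self hη0) hx
  have hlim : ∀ x ∈ ball z η, ‖f x - f z‖ ≤ M / η * ‖x - z‖ := by
    intro x hx
    have hxU : x ∈ U := h2 (ball_subset_ball (by linarith) hx)
    exact le_of_tendsto ((hf x hxU).sub (hf z hz)).norm (Eventually.of_forall fun i => hlip i x hx)
  have hM0 : 0 ≤ M := by
    obtain ⟨i⟩ : Nonempty ι := 𝒰.neBot.nonempty
    exact (norm_nonneg _).trans (hM i z (mem_ball_self hδ))
  set κ := min η (ε / (3 * (M / η + 1))) with hκ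
  have hMη : 0 ≤ M / η := by positivity
  have hκ0 : 0 < κ := by positivity
  refine ⟨ball z κ, mem_nhdsWithin_of_mem_nhds (ball_mem_nhds z hκ0), ?_⟩
  filter_upwards [(Metric.tendsto_nhds.1 (hf z hz)) (ε / 3) (by positivity)] with i hi y hy
  have hyη : y ∈ ball z η := ball_subset_ball (min_le_left _ _) hy
  have hyκ : M / η * ‖y - z‖ ≤ ε / 3 := by
    have : ‖y - z‖ ≤ ε / (3 * (M / η + 1)) := by
      rw [mem_ball, dist_eq_norm] at hy
      exact hy.le.trans (min_le_right _ _)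
    calc M / η * ‖y - z‖ ≤ (M / η + 1) * (ε / (3 * (M / η + 1))) := by gcongr; linarith
      _ = ε / 3 := by field_simp
  have e1 := hlim y hyη
  have e2 := hlip i y hyη
  rw [dist_eq_norm] at hi ⊢
  calc ‖f y - F i y‖ = ‖(f y - f z) - (F i z - f z) - (F i y - F i z)‖ := by congr 1; ring
    _ ≤ ‖f y - f z‖ + ‖F i z - f z‖ + ‖F i y - F i z‖ :=
        (norm_sub_le _ _).trans (by gcongr; exact norm_sub_le _ _)
    _ < ε := by linarith

/-- Hurwitz's theorem: a zero of a locally uniform limit of zero-free functions is not isolated. -/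
lemma hurwitz {ι : Type*} {l : Filter ι} [l.NeBot] {U : Set ℂ} (hU : IsOpen U) {F : ι → ℂ → ℂ}
    {f : ℂ → ℂ} (hF : ∀ i, DifferentiableOn ℂ (F i) U) (hlim : TendstoLocallyUniformlyOn F f l U)
    (hne : ∀ i, ∀ z ∈ U, F i z ≠ 0) {b : ℂ} (hb : b ∈ U) (hfb : f b = 0) :
    ∀ᶠ z in 𝓝 b, f z = 0 := by
  have hfd : DifferentiableOn ℂ f U := hlim.differentiableOn (Eventually.of_forall hF) hU
  rcases (hfd.analyticAt (hU.mem_nhds hb)).eventually_eq_zero_or_eventually_ne_zero with h | h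
  · exact h
  exfalso
  rw [eventually_nhdsWithin_iff] at h
  obtain ⟨r, hr, hball⟩ := Metric.mem_nhds_iff.1 (h.and (hU.mem_nhds hb))
  have hcl : closedBall b (r / 2) ⊆ U := fun z hz =>
    (hball (closedBall_subset_ball (by linarith) hz)).2
  have hcs : IsCompact (sphere b (r / 2)) := isCompact_sphere _ _
  have hsne : (sphere b (r / 2)).Nonempty := NormedSpace.sphere_nonempty.2 (by positivity)
  obtain ⟨x, hx, hxm⟩ := hcs.exists_isMinOn hsne
    ((hfd.continuousOn.mono (sphere_subset_closedBall.trans hcl)).norm)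
  set m := ‖f x‖ with hm
  have hxb : x ≠ b := by
    rintro rfl
    simp at hx; linarith
  have hm0 : 0 < m := norm_pos_iff.2
    ((hball (closedBall_subset_ball (by linarith) (sphere_subset_closedBall hx))).1 hxb)
  have hun := (tendstoLocallyUniformlyOn_iff_forall_isCompact hU).1 hlim _ hcl
    (isCompact_closedBall _ _)
  have hev := (Metric.tendstoUniformlyOn_iff.1 hun) (m / 3) (by positivity)
  obtain ⟨i, hi⟩ := hev.exists
  have hbound : ‖(F i b)⁻¹‖ ≤ (2 * m / 3)⁻¹ := by
    refine Complex.norm_le_of_forall_mem_frontier_norm_le (U := ball b (r / 2))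
      (f := fun z => (F i z)⁻¹) isBounded_ball ?_ ?_ (subset_closure (mem_ball_self (by positivity)))
    · refine DifferentiableOn.diffContOnCl ?_
      rw [closure_ball _ (by positivity)]
      exact ((hF i).mono hcl).inv fun z hz => hne i z (hcl hz)
    · intro z hz
      rw [frontier_ball _ (by positivity)] at hz
      rw [norm_inv]
      have h1 := hi z (sphere_subset_closedBall hz)
      have h2 : m ≤ ‖f z‖ := hxm hz
      rw [dist_eq_norm] at h1
      have h3 := norm_sub_norm_le (f z) (F i z)
      exact inv_anti₀ (by positivity) (by linarith)
  have h1 := hi b (mem_closedBall_self (by positivity))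
  rw [hfb, dist_eq_norm, zero_sub, norm_neg] at h1
  rw [norm_inv, inv_le_inv₀ (norm_pos_iff.2 (hne i b hb)) (by positivity)] at hbound
  linarith

/-- Hurwitz's theorem for univalent functions: a locally uniform limit of injective functions is
injective, unless its derivative vanishes identically. -/
lemma hurwitz_injOn {ι : Type*} {l : Filter ι} [l.NeBot] {U : Set ℂ} (hU : IsOpen U)
    (hUc : IsPreconnected U) {F : ι → ℂ → ℂ}
    {f : ℂ → ℂ} (hF : ∀ i, DifferentiableOn ℂ (F i) U) (hlim : TendstoLocallyUniformlyOn F f l U)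
    (hinj : ∀ i, InjOn (F i) U) {z₀ : ℂ} (hz₀ : z₀ ∈ U) (hd : deriv f z₀ ≠ 0) :
    InjOn f U := by
  intro a ha b hb hab
  by_contra hne
  have hfd : DifferentiableOn ℂ f U := hlim.differentiableOn (Eventually.of_forall hF) hU
  have hV : IsOpen (U \ {a}) := hU.sdiff isClosed_singleton
  have hk : TendstoLocallyUniformlyOn (fun i z => F i z - F i a) (fun z => f z - f a) l (U \ {a}) := by
    have h1 := hlim.mono (sdiff_subset : U \ {a} ⊆ U)
    have h2 : TendstoLocallyUniformlyOn (fun i (_ : ℂ) => F i a) (fun _ => f a) l (U \ {a}) := by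
      rw [Metric.tendstoLocallyUniformlyOn_iff]
      intro ε hε x hx
      refine ⟨univ, univ_mem, ?_⟩
      filter_upwards [Metric.tendsto_nhds.1 (hlim.tendsto_at ha) ε hε] with i hi y _
      rw [dist_comm]; exact hi
    exact h1.sub h2
  have hz : ∀ᶠ z in 𝓝 b, f z - f a = 0 := by
    refine hurwitz hV (fun i => ((hF i).mono sdiff_subset).sub_const _) hk ?_ ⟨hb, ?_⟩ ?_
    · intro i z hz h0
      exact hz.2 (hinj i hz.1 ha (sub_eq_zero.1 h0))
    · intro h; exact hne (h.symm)
    · simp [hab]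
  have heq : EqOn f (fun _ => f a) U := by
    refine (hfd.analyticOnNhd hU).eqOn_of_preconnected_of_eventuallyEq
      analyticOnNhd_const hUc hb ?_
    filter_upwards [hz] with z hz
    exact sub_eq_zero.1 hz
  apply hd
  have : f =ᶠ[𝓝 z₀] fun _ => f a := by
    filter_upwards [hU.mem_nhds hz₀] with z hz using heq hz
  rw [this.deriv_eq]; simp

/-! ### Log-domains and the Riemann mapping theorem -/

/-- Every zero-free continuous function on `Ω` has a continuous logarithm. This replaces simple
connectedness as the hypothesis of the Riemann mapping theorem. -/
def LogDomain (Ω : Set ℂ) : Prop :=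
  ∀ g : ℂ → ℂ, ContinuousOn g Ω → (∀ z ∈ Ω, g z ≠ 0) →
    ∃ ℓ : ℂ → ℂ, ContinuousOn ℓ Ω ∧ ∀ z ∈ Ω, Complex.exp (ℓ z) = g z

lemma logDomain_of_convex {Ω : Set ℂ} (h : Convex ℝ Ω) (ho : IsOpen Ω) (hne : Ω.Nonempty) :
    LogDomain Ω := by
  intro g hg h0
  have : IsSimplyConnected Ω := by
    have := h.contractibleSpace hne
    exact (inferInstance : SimplyConnectedSpace Ω)
  obtain ⟨ℓ, h1, h2⟩ := Complex.exists_continuousOn_eqOn_exp_comp this ho hg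
    (by rintro ⟨z, hz, h⟩; exact h0 z hz h)
  exact ⟨ℓ, h1, fun z hz => h2 hz⟩

lemma LogDomain.transfer {V Ω : Set ℂ} (hV : LogDomain V) {φ ψ : ℂ → ℂ}
    (hφ : ContinuousOn φ V) (hψ : ContinuousOn ψ Ω) (hφm : MapsTo φ V Ω) (hψm : MapsTo ψ Ω V)
    (hinv : ∀ z ∈ Ω, φ (ψ z) = z) : LogDomain Ω := by
  intro g hg h0
  obtain ⟨ℓ, h1, h2⟩ := hV (g ∘ φ) (hg.comp hφ hφm) (fun z hz => h0 _ (hφm hz))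
  refine ⟨ℓ ∘ ψ, h1.comp hψ hψm, fun z hz => ?_⟩
  simp only [Function.comp]
  rw [h2 _ (hψm hz)]
  simp [hinv z hz]

lemma differentiableOn_of_exp {Ω : Set ℂ} (ho : IsOpen Ω) {g ℓ : ℂ → ℂ}
    (hg : DifferentiableOn ℂ g Ω) (hℓ : ContinuousOn ℓ Ω) (h : ∀ z ∈ Ω, Complex.exp (ℓ z) = g z) :
    DifferentiableOn ℂ ℓ Ω := by
  intro z hz
  have hn := ho.mem_nhds hz
  have hc : ContinuousAt ℓ z := hℓ.continuousAt hn
  have hgd : DifferentiableAt ℂ g z := hg.differentiableAt hn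
  have hev : ∀ᶠ w in 𝓝 z, ℓ w = Complex.log (g w / g z) + ℓ z := by
    have : ∀ᶠ w in 𝓝 z, ‖ℓ w - ℓ z‖ < π := by
      have := hc.tendsto.sub_const (ℓ z)
      rw [sub_self] at this
      have := this.norm
      rw [norm_zero] at this
      exact this.eventually_lt_const Real.pi_pos
    filter_upwards [this, hn] with w h1 h2
    rw [← h w h2, ← h z hz, ← Complex.exp_sub, Complex.log_exp]
    · ring
    · have := (abs_lt.1 ((Complex.abs_im_le_norm _).trans_lt h1)).1
      exact this
    · have := (abs_lt.1 ((Complex.abs_im_le_norm _).trans_lt h1)).2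
      exact this.le
  have hgz : g z ≠ 0 := by rw [← h z hz]; exact Complex.exp_ne_zero _
  have hd : DifferentiableAt ℂ (fun w => Complex.log (g w / g z) + ℓ z) z :=
    ((hgd.div_const _).clog (by rw [div_self hgz]; simp)).add_const _
  exact (hd.congr_of_eventuallyEq hev).differentiableWithinAt

lemma LogDomain.holo {Ω : Set ℂ} (h : LogDomain Ω) (ho : IsOpen Ω) {g : ℂ → ℂ}
    (hg : DifferentiableOn ℂ g Ω) (h0 : ∀ z ∈ Ω, g z ≠ 0) :
    ∃ ℓ : ℂ → ℂ, DifferentiableOn ℂ ℓ Ω ∧ ∀ z ∈ Ω, Complex.exp (ℓ z) = g z := by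
  obtain ⟨ℓ, h1, h2⟩ := h g hg.continuousOn h0
  exact ⟨ℓ, differentiableOn_of_exp ho hg h1 h2, h2⟩

/-- The disc automorphism exchanging `c` and `0`, up to sign. -/
noncomputable def mob (c w : ℂ) : ℂ := (w - c) / (1 - conj c * w)

lemma mob_den {c w : ℂ} (hc : ‖c‖ < 1) (hw : ‖w‖ < 1) : 1 - conj c * w ≠ 0 := by
  intro h
  have : ‖conj c * w‖ = 1 := by rw [← sub_eq_zero.1 h]; simp
  rw [norm_mul, RCLike.norm_conj] at this
  nlinarith [norm_nonneg c, norm_nonneg w]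

lemma mob_norm {c w : ℂ} (hc : ‖c‖ < 1) (hw : ‖w‖ < 1) : ‖mob c w‖ < 1 := by
  unfold mob
  rw [norm_div, div_lt_one (norm_pos_iff.2 (mob_den hc hw))]
  refine lt_of_pow_lt_pow_left₀ 2 (norm_nonneg _) ?_
  have h1 : ‖w - c‖ ^ 2 = ‖w‖ ^ 2 + ‖c‖ ^ 2 - 2 * (w * conj c).re := by
    rw [← Complex.normSq_eq_norm_sq, ← Complex.normSq_eq_norm_sq, ← Complex.normSq_eq_norm_sq,
      Complex.normSq_sub]
  have h2 : ‖1 - conj c * w‖ ^ 2 = 1 + ‖c‖ ^ 2 * ‖w‖ ^ 2 - 2 * (w * conj c).re := by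
    rw [← Complex.normSq_eq_norm_sq, ← Complex.normSq_eq_norm_sq, ← Complex.normSq_eq_norm_sq,
      Complex.normSq_sub]
    simp [Complex.normSq_mul]; ring
  rw [h1, h2]
  have : 0 < (1 - ‖c‖ ^ 2) * (1 - ‖w‖ ^ 2) := by
    have := norm_nonneg c; have := norm_nonneg w
    apply mul_pos <;> nlinarith
  nlinarith

lemma mob_inv {c w : ℂ} (hc : ‖c‖ < 1) (hw : ‖w‖ < 1) : mob (-c) (mob c w) = w := by
  have h1 := mob_den hc hw
  have h3 : 1 - conj c * c ≠ 0 := mob_den hc hc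
  unfold mob
  have h2 : 1 - conj (-c) * ((w - c) / (1 - conj c * w)) = (1 - conj c * c) / (1 - conj c * w) := by
    rw [eq_div_iff h1, sub_mul, mul_assoc, div_mul_cancel₀ _ h1, map_neg]; ring
  have h4 : (w - c) / (1 - conj c * w) - -c = w * (1 - conj c * c) / (1 - conj c * w) := by
    rw [eq_div_iff h1, sub_mul, div_mul_cancel₀ _ h1]; ring
  rw [h2, h4, div_div_div_cancel_right₀ h1, mul_div_cancel_right₀ _ h3]

lemma mob_hasDerivAt {c w : ℂ} (hc : ‖c‖ < 1) (hw : ‖w‖ < 1) :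
    HasDerivAt (mob c) ((1 - conj c * c) / (1 - conj c * w) ^ 2) w := by
  have h1 := mob_den hc hw
  have := ((hasDerivAt_id' w).sub_const c).fun_div
    (((hasDerivAt_id' w).const_mul (conj c)).const_sub 1) h1
  refine this.congr_deriv ?_
  congr 1; ring

/-- The square-root step in the proof of the Riemann mapping theorem. -/
lemma sqrt_step {Ω : Set ℂ} (ho : IsOpen Ω) (hL : LogDomain Ω) (h0 : (0 : ℂ) ∈ Ω) {g : ℂ → ℂ}
    (hg : DifferentiableOn ℂ g Ω) (hi : InjOn g Ω) (hm : MapsTo g Ω (ball 0 1)) (hg0 : g 0 = 0)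
    {c : ℂ} (hc : ‖c‖ < 1) (hcg : c ∉ g '' Ω) :
    ∃ k : ℂ → ℂ, DifferentiableOn ℂ k Ω ∧ InjOn k Ω ∧ MapsTo k Ω (ball 0 1) ∧ k 0 = 0 ∧
      ‖deriv g 0‖ < ‖deriv k 0‖ := by
  have hmn : ∀ z ∈ Ω, ‖g z‖ < 1 := fun z hz => mem_ball_zero_iff.1 (hm hz)
  have hTd : DifferentiableOn ℂ (fun z => mob c (g z)) Ω := fun z hz =>
    ((mob_hasDerivAt hc (hmn z hz)).differentiableAt.comp z
      (hg.differentiableAt (ho.mem_nhds hz))).differentiableWithinAt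
  have hT0 : ∀ z ∈ Ω, mob c (g z) ≠ 0 := by
    intro z hz h
    rw [mob, div_eq_zero_iff] at h
    rcases h with h | h
    · exact hcg ⟨z, hz, sub_eq_zero.1 h⟩
    · exact mob_den hc (hmn z hz) h
  obtain ⟨ℓ, hℓd, hℓ⟩ := hL.holo ho hTd hT0
  set s : ℂ → ℂ := fun z => Complex.exp (ℓ z / 2) with hs
  have hsd : DifferentiableOn ℂ s Ω := (hℓd.div_const 2).cexp
  have hs2 : ∀ z ∈ Ω, s z ^ 2 = mob c (g z) := by
    intro z hz
    rw [← hℓ z hz, hs, ← Complex.exp_nat_mul]; congr 1; push_cast; ring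
  have hsn : ∀ z ∈ Ω, ‖s z‖ < 1 := by
    intro z hz
    have := mob_norm hc (hmn z hz)
    rw [← hs2 z hz, norm_pow] at this
    exact (sq_lt_one_iff₀ (norm_nonneg _)).1 this
  have hs0n := hsn 0 h0
  refine ⟨fun z => mob (s 0) (s z), ?_, ?_, ?_, by simp [mob], ?_⟩
  · exact fun z hz => ((mob_hasDerivAt hs0n (hsn z hz)).differentiableAt.comp z
      (hsd.differentiableAt (ho.mem_nhds hz))).differentiableWithinAt
  · intro x hx y hy hxy
    have h1 : s x = s y := by
      rw [← mob_inv hs0n (hsn x hx), ← mob_inv hs0n (hsn y hy)]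
      exact congrArg _ hxy
    have h2 : mob c (g x) = mob c (g y) := by rw [← hs2 x hx, ← hs2 y hy, h1]
    refine hi hx hy ?_
    rw [← mob_inv hc (hmn x hx), ← mob_inv hc (hmn y hy), h2]
  · intro z hz
    exact mem_ball_zero_iff.2 (mob_norm hs0n (hsn z hz))
  · have hgd : DifferentiableAt ℂ g 0 := hg.differentiableAt (ho.mem_nhds h0)
    have hsd0 : DifferentiableAt ℂ s 0 := hsd.differentiableAt (ho.mem_nhds h0)
    have hk : HasDerivAt (fun z => mob (s 0) (s z))
        ((1 - conj (s 0) * s 0) / (1 - conj (s 0) * s 0) ^ 2 * deriv s 0) 0 :=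
      (mob_hasDerivAt hs0n hs0n).comp 0 hsd0.hasDerivAt
    have hT : HasDerivAt (fun z => mob c (g z)) ((1 - conj c * c) / (1 - conj c * g 0) ^ 2 * deriv g 0) 0 :=
      (mob_hasDerivAt hc (hmn 0 h0)).comp 0 hgd.hasDerivAt
    have hS : HasDerivAt (fun z => s z ^ 2) (2 * s 0 * deriv s 0) 0 := by
      simpa using hsd0.hasDerivAt.fun_pow 2
    have heq : 2 * s 0 * deriv s 0 = (1 - conj c * c) * deriv g 0 := by
      have hev : (fun z => s z ^ 2) =ᶠ[𝓝 0] fun z => mob c (g z) := by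
        filter_upwards [ho.mem_nhds h0] with z hz using hs2 z hz
      have := (hT.congr_of_eventuallyEq hev).unique hS
      rw [← this, hg0]; simp
    rw [hk.deriv]
    have hgd0 := deriv_ne_zero_of_injOn ho hg hi h0
    have e1 : ‖s 0‖ ^ 2 = ‖c‖ := by
      rw [← norm_pow, hs2 0 h0, hg0]; simp [mob]
    have hconj : ∀ w : ℂ, 1 - conj w * w = ((1 - ‖w‖ ^ 2 : ℝ) : ℂ) := by
      intro w; rw [mul_comm, Complex.mul_conj, Complex.normSq_eq_norm_sq]; push_cast; ring
    have e2 : 2 * ‖s 0‖ * ‖deriv s 0‖ = (1 - ‖c‖ ^ 2) * ‖deriv g 0‖ := by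
      have := congrArg norm heq
      rw [norm_mul, norm_mul, norm_mul, hconj, Complex.norm_real, Real.norm_of_nonneg
        (by nlinarith [norm_nonneg c])] at this
      simpa using this
    set a := ‖s 0‖ with ha
    have ha0 : 0 < a := norm_pos_iff.2 (Complex.exp_ne_zero _)
    have ha1 : a < 1 := hs0n
    rw [hconj, norm_mul, norm_div, norm_pow, Complex.norm_real, Real.norm_of_nonneg (by nlinarith)]
    have hpos : 0 < 1 - a ^ 2 := by nlinarith
    have e3 : (1 - a ^ 2) / (1 - a ^ 2) ^ 2 = 1 / (1 - a ^ 2) := by field_simp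
    rw [e3, ← e1] at *
    have hgp : 0 < ‖deriv g 0‖ := norm_pos_iff.2 hgd0
    have e4 : 1 / (1 - a ^ 2) * ‖deriv s 0‖ = (1 + a ^ 2) / (2 * a) * ‖deriv g 0‖ := by
      have : ‖deriv s 0‖ = (1 - (a ^ 2) ^ 2) * ‖deriv g 0‖ / (2 * a) := by
        rw [eq_div_iff (by positivity), ← e2]; ring
      rw [this]; field_simp; ring
    rw [e4]
    have : 1 < (1 + a ^ 2) / (2 * a) := by
      rw [lt_div_iff₀ (by positivity)]; nlinarith [sq_nonneg (1 - a), mul_pos (sub_pos.2 ha1) (sub_pos.2 ha1)]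
    nlinarith

/-- The Riemann mapping theorem for a connected open log-domain `Ω` in the unit disc. The inverse
of `G` maximizes `‖deriv g 0‖` among the injective maps `g` of `Ω` into the disc fixing `0`. -/
lemma riemann_map {Ω : Set ℂ} (ho : IsOpen Ω) (hc : IsPreconnected Ω) (hL : LogDomain Ω)
    (h0 : (0 : ℂ) ∈ Ω) (hsub : Ω ⊆ ball 0 1) :
    ∃ G : ℂ → ℂ, DifferentiableOn ℂ G (ball 0 1) ∧ InjOn G (ball 0 1) ∧ G '' ball 0 1 = Ω ∧
      G 0 = 0 ∧ ∃ c : ℝ, 0 < c ∧ deriv G 0 = c := by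
  set S : Set (ℂ → ℂ) := {g | DifferentiableOn ℂ g Ω ∧ InjOn g Ω ∧ MapsTo g Ω (ball 0 1) ∧ g 0 = 0}
    with hS
  set D : Set ℝ := (fun g : ℂ → ℂ => ‖deriv g 0‖) '' S with hD
  have hidS : (id : ℂ → ℂ) ∈ S :=
    ⟨differentiableOn_id, injOn_id _, fun z hz => hsub hz, rfl⟩
  have hDne : D.Nonempty := ⟨_, id, hidS, rfl⟩
  obtain ⟨δ, hδ, hδs⟩ := Metric.isOpen_iff.1 ho 0 h0
  have hDb : BddAbove D := by
    refine ⟨1 / (δ / 2), ?_⟩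
    rintro _ ⟨g, hg, rfl⟩
    have hcl : closedBall (0 : ℂ) (δ / 2) ⊆ Ω :=
      (closedBall_subset_ball (by linarith)).trans hδs
    refine Complex.norm_deriv_le_of_forall_mem_sphere_norm_le (by positivity) ?_ ?_
    · refine DifferentiableOn.diffContOnCl ?_
      rw [closure_ball _ (by positivity)]
      exact hg.1.mono hcl
    · intro z hz
      exact (mem_ball_zero_iff.1 (hg.2.2.1 (hcl (sphere_subset_closedBall hz)))).le
  obtain ⟨d, -, hd, hdD⟩ := exists_seq_tendsto_sSup hDne hDb
  choose g hgS hgd using hdD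
  set 𝒰 : Ultrafilter ℕ := Filter.hyperfilter ℕ
  have h𝒰 : (𝒰 : Filter ℕ) ≤ atTop := by
    rw [← Nat.cofinite_eq_atTop]; exact Filter.hyperfilter_le_cofinite
  obtain ⟨k, hk⟩ := montel 𝒰 ho (F := g) (fun i => (hgS i).1) (fun z hz => by
    obtain ⟨η, hη, hηs⟩ := Metric.isOpen_iff.1 ho z hz
    exact ⟨η, hη, 1, fun i w hw => (mem_ball_zero_iff.1 ((hgS i).2.2.1 (hηs hw))).le⟩)
  have hkd : DifferentiableOn ℂ k Ω := hk.differentiableOn (Eventually.of_forall fun i => (hgS i).1) ho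
  have hderiv : ‖deriv k 0‖ = sSup D := by
    have h1 := (hk.deriv (Eventually.of_forall fun i => (hgS i).1) ho).tendsto_at h0
    have h2 : Tendsto (fun i => ‖deriv (g i) 0‖) (𝒰 : Filter ℕ) (𝓝 (sSup D)) := by
      have := hd.mono_left h𝒰
      refine this.congr fun i => ?_
      exact (hgd i).symm
    exact tendsto_nhds_unique h1.norm h2
  have hs1 : 1 ≤ sSup D := le_csSup hDb ⟨id, hidS, by simp⟩
  have hk0 : deriv k 0 ≠ 0 := by
    intro h; rw [h, norm_zero] at hderiv; linarith
  have hki : InjOn k Ω := hurwitz_injOn ho hc (fun i => (hgS i).1) hk (fun i => (hgS i).2.1) h0 hk0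
  have hkm : MapsTo k Ω (ball 0 1) := by
    have h1 : k '' Ω ⊆ closedBall 0 1 := by
      rintro _ ⟨z, hz, rfl⟩
      rw [mem_closedBall_zero_iff]
      exact le_of_tendsto (hk.tendsto_at hz).norm (Eventually.of_forall fun i =>
        (mem_ball_zero_iff.1 ((hgS i).2.2.1 hz)).le)
    have h2 := interior_maximal h1 (isOpen_image_of_injOn ho hkd hki subset_rfl ho)
    rw [interior_closedBall _ one_ne_zero] at h2
    exact fun z hz => h2 ⟨z, hz, rfl⟩
  have hk00 : k 0 = 0 := by
    refine tendsto_nhds_unique (hk.tendsto_at h0) ?_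
    simp only [fun i => (hgS i).2.2.2, tendsto_const_nhds]
  have hsurj : k '' Ω = ball 0 1 := by
    refine subset_antisymm (image_subset_iff.2 hkm) fun c hcb => ?_
    by_contra hcn
    obtain ⟨k2, a1, a2, a3, a4, a5⟩ := sqrt_step ho hL h0 hkd hki hkm hk00
      (mem_ball_zero_iff.1 hcb) hcn
    have : ‖deriv k2 0‖ ≤ sSup D := le_csSup hDb ⟨k2, ⟨a1, a2, a3, a4⟩, rfl⟩
    linarith
  obtain ⟨G, hGd, hG⟩ := exists_inverse ho hkd hki
  rw [hsurj] at hGd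
  have hGk : ∀ w ∈ ball (0 : ℂ) 1, G w ∈ Ω ∧ k (G w) = w := by
    intro w hw
    rw [← hsurj] at hw
    obtain ⟨z, hz, rfl⟩ := hw
    rw [hG z hz]; exact ⟨hz, rfl⟩
  have hG0 : G 0 = 0 := by rw [← hk00, hG 0 h0, hk00]
  have h0b : (0 : ℂ) ∈ ball (0 : ℂ) 1 := mem_ball_self one_pos
  have hGi : InjOn G (ball 0 1) := fun x hx y hy hxy => by
    rw [← (hGk x hx).2, ← (hGk y hy).2, hxy]
  have hGd0 : deriv G 0 ≠ 0 := deriv_ne_zero_of_injOn isOpen_ball hGd hGi h0b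
  have hGda : HasDerivAt G (deriv G 0) 0 :=
    (hGd.differentiableAt (isOpen_ball.mem_nhds h0b)).hasDerivAt
  set u : ℂ := (‖deriv G 0‖ : ℂ) / deriv G 0 with hu
  have hun : ‖u‖ = 1 := by
    rw [hu, norm_div, Complex.norm_real, norm_norm, div_self (norm_ne_zero_iff.2 hGd0)]
  have hu0 : u ≠ 0 := by rw [← norm_ne_zero_iff, hun]; exact one_ne_zero
  have hub : MapsTo (fun z => u * z) (ball (0 : ℂ) 1) (ball 0 1) := by
    intro z hz
    simpa [hun] using hz
  refine ⟨fun z => G (u * z), ?_, ?_, ?_, by simp [hG0], ‖deriv G 0‖, norm_pos_iff.2 hGd0, ?_⟩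
  · exact hGd.comp (differentiableOn_id.const_mul u) hub
  · intro x hx y hy hxy
    exact mul_left_cancel₀ hu0 (hGi (hub hx) (hub hy) hxy)
  · ext w
    constructor
    · rintro ⟨z, hz, rfl⟩
      exact (hGk _ (hub hz)).1
    · intro hw
      refine ⟨u⁻¹ * k w, ?_, ?_⟩
      · simpa [hun] using hkm hw
      · simp only
        rw [mul_inv_cancel_left₀ hu0, hG w hw]
  · have h1 : HasDerivAt (fun z : ℂ => u * z) u 0 := by
      simpa using (hasDerivAt_id' (0 : ℂ)).const_mul u
    have h2 : HasDerivAt G (deriv G 0) (u * 0) := by rw [mul_zero]; exact hGda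
    have h3 := h2.comp (0 : ℂ) h1
    have h4 : deriv G 0 * u = ‖deriv G 0‖ := by rw [hu, mul_div_cancel₀ _ hGd0]
    rw [h4] at h3
    exact h3.deriv

/-! ### Slit domains -/

lemma logDomain_image {G : ℂ → ℂ} (hG : DifferentiableOn ℂ G (ball 0 1))
    (hi : InjOn G (ball 0 1)) :
    IsOpen (G '' ball 0 1) ∧ IsPreconnected (G '' ball 0 1) ∧ LogDomain (G '' ball 0 1) := by
  refine ⟨isOpen_image_of_injOn isOpen_ball hG hi subset_rfl isOpen_ball,
    (convex_ball _ _).isPreconnected.image _ hG.continuousOn, ?_⟩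
  obtain ⟨g, hgd, hg⟩ := exists_inverse isOpen_ball hG hi
  refine (logDomain_of_convex (convex_ball (0 : ℂ) 1) isOpen_ball
    ⟨0, mem_ball_self one_pos⟩).transfer hG.continuousOn hgd.continuousOn (mapsTo_image _ _) ?_ ?_
  · rintro _ ⟨z, hz, rfl⟩; rw [hg z hz]; exact hz
  · rintro _ ⟨z, hz, rfl⟩; rw [hg z hz]

/-- If a connected log-domain `W` contains the imaginary axis, its right half is again a connected
log-domain. The collar `0 < re s < η s`, with `η s` the distance from `i im s` to the complement of
`W`, is homeomorphic to a strip. A zero-free `g` on the right half has a logarithm `ℓ` on the collar;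
`exp (θ ℓ)` with a cut-off `θ` deforms `g` to `1` there, so that `g` extends to `W`. -/
lemma half_logDomain {W : Set ℂ} (ho : IsOpen W) (hc : IsPreconnected W) (hL : LogDomain W)
    (haxis : ∀ y : ℝ, (y : ℂ) * I ∈ W) (hne : W ≠ univ) :
    IsPreconnected (W ∩ {s | 0 < s.re}) ∧ LogDomain (W ∩ {s | 0 < s.re}) := by
  have hne' : (Wᶜ).Nonempty := nonempty_compl.2 hne
  set η : ℂ → ℝ := fun s => infDist ((s.im : ℂ) * I) Wᶜ with hη
  have hηc : Continuous η := by
    have h : Continuous fun s : ℂ => (s.im : ℂ) * I := by fun_prop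
    exact (continuous_infDist_pt _).comp h
  have hηpos : ∀ s, 0 < η s := by
    intro s
    rw [hη, ← (ho.isClosed_compl).notMem_iff_infDist_pos hne']
    exact fun h => h (haxis _)
  have hηW : ∀ s : ℂ, |s.re| < η s → s ∈ W := by
    intro s hs
    by_contra hsW
    have h1 : η s ≤ dist ((s.im : ℂ) * I) s := infDist_le_dist_of_mem hsW
    have h2 : dist ((s.im : ℂ) * I) s = |s.re| := by
      rw [dist_comm, dist_eq_norm]
      have : s - (s.im : ℂ) * I = (s.re : ℂ) := by
        apply Complex.ext <;> simp
      rw [this, Complex.norm_real, Real.norm_eq_abs]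
    linarith
  set N : Set ℂ := {s | 0 < s.re ∧ s.re < η s} with hN
  have hNo : IsOpen N := (isOpen_lt continuous_const Complex.continuous_re).inter
    (isOpen_lt Complex.continuous_re hηc)
  have hNW : N ⊆ W ∩ {s | 0 < s.re} := fun s hs =>
    ⟨hηW s (by rw [abs_of_pos hs.1]; exact hs.2), hs.1⟩
  set V : Set ℂ := {s | 0 < s.re} ∩ {s | s.re < 1} with hV
  have hVc : Convex ℝ V := (convex_halfSpace_re_gt 0).inter (convex_halfSpace_re_lt 1)
  have hVo : IsOpen V := (isOpen_lt continuous_const Complex.continuous_re).inter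
    (isOpen_lt Complex.continuous_re continuous_const)
  set φ : ℂ → ℂ := fun s => ((s.re * η s : ℝ) : ℂ) + s.im * I with hφ
  set ψ : ℂ → ℂ := fun s => ((s.re / η s : ℝ) : ℂ) + s.im * I with hψ
  have hφc : Continuous φ := by
    have := hηc
    rw [hφ]; fun_prop
  have hψc : Continuous ψ := by
    have h1 : Continuous fun s : ℂ => s.re / η s :=
      Complex.continuous_re.div hηc fun s => (hηpos s).ne'
    rw [hψ]; fun_prop
  have hφη : ∀ s, η (φ s) = η s := by intro s; simp [hη, hφ]
  have hψη : ∀ s, η (ψ s) = η s := by intro s; simp [hη, hψ]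
  have hφr : ∀ s, (φ s).re = s.re * η s := by intro s; simp [hφ]
  have hψr : ∀ s, (ψ s).re = s.re / η s := by intro s; simp [hψ]
  have hφm : MapsTo φ V N := by
    rintro s ⟨h1, h2⟩
    simp only [mem_ofPred_eq] at h1 h2
    refine ⟨?_, ?_⟩
    · rw [hφr]; exact mul_pos h1 (hηpos s)
    · rw [hφr, hφη]; nlinarith [hηpos s]
  have hψm : MapsTo ψ N V := by
    rintro s ⟨h1, h2⟩
    refine ⟨?_, ?_⟩
    · simp only [mem_ofPred_eq]; rw [hψr]; exact div_pos h1 (hηpos s)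
    · simp only [mem_ofPred_eq]; rw [hψr, div_lt_one (hηpos s)]; exact h2
  have hφψ : ∀ s, φ (ψ s) = s := by
    intro s
    apply Complex.ext
    · rw [hφr, hψr, hψη, div_mul_cancel₀ _ (hηpos s).ne']
    · simp [hφ, hψ]
  have hNL : LogDomain N := by
    refine (logDomain_of_convex hVc hVo ⟨((1/2 : ℝ) : ℂ), ?_, ?_⟩).transfer hφc.continuousOn
      hψc.continuousOn hφm hψm fun z _ => hφψ z
    · simp
    · simp only [mem_ofPred_eq, Complex.ofReal_re]; norm_num
  have hNc : IsPreconnected N := by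
    have : N = φ '' V := by
      refine subset_antisymm (fun s hs => ⟨ψ s, hψm hs, hφψ s⟩) (image_subset_iff.2 hφm)
    rw [this]; exact hVc.isPreconnected.image _ hφc.continuousOn
  have hHo : IsOpen {s : ℂ | 0 < s.re} := isOpen_lt continuous_const Complex.continuous_re
  have hWo : IsOpen (W ∩ {s | 0 < s.re}) := ho.inter hHo
  have hNne : N.Nonempty := by
    refine ⟨φ ((1/2 : ℝ) : ℂ), hφm ⟨?_, ?_⟩⟩
    · simp
    · simp only [mem_ofPred_eq, Complex.ofReal_re]; norm_num
  constructor
  · -- a separation of the half would extend to a separation of `W`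
    have key : ∀ u v : Set ℂ, IsOpen u → IsOpen v → W ∩ {s | 0 < s.re} ⊆ u ∪ v →
        (W ∩ {s | 0 < s.re}) ∩ (u ∩ v) = ∅ → N ⊆ u → W ∩ {s | 0 < s.re} ⊆ u := by
      intro u v hu hv hcov hdis hNu
      have hA : IsOpen (((W ∩ {s | 0 < s.re}) ∩ u) ∪ {s | s.re < η s}) :=
        (hWo.inter hu).union (isOpen_lt Complex.continuous_re hηc)
      have hB : IsOpen ((W ∩ {s | 0 < s.re}) ∩ v) := hWo.inter hv
      by_contra hcon
      obtain ⟨x, hx, hxu⟩ := not_subset.1 hcon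
      have hxv : x ∈ v := (hcov hx).resolve_left hxu
      obtain ⟨n, hn⟩ := hNne
      obtain ⟨y, hyW, hyA, hyB⟩ := hc _ _ hA hB (by
        intro s hs
        by_cases h : s.re < η s
        · exact Or.inl (Or.inr h)
        · have hs' : s ∈ W ∩ {s | 0 < s.re} := ⟨hs, (hηpos s).trans_le (not_lt.1 h)⟩
          rcases hcov hs' with h1 | h1
          · exact Or.inl (Or.inl ⟨hs', h1⟩)
          · exact Or.inr ⟨hs', h1⟩) ⟨n, (hNW hn).1, Or.inl ⟨hNW hn, hNu hn⟩⟩ ⟨x, hx.1, hx, hxv⟩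
      have hyu : y ∈ u := by
        rcases hyA with h | h
        · exact h.2
        · exact hNu ⟨hyB.1.2, h⟩
      have : y ∈ (W ∩ {s | 0 < s.re}) ∩ (u ∩ v) := ⟨hyB.1, hyu, hyB.2⟩
      rw [hdis] at this; exact this
    rw [isPreconnected_iff_subset_of_disjoint]
    intro u v hu hv hcov hdis
    have hN2 := (isPreconnected_iff_subset_of_disjoint.1 hNc) u v hu hv (hNW.trans hcov)
      (by rw [← subset_empty_iff, ← hdis]; exact inter_subset_inter_left _ hNW)
    rcases hN2 with h | h
    · exact Or.inl (key u v hu hv hcov hdis h)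
    · exact Or.inr (key v u hv hu (by rwa [union_comm]) (by rwa [inter_comm v u]) h)
  · intro g hg hg0
    obtain ⟨ℓ, hℓc, hℓ⟩ := hNL g (hg.mono hNW) fun z hz => hg0 z (hNW hz)
    set θ : ℂ → ℝ := fun s => max 0 (min 1 (3 * (s.re / η s) - 1)) with hθ
    have hθc : Continuous θ := by
      have h1 : Continuous fun s : ℂ => s.re / η s :=
        Complex.continuous_re.div hηc fun s => (hηpos s).ne'
      rw [hθ]; fun_prop
    have hθ0 : ∀ s, s.re < η s / 3 → θ s = 0 := by
      intro s hs
      have : s.re / η s < 1 / 3 := by rw [div_lt_iff₀ (hηpos s)]; linarith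
      rw [hθ]; simp only
      rw [max_eq_left]; exact (min_le_right _ _).trans (by linarith)
    have hθ1 : ∀ s, 2 * η s / 3 < s.re → θ s = 1 := by
      intro s hs
      have : 2 / 3 < s.re / η s := by rw [lt_div_iff₀ (hηpos s)]; linarith
      rw [hθ]; simp only
      rw [min_eq_left (by linarith)]; simp
    classical
    set ĝ : ℂ → ℂ := fun s => if s.re < η s then (if 0 < s.re then Complex.exp (θ s * ℓ s) else 1)
      else g s with hĝ
    have o1 : IsOpen {s : ℂ | s.re < η s / 3} := isOpen_lt Complex.continuous_re (by fun_prop)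
    have o2 : IsOpen {s : ℂ | 2 * η s / 3 < s.re} := isOpen_lt (by fun_prop) Complex.continuous_re
    have e1 : ∀ s : ℂ, s.re < η s / 3 → ĝ s = 1 := by
      intro s hs
      have := hηpos s
      simp only [hĝ]
      rw [if_pos (by linarith), hθ0 s hs]; simp
    have e2 : ∀ s ∈ N, ĝ s = Complex.exp (θ s * ℓ s) := by
      intro s hs
      simp only [hĝ]
      rw [if_pos hs.2, if_pos hs.1]
    have e3 : ∀ s : ℂ, 2 * η s / 3 < s.re → ĝ s = g s := by
      intro s hs
      have := hηpos s
      simp only [hĝ]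
      split_ifs with h1 h2
      · rw [hθ1 s hs]; simp [hℓ s ⟨h2, h1⟩]
      · exact absurd (by linarith) h2
      · rfl
    have hcover : ∀ s : ℂ, s.re < η s / 3 ∨ s ∈ N ∨ 2 * η s / 3 < s.re := by
      intro s
      have := hηpos s
      by_cases h1 : s.re < η s / 3
      · exact Or.inl h1
      by_cases h2 : 2 * η s / 3 < s.re
      · exact Or.inr (Or.inr h2)
      · refine Or.inr (Or.inl ⟨?_, ?_⟩) <;> linarith
    have hĝc : ContinuousOn ĝ W := by
      intro s hs
      refine ContinuousAt.continuousWithinAt ?_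
      rcases hcover s with h | h | h
      · refine continuousAt_const.congr (f := fun _ => (1 : ℂ)) ?_
        filter_upwards [o1.mem_nhds h] with z hz using (e1 z hz).symm
      · have hc1 : ContinuousAt (fun z => Complex.exp (θ z * ℓ z)) s := by
          have h1 : ContinuousAt ℓ s := hℓc.continuousAt (hNo.mem_nhds h)
          have h2 : ContinuousAt (fun z => (θ z : ℂ)) s :=
            (Complex.continuous_ofReal.comp hθc).continuousAt
          exact (h2.mul h1).cexp
        refine hc1.congr ?_
        filter_upwards [hNo.mem_nhds h] with z hz using (e2 z hz).symm
      · have hsW : s ∈ W ∩ {s | 0 < s.re} := ⟨hs, by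
          have := hηpos s; simp only [mem_ofPred_eq]; linarith⟩
        refine (hg.continuousAt (hWo.mem_nhds hsW)).congr ?_
        filter_upwards [o2.mem_nhds h] with z hz using (e3 z hz).symm
    have hĝ0 : ∀ s ∈ W, ĝ s ≠ 0 := by
      intro s hs
      rcases hcover s with h | h | h
      · rw [e1 s h]; exact one_ne_zero
      · rw [e2 s h]; exact Complex.exp_ne_zero _
      · rw [e3 s h]; refine hg0 s ⟨hs, ?_⟩
        have := hηpos s; simp only [mem_ofPred_eq]; linarith
    obtain ⟨m, hmc, hm⟩ := hL ĝ hĝc hĝ0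
    refine ⟨fun s => if s.re < η s then m s + (1 - θ s) * ℓ s else m s, ?_, ?_⟩
    · rintro s ⟨hs, hs0⟩
      refine ContinuousAt.continuousWithinAt ?_
      have hmS : ContinuousAt m s := hmc.continuousAt (ho.mem_nhds hs)
      by_cases h : s.re < η s
      · have hsN : s ∈ N := ⟨hs0, h⟩
        have h1 : ContinuousAt ℓ s := hℓc.continuousAt (hNo.mem_nhds hsN)
        have h2 : ContinuousAt (fun z => (θ z : ℂ)) s :=
          (Complex.continuous_ofReal.comp hθc).continuousAt
        have h3 : ContinuousAt (fun z => m z + (1 - (θ z : ℂ)) * ℓ z) s :=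
          hmS.add ((continuousAt_const.sub h2).mul h1)
        refine h3.congr ?_
        filter_upwards [hNo.mem_nhds hsN] with z hz
        rw [if_pos hz.2]
      · have hs2 : 2 * η s / 3 < s.re := by have := hηpos s; linarith
        refine hmS.congr ?_
        filter_upwards [o2.mem_nhds hs2] with z hz
        split_ifs
        · rw [hθ1 z hz]; simp
        · rfl
    · rintro s ⟨hs, hs0⟩
      simp only
      split_ifs with h
      · have hsN : s ∈ N := ⟨hs0, h⟩
        rw [Complex.exp_add, hm s hs, e2 s hsN, ← Complex.exp_add, ← hℓ s hsN]
        congr 1; ring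
      · rw [hm s hs, e3]
        have := hηpos s; linarith

/-- Removing a segment that hangs from the complement keeps the conformal image of a disc
connected and a log-domain. With `M w = (w - b) / (w - a)`, the square root of `M` opens the slit
`(a, b]` to the imaginary axis, inside the two-sheeted cover of the domain branched over `b`. -/
lemma slit_logDomain {G : ℂ → ℂ} (hG : DifferentiableOn ℂ G (ball 0 1))
    (hi : InjOn G (ball 0 1)) {a b : ℂ} (ha : a ∉ G '' ball 0 1)
    (hslit : ∀ t ∈ Ioc (0 : ℝ) 1, a + t * (b - a) ∈ G '' ball 0 1) :
    let σ : Set ℂ := (fun t : ℝ => a + t * (b - a)) '' Ioc 0 1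
    IsOpen (G '' ball 0 1 \ σ) ∧ IsPreconnected (G '' ball 0 1 \ σ) ∧
      LogDomain (G '' ball 0 1 \ σ) := by
  intro σ
  obtain ⟨hΩo, -, -⟩ := logDomain_image hG hi
  set Ω := G '' ball 0 1 with hΩ
  have hbΩ : b ∈ Ω := by simpa using hslit 1 ⟨one_pos, le_rfl⟩
  have hab : b - a ≠ 0 := by
    intro h
    exact ha (by rw [← sub_eq_zero.1 h]; exact hbΩ)
  have hwa : ∀ w ∈ Ω, w - a ≠ 0 := fun w hw h => ha (by rw [← sub_eq_zero.1 h]; exact hw)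
  set M : ℂ → ℂ := fun w => (w - b) / (w - a) with hM
  set R : ℂ → ℂ := fun x => (b - a * x) / (1 - x) with hR
  have hM1 : ∀ w ∈ Ω, M w ≠ 1 := by
    intro w hw h
    rw [hM] at h; simp only at h
    rw [div_eq_one_iff_eq (hwa w hw)] at h
    exact hab (by linear_combination -h)
  have hRM : ∀ w ∈ Ω, R (M w) = w := by
    intro w hw
    have h1 := hwa w hw
    have h2 : 1 - M w = (b - a) / (w - a) := by
      simp only [hM]; rw [eq_div_iff h1, sub_mul, div_mul_cancel₀ _ h1]; ring
    have h3 : b - a * M w = w * (b - a) / (w - a) := by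
      simp only [hM]; rw [eq_div_iff h1, sub_mul, mul_assoc, div_mul_cancel₀ _ h1]; ring
    simp only [hR]
    rw [h2, h3, div_div_div_cancel_right₀ h1, mul_div_cancel_right₀ _ hab]
  have hMR : ∀ x : ℂ, x ≠ 1 → M (R x) = x := by
    intro x hx
    have h1 : 1 - x ≠ 0 := sub_ne_zero.2 (Ne.symm hx)
    have h2 : R x - b = x * (b - a) / (1 - x) := by
      simp only [hR]; rw [eq_div_iff h1, sub_mul, div_mul_cancel₀ _ h1]; ring
    have h3 : R x - a = (b - a) / (1 - x) := by
      simp only [hR]; rw [eq_div_iff h1, sub_mul, div_mul_cancel₀ _ h1]; ring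
    simp only [hM]
    rw [h2, h3, div_div_div_cancel_right₀ h1, mul_div_cancel_right₀ _ hab]
  have hMd : DifferentiableOn ℂ M Ω :=
    (differentiableOn_id.sub_const b).div (differentiableOn_id.sub_const a) hwa
  -- points of the slit are exactly the points where `M` is real and nonpositive
  have hσ1 : ∀ x : ℝ, x ≤ 0 → R x ∈ σ := by
    intro x hx
    have h0 : (0 : ℝ) < 1 - x := by linarith
    refine ⟨1 / (1 - x), ⟨by positivity, by rw [div_le_one h0]; linarith⟩, ?_⟩
    have h1 : (1 : ℂ) - x ≠ 0 := by exact_mod_cast h0.ne'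
    simp only [hR]
    push_cast
    rw [eq_div_iff h1, add_mul, mul_right_comm, one_div, inv_mul_cancel₀ h1]; ring
  have hσ2 : ∀ t ∈ Ioc (0 : ℝ) 1, M (a + t * (b - a)) = ((1 - 1 / t : ℝ) : ℂ) := by
    intro t ht
    have h0 : (t : ℂ) ≠ 0 := by exact_mod_cast ht.1.ne'
    simp only [hM]
    push_cast
    rw [add_sub_cancel_left, div_eq_iff (mul_ne_zero h0 hab)]
    field_simp
    ring
  have hσΩ : σ ⊆ Ω := by rintro _ ⟨t, ht, rfl⟩; exact hslit t ht
  have hslitPlane : ∀ w ∈ Ω, w ∉ σ → M w ∈ slitPlane := by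
    intro w hw hwσ
    by_contra hcon
    rw [Complex.mem_slitPlane_iff, not_or, not_lt, not_not] at hcon
    have h1 : M w = ((M w).re : ℂ) := by apply Complex.ext <;> simp [hcon.2]
    apply hwσ
    rw [← hRM w hw, h1]
    exact hσ1 _ hcon.1
  -- the two-sheeted cover `W` and its uniformization
  set W : Set ℂ := {s | s ^ 2 ≠ 1 ∧ R (s ^ 2) ∈ Ω} with hW
  obtain ⟨ζ, hζ, hGζ⟩ := hbΩ
  have hζn : ‖ζ‖ < 1 := mem_ball_zero_iff.1 hζ
  have hζn' : ‖-ζ‖ < 1 := by rwa [norm_neg]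
  set k : ℂ → ℂ := fun y => M (G (mob (-ζ) y)) with hk
  have hTm : MapsTo (mob (-ζ)) (ball 0 1) (ball 0 1) := fun y hy =>
    mem_ball_zero_iff.2 (mob_norm hζn' (mem_ball_zero_iff.1 hy))
  have hTd : DifferentiableOn ℂ (mob (-ζ)) (ball 0 1) := fun y hy =>
    (mob_hasDerivAt hζn' (mem_ball_zero_iff.1 hy)).differentiableAt.differentiableWithinAt
  have hkd : DifferentiableOn ℂ k (ball 0 1) :=
    hMd.comp (hG.comp hTd hTm) (fun y hy => ⟨_, hTm hy, rfl⟩)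
  have hki : InjOn k (ball 0 1) := by
    intro x hx y hy hxy
    have h1 : G (mob (-ζ) x) = G (mob (-ζ) y) := by
      rw [← hRM _ ⟨_, hTm hx, rfl⟩, ← hRM _ ⟨_, hTm hy, rfl⟩]
      exact congrArg R hxy
    have h2 := hi (hTm hx) (hTm hy) h1
    rw [← mob_inv hζn' (mem_ball_zero_iff.1 hx), ← mob_inv hζn' (mem_ball_zero_iff.1 hy), h2]
  have h0b : (0 : ℂ) ∈ ball (0 : ℂ) 1 := mem_ball_self one_pos
  have hk0 : k 0 = 0 := by simp [hk, mob, hGζ, hM]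
  set k1 : ℂ → ℂ := dslope k 0 with hk1
  have hk1d : DifferentiableOn ℂ k1 (ball 0 1) :=
    (Complex.differentiableOn_dslope (isOpen_ball.mem_nhds h0b)).2 hkd
  have hkk1 : ∀ y, k y = y * k1 y := by
    intro y
    have := sub_smul_dslope k 0 y
    rw [hk0] at this
    simpa using this.symm
  have hk10 : ∀ y ∈ ball (0 : ℂ) 1, k1 y ≠ 0 := by
    intro y hy h
    by_cases hy0 : y = 0
    · rw [hy0, hk1, dslope_same] at h
      exact deriv_ne_zero_of_injOn isOpen_ball hkd hki h0b h
    · apply hy0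
      refine hki hy h0b ?_
      rw [hkk1 y, h, hk0, mul_zero]
  obtain ⟨ℓ, hℓd, hℓ⟩ := (logDomain_of_convex (convex_ball (0 : ℂ) 1) isOpen_ball
    ⟨0, h0b⟩).holo isOpen_ball hk1d hk10
  have hsq : MapsTo (fun z : ℂ => z ^ 2) (ball 0 1) (ball 0 1) := by
    intro z hz
    rw [mem_ball_zero_iff] at *
    rw [norm_pow]; exact pow_lt_one₀ (norm_nonneg _) hz two_ne_zero
  set S : ℂ → ℂ := fun z => z * Complex.exp (ℓ (z ^ 2) / 2) with hS
  have hSd : DifferentiableOn ℂ S (ball 0 1) := by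
    refine differentiableOn_id.mul (DifferentiableOn.cexp (DifferentiableOn.div_const ?_ 2))
    exact hℓd.comp (differentiableOn_id.pow 2) hsq
  have hS2 : ∀ z ∈ ball (0 : ℂ) 1, S z ^ 2 = k (z ^ 2) := by
    intro z hz
    rw [hkk1, ← hℓ _ (hsq hz), hS]
    simp only
    rw [mul_pow, ← Complex.exp_nat_mul]
    congr 2; push_cast; ring
  have hSodd : ∀ z, S (-z) = -S z := by intro z; simp [hS]
  have hS0 : ∀ z, S z = 0 → z = 0 := by
    intro z hz
    exact (mul_eq_zero.1 hz).resolve_right (Complex.exp_ne_zero _)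
  have hSi : InjOn S (ball 0 1) := by
    intro x hx y hy hxy
    have h1 : x ^ 2 = y ^ 2 := hki (hsq hx) (hsq hy) (by
      rw [← hS2 x hx, ← hS2 y hy, hxy])
    rcases sq_eq_sq_iff_eq_or_eq_neg.1 h1 with h | h
    · exact h
    · rw [h, hSodd] at hxy
      have : S y = 0 := by
        have h2 : (2 : ℂ) * S y = 0 := by linear_combination -hxy
        exact (mul_eq_zero.1 h2).resolve_left two_ne_zero
      rw [h, hS0 y this, neg_zero]
  have hSW : S '' ball 0 1 = W := by
    ext s
    constructor
    · rintro ⟨z, hz, rfl⟩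
      have hm : G (mob (-ζ) (z ^ 2)) ∈ Ω := ⟨_, hTm (hsq hz), rfl⟩
      simp only [hW, mem_ofPred_eq]
      rw [hS2 z hz]
      exact ⟨hM1 _ hm, by simp only [hk]; rw [hRM _ hm]; exact hm⟩
    · rintro ⟨hs1, z, hz, hzs⟩
      have hzn : ‖z‖ < 1 := mem_ball_zero_iff.1 hz
      obtain ⟨x, hx⟩ := IsAlgClosed.exists_pow_nat_eq (mob ζ z) (n := 2) two_pos
      have hxb : x ∈ ball (0 : ℂ) 1 := by
        rw [mem_ball_zero_iff, ← sq_lt_one_iff₀ (norm_nonneg _), ← norm_pow, hx]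
        exact mob_norm hζn hzn
      have hSx : S x ^ 2 = s ^ 2 := by
        rw [hS2 x hxb, hx]
        simp only [hk]
        rw [mob_inv hζn hzn, hzs, hMR _ hs1]
      rcases sq_eq_sq_iff_eq_or_eq_neg.1 hSx with h | h
      · exact ⟨x, hxb, h⟩
      · exact ⟨-x, by simpa using hxb, by rw [hSodd, h, neg_neg]⟩
  obtain ⟨hWo, hWc, hWL⟩ := logDomain_image hSd hSi
  rw [hSW] at hWo hWc hWL
  have haxis : ∀ y : ℝ, (y : ℂ) * I ∈ W := by
    intro y
    have h1 : ((y : ℂ) * I) ^ 2 = ((-y ^ 2 : ℝ) : ℂ) := by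
      rw [mul_pow, Complex.I_sq]; push_cast; ring
    simp only [hW, mem_ofPred_eq]
    rw [h1]
    refine ⟨?_, hσΩ (hσ1 _ (by nlinarith [sq_nonneg y]))⟩
    intro h
    have : -y ^ 2 = (1 : ℝ) := by exact_mod_cast h
    nlinarith [sq_nonneg y]
  have hWne : W ≠ univ := by
    intro h
    have : (1 : ℂ) ∈ W := by rw [h]; trivial
    exact this.1 (one_pow 2)
  obtain ⟨hHc, hHL⟩ := half_logDomain hWo hWc hWL haxis hWne
  set P : ℂ → ℂ := fun s => R (s ^ 2) with hP
  set Q : ℂ → ℂ := fun w => Complex.exp (Complex.log (M w) / 2) with hQ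
  have hPc : ContinuousOn P (W ∩ {s | 0 < s.re}) := by
    rintro s ⟨hs, -⟩
    refine ContinuousAt.continuousWithinAt ?_
    have : (1 : ℂ) - s ^ 2 ≠ 0 := sub_ne_zero.2 (Ne.symm hs.1)
    simp only [hP, hR]
    fun_prop (disch := assumption)
  have hQc : ContinuousOn Q (Ω \ σ) := by
    refine ContinuousOn.cexp (ContinuousOn.div_const (ContinuousOn.clog
      (hMd.continuousOn.mono sdiff_subset) fun w hw => hslitPlane w hw.1 hw.2) 2)
  have hPm : MapsTo P (W ∩ {s | 0 < s.re}) (Ω \ σ) := by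
    rintro s ⟨hs, hs0⟩
    refine ⟨hs.2, ?_⟩
    rintro ⟨t, ht, hts⟩
    have h1 : M (P s) = s ^ 2 := hMR _ hs.1
    rw [← hts, hσ2 t ht] at h1
    have hre := congrArg Complex.re h1
    have him := congrArg Complex.im h1
    simp only [pow_two, Complex.mul_re, Complex.mul_im, Complex.ofReal_re, Complex.ofReal_im] at hre him
    simp only [mem_ofPred_eq] at hs0
    have h2 : s.im = 0 := by
      have : s.re * s.im = 0 := by linarith
      exact (mul_eq_zero.1 this).resolve_left hs0.ne'
    rw [h2] at hre
    have h3 : 1 ≤ 1 / t := by rw [le_div_iff₀ ht.1]; linarith [ht.2]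
    nlinarith
  have hQ2 : ∀ w ∈ Ω \ σ, Q w ^ 2 = M w := by
    intro w hw
    have := Complex.slitPlane_ne_zero (hslitPlane w hw.1 hw.2)
    simp only [hQ]
    rw [← Complex.exp_nat_mul]
    conv_rhs => rw [← Complex.exp_log this]
    congr 1; push_cast; ring
  have hQm : MapsTo Q (Ω \ σ) (W ∩ {s | 0 < s.re}) := by
    intro w hw
    refine ⟨⟨?_, ?_⟩, ?_⟩
    · rw [hQ2 w hw]; exact hM1 w hw.1
    · rw [hQ2 w hw, hRM w hw.1]; exact hw.1
    · simp only [hQ, mem_ofPred_eq]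
      rw [Complex.exp_re]
      refine mul_pos (Real.exp_pos _) (Real.cos_pos_of_mem_Ioo ?_)
      have harg : (Complex.log (M w) / 2).im = (M w).arg / 2 := by
        rw [show (2 : ℂ) = ((2 : ℝ) : ℂ) by norm_num, Complex.div_ofReal_im, Complex.log_im]
      rw [harg]
      have h1 := Complex.neg_pi_lt_arg (M w)
      have h2 := Complex.arg_le_pi (M w)
      have h3 : (M w).arg ≠ π := Complex.slitPlane_arg_ne_pi (hslitPlane w hw.1 hw.2)
      have h4 := lt_of_le_of_ne h2 h3
      constructor <;> linarith
  have hPQ : ∀ w ∈ Ω \ σ, P (Q w) = w := by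
    intro w hw
    simp only [hP]; rw [hQ2 w hw, hRM w hw.1]
  have himg : Ω \ σ = P '' (W ∩ {s | 0 < s.re}) :=
    subset_antisymm (fun w hw => ⟨Q w, hQm hw, hPQ w hw⟩) (image_subset_iff.2 hPm)
  refine ⟨?_, ?_, hHL.transfer hPc hQc hPm hQm hPQ⟩
  · have : Ω \ σ = Ω ∩ M ⁻¹' slitPlane := by
      ext w
      constructor
      · exact fun hw => ⟨hw.1, hslitPlane w hw.1 hw.2⟩
      · rintro ⟨hw, hwM⟩
        refine ⟨hw, ?_⟩
        rintro ⟨t, ht, rfl⟩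
        rw [mem_preimage, hσ2 t ht, Complex.ofReal_mem_slitPlane] at hwM
        have h3 : 1 ≤ 1 / t := by rw [le_div_iff₀ ht.1]; linarith [ht.2]
        linarith
    rw [this]
    exact hMd.continuousOn.isOpen_inter_preimage hΩo Complex.isOpen_slitPlane
  · rw [himg]; exact hHc.image _ hPc

/-! ### Carathéodory functions and the slit step -/

/-- The Carathéodory class: holomorphic functions on the unit disc with nonnegative real part
and value `1` at the origin. -/
def Cara (p : ℂ → ℂ) : Prop :=
  DifferentiableOn ℂ p (ball 0 1) ∧ p 0 = 1 ∧ ∀ z ∈ ball (0 : ℂ) 1, 0 ≤ (p z).re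

/-- The function `z ↦ z * exp (-σ * p z)`. -/
noncomputable def expMap (σ : ℝ) (p : ℂ → ℂ) (z : ℂ) : ℂ := z * Complex.exp (-(σ : ℂ) * p z)

lemma zero_mem_disc : (0 : ℂ) ∈ ball (0 : ℂ) 1 := mem_ball_self one_pos

lemma expMap_zero (σ : ℝ) (p : ℂ → ℂ) : expMap σ p 0 = 0 := by simp [expMap]

lemma expMap_norm_le {σ : ℝ} (hσ : 0 ≤ σ) {p : ℂ → ℂ} (hp : Cara p) {z : ℂ} (hz : z ∈ ball (0 : ℂ) 1) :
    ‖expMap σ p z‖ ≤ ‖z‖ := by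
  rw [expMap, norm_mul, Complex.norm_exp]
  refine mul_le_of_le_one_right (norm_nonneg _) ?_
  rw [Real.exp_le_one_iff]
  have := hp.2.2 z hz
  simp
  exact mul_nonneg hσ this

lemma expMap_mapsTo {σ : ℝ} (hσ : 0 ≤ σ) {p : ℂ → ℂ} (hp : Cara p) :
    MapsTo (expMap σ p) (ball 0 1) (ball 0 1) := by
  intro z hz
  have := expMap_norm_le hσ hp hz
  rw [mem_ball_zero_iff] at hz ⊢
  linarith

lemma expMap_diff (σ : ℝ) {p : ℂ → ℂ} (hp : Cara p) :
    DifferentiableOn ℂ (expMap σ p) (ball 0 1) := by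
  have := hp.1
  unfold expMap
  fun_prop

lemma expMap_deriv (σ : ℝ) {p : ℂ → ℂ} (hp : Cara p) :
    deriv (expMap σ p) 0 = (Real.exp (-σ) : ℝ) := by
  have h1 : DifferentiableAt ℂ p 0 := hp.1.differentiableAt (isOpen_ball.mem_nhds zero_mem_disc)
  have h2 : DifferentiableAt ℂ (fun z => Complex.exp (-(σ : ℂ) * p z)) 0 := by fun_prop
  have h3 := (hasDerivAt_id' (0 : ℂ)).fun_mul h2.hasDerivAt
  have h4 := h3.deriv
  unfold expMap
  rw [h4]
  simp [hp.2.1]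

/-- A univalent self-map of the disc fixing `0` with derivative `exp (-τ)`, `τ > 0`, there is
`z * exp (-τ * p z)` for some `p` in the Carathéodory class. -/
lemma exists_expMap {φ : ℂ → ℂ} (hd : DifferentiableOn ℂ φ (ball 0 1)) (hi : InjOn φ (ball 0 1))
    (hm : MapsTo φ (ball 0 1) (ball 0 1)) (h0 : φ 0 = 0) {τ : ℝ} (hτ : 0 < τ)
    (hφ : deriv φ 0 = (Real.exp (-τ) : ℝ)) :
    ∃ p, Cara p ∧ ∀ z ∈ ball (0 : ℂ) 1, φ z = expMap τ p z := by
  have hb := zero_mem_disc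
  have hψd : DifferentiableOn ℂ (dslope φ 0) (ball 0 1) :=
    (Complex.differentiableOn_dslope (isOpen_ball.mem_nhds hb)).2 hd
  have hψ : ∀ z, φ z = z * dslope φ 0 z := by
    intro z
    have := sub_smul_dslope φ 0 z
    rw [h0] at this; simpa using this.symm
  have hne : ∀ z ∈ ball (0 : ℂ) 1, dslope φ 0 z ≠ 0 := by
    intro z hz h
    rcases eq_or_ne z 0 with rfl | hz0
    · rw [dslope_same, hφ] at h
      exact (Real.exp_pos (-τ)).ne' (by exact_mod_cast h)
    · apply hz0
      apply hi hz hb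
      rw [h0, hψ, h, mul_zero]
  obtain ⟨ℓ, hℓd, hℓ⟩ := (logDomain_of_convex (convex_ball (0 : ℂ) 1) isOpen_ball ⟨0, hb⟩).holo
    isOpen_ball hψd hne
  have hℓ0 : Complex.exp (ℓ 0) = Complex.exp (-(τ : ℂ)) := by
    rw [hℓ 0 hb, dslope_same, hφ]; push_cast; rfl
  have hτ0 : (τ : ℂ) ≠ 0 := by exact_mod_cast hτ.ne'
  have key : ∀ z, Complex.exp (-(τ : ℂ) * (-(ℓ z - ℓ 0 - τ) / τ)) = Complex.exp (ℓ z) := by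
    intro z
    have : -(τ : ℂ) * (-(ℓ z - ℓ 0 - τ) / τ) = ℓ z - ℓ 0 + (-τ) := by field_simp; ring
    rw [this, Complex.exp_add, Complex.exp_sub, ← hℓ0]
    field_simp
  refine ⟨fun z => -(ℓ z - ℓ 0 - τ) / τ, ⟨by fun_prop, by field_simp; ring, ?_⟩, ?_⟩
  · intro z hz
    have h1 : ‖dslope φ 0 z‖ ≤ 1 / 1 := by
      apply Complex.norm_dslope_le_div_of_mapsTo_ball hd _ hz
      rw [h0]; exact fun z hz => ball_subset_closedBall (hm hz)
    rw [← hℓ z hz, ← key, Complex.norm_exp, div_one, Real.exp_le_one_iff, neg_mul, Complex.neg_re,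
      Complex.re_ofReal_mul] at h1
    by_contra h
    push Not at h
    have := mul_neg_of_pos_of_neg hτ h
    linarith
  · intro z hz
    rw [expMap, key, hℓ z hz, ← hψ]

lemma eq_id_of_deriv_eq_one {φ : ℂ → ℂ} (hd : DifferentiableOn ℂ φ (ball 0 1))
    (hm : MapsTo φ (ball 0 1) (ball 0 1)) (h0 : φ 0 = 0) (hφ : deriv φ 0 = 1) :
    ∀ z ∈ ball (0 : ℂ) 1, φ z = z := by
  intro z hz
  have := Complex.affine_of_mapsTo_ball_of_norm_dslope_eq_div (R₂ := 1) hd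
    (by rw [h0]; exact fun z hz => ball_subset_closedBall (hm hz)) zero_mem_disc
    (by rw [dslope_same, hφ]; simp) hz
  simpa [h0, hφ] using this

/-- Subordination: a univalent `f` whose range lies in that of the univalent `G` factors
through `G`. -/
lemma subordination {f G : ℂ → ℂ} (hf : DifferentiableOn ℂ f (ball 0 1)) (hfi : InjOn f (ball 0 1))
    (hf0 : f 0 = 0) (hG : DifferentiableOn ℂ G (ball 0 1)) (hGi : InjOn G (ball 0 1))
    (hG0 : G 0 = 0) (hsub : f '' ball 0 1 ⊆ G '' ball 0 1) :
    ∃ φ : ℂ → ℂ, DifferentiableOn ℂ φ (ball 0 1) ∧ InjOn φ (ball 0 1) ∧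
      MapsTo φ (ball 0 1) (ball 0 1) ∧ φ 0 = 0 ∧ (∀ z ∈ ball (0 : ℂ) 1, G (φ z) = f z) ∧
      deriv G 0 * deriv φ 0 = deriv f 0 ∧ ‖deriv φ 0‖ ≤ 1 := by
  obtain ⟨k, hkd, hk⟩ := exists_inverse isOpen_ball hG hGi
  have hkG : ∀ w ∈ G '' ball 0 1, k w ∈ ball (0 : ℂ) 1 ∧ G (k w) = w := by
    rintro _ ⟨z, hz, rfl⟩
    rw [hk z hz]; exact ⟨hz, rfl⟩
  have hmf : ∀ z ∈ ball (0 : ℂ) 1, f z ∈ G '' ball 0 1 := fun z hz => hsub ⟨z, hz, rfl⟩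
  have hd : DifferentiableOn ℂ (fun z => k (f z)) (ball 0 1) := hkd.comp hf hmf
  have h00 : k (f 0) = 0 := by rw [hf0, ← hG0, hk 0 zero_mem_disc, hG0]
  have hm : MapsTo (fun z => k (f z)) (ball 0 1) (ball 0 1) := fun z hz => (hkG _ (hmf z hz)).1
  have hGφ : ∀ z ∈ ball (0 : ℂ) 1, G (k (f z)) = f z := fun z hz => (hkG _ (hmf z hz)).2
  have hn := isOpen_ball.mem_nhds zero_mem_disc
  refine ⟨fun z => k (f z), hd, ?_, hm, h00, hGφ, ?_, ?_⟩
  · intro x hx y hy hxy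
    apply hfi hx hy
    rw [← hGφ x hx, ← hGφ y hy]
    exact congrArg G hxy
  · have h1 : HasDerivAt G (deriv G 0) (k (f 0)) := by
      rw [h00]; exact (hG.differentiableAt hn).hasDerivAt
    have h2 := h1.comp (0 : ℂ) (hd.differentiableAt hn).hasDerivAt
    rw [← h2.deriv]
    apply Filter.EventuallyEq.deriv_eq
    filter_upwards [hn] with z hz using hGφ z hz
  · apply Complex.norm_deriv_le_one_of_mapsTo_ball hd _ one_pos
    simp only [h00]
    exact fun z hz => ball_subset_closedBall (hm hz)

/-- Cutting a slit out of the image of a univalent `G` changes the Riemann map by a nonzero amount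
that is arbitrarily small. Only a short initial piece of the slit `(a, b]` is removed, so that the
image of a disc of radius `r > exp (-δ)` survives; comparison of derivatives then gives `τ < δ`. -/
lemma slit_step {G : ℂ → ℂ} (hG : DifferentiableOn ℂ G (ball 0 1)) (hi : InjOn G (ball 0 1))
    (hG0 : G 0 = 0) {c : ℝ} (hc : 0 < c) (hGc : deriv G 0 = c) (hG1 : MapsTo G (ball 0 1) (ball 0 1))
    {a b : ℂ} (ha : a ∉ G '' ball 0 1)
    (hslit : ∀ t ∈ Ioc (0 : ℝ) 1, a + t * (b - a) ∈ G '' ball 0 1) {δ : ℝ} (hδ : 0 < δ) :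
    ∃ τ : ℝ, 0 < τ ∧ τ < δ ∧ ∃ P, Cara P ∧ InjOn (expMap τ P) (ball 0 1) ∧
      ∀ w ∈ G '' ball 0 1, (∀ t ∈ Ioc (0 : ℝ) 1, w ≠ a + t * (b - a)) →
        ∃ z ∈ ball (0 : ℂ) 1, G (expMap τ P z) = w := by
  obtain ⟨r, hr1, hr2⟩ := exists_between (show Real.exp (-δ) < 1 by
    rw [Real.exp_lt_one_iff]; linarith)
  have hr0 : 0 < r := (Real.exp_pos _).trans hr1
  have hclb : closedBall (0 : ℂ) r ⊆ ball 0 1 := closedBall_subset_ball hr2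
  set K := G '' closedBall 0 r with hK
  have hKc : IsCompact K := (isCompact_closedBall _ _).image_of_continuousOn
    (hG.continuousOn.mono hclb)
  have haK : a ∉ K := fun h => ha (image_mono hclb h)
  have hcont : ContinuousAt (fun t : ℝ => a + t * (b - a)) 0 := by fun_prop
  have hev : ∀ᶠ t : ℝ in 𝓝 0, a + t * (b - a) ∈ Kᶜ := by
    apply hcont
    simp only [Complex.ofReal_zero, zero_mul, add_zero]
    exact hKc.isClosed.isOpen_compl.mem_nhds haK
  obtain ⟨η, hη, hηK⟩ := Metric.eventually_nhds_iff.1 hev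
  set s := min (η / 2) 1 with hs
  have hs0 : 0 < s := by positivity
  have hs1 : s ≤ 1 := min_le_right _ _
  have hsη : s < η := (min_le_left _ _).trans_lt (by linarith)
  set b' := a + s * (b - a) with hb'
  have hpt : ∀ t : ℝ, a + t * (b' - a) = a + ((t * s : ℝ) : ℂ) * (b - a) := by
    intro t; rw [hb']; push_cast; ring
  have hts : ∀ t ∈ Ioc (0 : ℝ) 1, t * s ∈ Ioc (0 : ℝ) 1 ∧ t * s ≤ s := by
    intro t ht
    refine ⟨⟨mul_pos ht.1 hs0, ?_⟩, ?_⟩ <;> nlinarith [ht.1, ht.2]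
  obtain ⟨hso, hsc, hsL⟩ := slit_logDomain hG hi (b := b') ha (by
    intro t ht
    rw [hpt]; exact hslit _ (hts t ht).1)
  set σ : Set ℂ := (fun t : ℝ => a + t * (b' - a)) '' Ioc 0 1 with hσ
  have hKσ : ∀ w ∈ K, w ∉ σ := by
    rintro w hw ⟨t, ht, rfl⟩
    simp only at hw
    rw [hpt] at hw
    refine hηK ?_ hw
    obtain ⟨h1, h2⟩ := hts t ht
    rw [Real.dist_eq, sub_zero, abs_of_pos h1.1]; linarith
  have h0K : (0 : ℂ) ∈ K := ⟨0, by simp [hr0.le], hG0⟩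
  have h0Ω : (0 : ℂ) ∈ G '' ball 0 1 \ σ := ⟨image_mono hclb h0K, hKσ 0 h0K⟩
  obtain ⟨F, hFd, hFi, hFim, hF0, cF, hcF, hFc⟩ := riemann_map hso hsc hsL h0Ω (by
    rintro w ⟨⟨z, hz, rfl⟩, -⟩; exact hG1 hz)
  obtain ⟨φ, hφd, hφi, hφm, hφ0, hφG, hφder, hφn⟩ := subordination hFd hFi hF0 hG hi hG0
    (by rw [hFim]; exact sdiff_subset)
  have hmr : MapsTo (fun z : ℂ => (r : ℂ) * z) (ball 0 1) (closedBall 0 r) := by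
    intro z hz
    rw [mem_ball_zero_iff] at hz
    rw [mem_closedBall_zero_iff, norm_mul, Complex.norm_real, Real.norm_of_nonneg hr0.le]
    nlinarith
  have hr0' : (r : ℂ) ≠ 0 := by exact_mod_cast hr0.ne'
  obtain ⟨ψ, -, -, -, -, -, hψder, hψn⟩ := subordination (f := fun z => G (r * z))
    (hG.comp (differentiableOn_id.const_mul (r : ℂ)) fun z hz => hclb (hmr hz))
    (fun x hx y hy hxy => mul_left_cancel₀ hr0' (hi (hclb (hmr hx)) (hclb (hmr hy)) hxy))
    (by simp [hG0]) hFd hFi hF0 (by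
      rw [hFim]
      rintro _ ⟨z, hz, rfl⟩
      have : G (r * z) ∈ K := ⟨_, hmr hz, rfl⟩
      exact ⟨image_mono hclb this, hKσ _ this⟩)
  have hdr : deriv (fun z : ℂ => G (r * z)) 0 = c * r := by
    have h1 : HasDerivAt (fun z : ℂ => (r : ℂ) * z) r 0 := by
      simpa using (hasDerivAt_id' (0 : ℂ)).const_mul (r : ℂ)
    have h2 : HasDerivAt G c ((r : ℂ) * 0) := by
      rw [mul_zero, ← hGc]
      exact (hG.differentiableAt (isOpen_ball.mem_nhds zero_mem_disc)).hasDerivAt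
    exact (h2.comp (0 : ℂ) h1).deriv
  rw [hdr, hFc] at hψder
  rw [hFc, hGc] at hφder
  have hc0 : (c : ℂ) ≠ 0 := by exact_mod_cast hc.ne'
  have e1 : deriv φ 0 = ((cF / c : ℝ) : ℂ) := by
    push_cast; rw [eq_div_iff hc0, mul_comm]; exact hφder
  have e2 : cF / c ≤ 1 := by
    rw [e1, Complex.norm_real, Real.norm_of_nonneg (by positivity)] at hφn; exact hφn
  have e3 : r ≤ cF / c := by
    have := congrArg norm hψder
    rw [norm_mul, norm_mul, Complex.norm_real, Complex.norm_real, Complex.norm_real,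
      Real.norm_of_nonneg hr0.le, Real.norm_of_nonneg hc.le, Real.norm_of_nonneg hcF.le] at this
    rw [le_div_iff₀ hc]
    nlinarith
  have e4 : cF / c < 1 := by
    refine lt_of_le_of_ne e2 fun h => ?_
    have hid := eq_id_of_deriv_eq_one hφd hφm hφ0 (by rw [e1, h]; simp)
    have hbΩ : b' ∈ G '' ball 0 1 := hslit s ⟨hs0, hs1⟩
    obtain ⟨z, hz, hzb⟩ := hbΩ
    have h2 : F z ∈ G '' ball 0 1 \ σ := by rw [← hFim]; exact ⟨z, hz, rfl⟩
    rw [← hφG z hz, hid z hz, hzb] at h2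
    exact h2.2 ⟨1, by simp, by simp⟩
  have hpos : 0 < cF / c := div_pos hcF hc
  have e5 : 0 < -Real.log (cF / c) := by
    have := Real.log_neg hpos e4; linarith
  obtain ⟨P, hP, hφP⟩ := exists_expMap hφd hφi hφm hφ0 e5 (by
    rw [e1, neg_neg, Real.exp_log hpos])
  refine ⟨_, e5, ?_, P, hP, ?_, ?_⟩
  · rw [neg_lt, Real.lt_log_iff_exp_lt hpos]; linarith
  · exact hφi.congr hφP
  · intro w hw hwt
    have : w ∈ F '' ball 0 1 := by
      rw [hFim]
      refine ⟨hw, ?_⟩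
      rintro ⟨t, ht, rfl⟩
      refine hwt (t * s) (hts t ht).1 ?_
      simp only; exact hpt t
    obtain ⟨z, hz, rfl⟩ := this
    exact ⟨z, hz, by rw [← hφP z hz, hφG z hz]⟩

/-- The exponent of a composition of two maps `expMap`. -/
noncomputable def compExp (σ : ℝ) (p : ℂ → ℂ) (τ : ℝ) (P : ℂ → ℂ) (z : ℂ) : ℂ :=
  (σ * p (expMap τ P z) + τ * P z) / ((σ + τ : ℝ) : ℂ)

lemma compExp_mul {σ τ : ℝ} (hσ : 0 ≤ σ) (hτ : 0 < τ) (p P : ℂ → ℂ) (z : ℂ) :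
    ((σ + τ : ℝ) : ℂ) * compExp σ p τ P z = σ * p (expMap τ P z) + τ * P z := by
  have : ((σ + τ : ℝ) : ℂ) ≠ 0 := by
    have : σ + τ ≠ 0 := by positivity
    exact_mod_cast this
  rw [compExp, mul_div_cancel₀ _ this]

lemma compExp_cara {σ τ : ℝ} (hσ : 0 ≤ σ) (hτ : 0 < τ) {p P : ℂ → ℂ} (hp : Cara p) (hP : Cara P) :
    Cara (compExp σ p τ P) := by
  have hm := expMap_mapsTo hτ.le hP
  have h0 : ((σ + τ : ℝ) : ℂ) ≠ 0 := by
    have : σ + τ ≠ 0 := by positivity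
    exact_mod_cast this
  refine ⟨?_, ?_, ?_⟩
  · have h1 : DifferentiableOn ℂ (fun z => p (expMap τ P z)) (ball 0 1) :=
      hp.1.comp (expMap_diff τ hP) hm
    have h2 := hP.1
    exact ((h1.const_mul (σ : ℂ)).add (h2.const_mul (τ : ℂ))).div_const _
  · rw [compExp, expMap_zero, hp.2.1, hP.2.1, mul_one, mul_one, ← Complex.ofReal_add, div_self h0]
  · intro z hz
    rw [compExp, Complex.div_ofReal_re]
    have h1 := hp.2.2 _ (hm hz)
    have h2 := hP.2.2 _ hz
    rw [Complex.add_re, Complex.re_ofReal_mul, Complex.re_ofReal_mul]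
    positivity

lemma expMap_compExp {σ τ : ℝ} (hσ : 0 ≤ σ) (hτ : 0 < τ) (p P : ℂ → ℂ) (z : ℂ) :
    expMap (σ + τ) (compExp σ p τ P) z = expMap σ p (expMap τ P z) := by
  have h : expMap σ p (expMap τ P z) =
      z * Complex.exp (-(τ : ℂ) * P z) * Complex.exp (-(σ : ℂ) * p (expMap τ P z)) := rfl
  rw [h, expMap, neg_mul, compExp_mul hσ hτ, mul_assoc, ← Complex.exp_add]
  congr 2; ring

/-! ### Parseval identities and the functional `S` -/

/-- The `k`-th Taylor coefficient of `h` at the origin. -/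
noncomputable def cf (h : ℂ → ℂ) (k : ℕ) : ℂ := iteratedDeriv k h 0 / k.factorial

lemma cf_hasSum {h : ℂ → ℂ} (hh : DifferentiableOn ℂ h (ball 0 1)) {z : ℂ}
    (hz : z ∈ ball (0 : ℂ) 1) : HasSum (fun k => cf h k * z ^ k) (h z) := by
  have := Complex.hasSum_taylorSeries_on_ball hh hz
  have e : (fun k => cf h k * z ^ k) =
      fun n : ℕ => ((n.factorial : ℂ))⁻¹ • (z - 0) ^ n • iteratedDeriv n h 0 := by
    funext k
    rw [cf, sub_zero, smul_eq_mul, smul_eq_mul]; ring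
  rw [e]; exact this

lemma sphere_subset_disc {r : ℝ} (hr : r < 1) : sphere (0 : ℂ) r ⊆ ball 0 1 :=
  sphere_subset_closedBall.trans (closedBall_subset_ball hr)

lemma circleAverage_term {v : ℂ → ℂ} (hv : DifferentiableOn ℂ v (ball 0 1)) {r : ℝ} (hr0 : 0 < r)
    (hr1 : r < 1) (c : ℂ) (k : ℕ) :
    circleAverage (fun z => conj (c * z ^ k) * v z) 0 r = conj c * cf v k * (r ^ 2) ^ k := by
  have hdc : DiffContOnCl ℂ v (ball 0 r) := by
    apply DifferentiableOn.diffContOnCl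
    rw [closure_ball _ hr0.ne']
    exact hv.mono (closedBall_subset_ball hr1)
  have h1 := hdc.circleIntegral_one_div_sub_center_pow_smul hr0 k
  have h2 : circleAverage (fun z => conj (c * z ^ k) * v z) 0 r =
      circleAverage (fun z => (conj c * (r ^ 2) ^ k) • ((1 / z ^ k) * v z)) 0 r := by
    apply circleAverage_congr_sphere
    intro z hz
    rw [abs_of_pos hr0, mem_sphere_zero_iff_norm] at hz
    have hz0 : z ≠ 0 := by rw [← norm_ne_zero_iff, hz]; exact hr0.ne'
    have h3 : conj z * z = (r : ℂ) ^ 2 := by rw [Complex.conj_mul', hz]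
    have h4 : conj (z ^ k) = ((r : ℂ) ^ 2) ^ k / z ^ k := by
      rw [eq_div_iff (pow_ne_zero _ hz0), ← h3, mul_pow, map_pow]
    simp only [map_mul, h4, smul_eq_mul]
    ring
  rw [h2]
  erw [circleAverage_fun_smul]
  rw [circleAverage_eq_circleIntegral hr0.ne']
  have h5 : (fun z : ℂ => (z - 0)⁻¹ • (1 / z ^ k * v z)) =
      fun z => (1 / (z - 0) ^ (k + 1)) • v z := by
    funext z
    simp only [sub_zero, smul_eq_mul, pow_succ, one_div, mul_inv]; ring
  rw [h5, h1, cf]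
  have := Complex.two_pi_I_ne_zero
  simp only [smul_eq_mul]
  field_simp

/-- Parseval's identity, polarized, on the circle of radius `r`. -/
lemma parseval {u v : ℂ → ℂ} (hu : DifferentiableOn ℂ u (ball 0 1))
    (hv : DifferentiableOn ℂ v (ball 0 1)) {r : ℝ} (hr0 : 0 < r) (hr1 : r < 1) :
    HasSum (fun k => conj (cf u k) * cf v k * ((r : ℂ) ^ 2) ^ k)
      (circleAverage (fun z => conj (u z) * v z) 0 r) := by
  have hmem : ∀ θ, circleMap 0 r θ ∈ ball (0 : ℂ) 1 := fun θ =>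
    sphere_subset_disc hr1 (circleMap_mem_sphere 0 hr0.le θ)
  have hnorm : ∀ θ, ‖circleMap 0 r θ‖ = r := fun θ => by simp [abs_of_pos hr0]
  obtain ⟨M, hM⟩ := (isCompact_sphere (0 : ℂ) r).exists_bound_of_continuousOn
    (hv.continuousOn.mono (sphere_subset_disc hr1))
  have hsum : Summable fun k => ‖cf u k‖ * r ^ k := by
    have := (cf_hasSum hu (z := (r : ℂ)) (by simpa [abs_of_pos hr0] using hr1)).summable.norm
    simpa [abs_of_pos hr0] using this
  have hvc : Continuous fun θ => v (circleMap 0 r θ) := by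
    rw [← continuousOn_univ]
    exact hv.continuousOn.comp (continuous_circleMap 0 r).continuousOn fun θ _ => hmem θ
  have key : HasSum (fun k => ∫ θ in (0 : ℝ)..2 * π,
      conj (cf u k * circleMap 0 r θ ^ k) * v (circleMap 0 r θ))
      (∫ θ in (0 : ℝ)..2 * π, conj (u (circleMap 0 r θ)) * v (circleMap 0 r θ)) := by
    refine intervalIntegral.hasSum_integral_of_dominated_convergence
      (fun k _ => ‖cf u k‖ * r ^ k * M) ?_ ?_ ?_ ?_ ?_
    · intro k
      apply Continuous.aestronglyMeasurable
      refine Continuous.mul (Complex.continuous_conj.comp ?_) hvc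
      exact continuous_const.mul ((continuous_circleMap 0 r).pow k)
    · intro k
      refine .of_forall fun θ _ => ?_
      rw [norm_mul, RCLike.norm_conj, norm_mul, norm_pow, hnorm]
      gcongr
      exact hM _ (circleMap_mem_sphere 0 hr0.le θ)
    · exact .of_forall fun θ _ => hsum.mul_right M
    · exact continuous_const.intervalIntegrable _ _
    · refine .of_forall fun θ _ => ?_
      exact ((Complex.hasSum_conj'.2 (by simpa using cf_hasSum hu (hmem θ)))).mul_right _
  have key2 := key.const_smul ((2 * π : ℝ)⁻¹)
  convert key2 using 2 with k
  · rw [← circleAverage_term hv hr0 hr1]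
    rfl
  · rfl

lemma differentiableOn_iteratedDeriv {g : ℂ → ℂ} (hg : DifferentiableOn ℂ g (ball 0 1)) (k : ℕ) :
    DifferentiableOn ℂ (iteratedDeriv k g) (ball 0 1) := by
  induction k with
  | zero => simpa using hg
  | succ k ih => rw [iteratedDeriv_succ]; exact ih.deriv isOpen_ball

lemma iteratedDeriv_id_mul {g : ℂ → ℂ} (hg : DifferentiableOn ℂ g (ball 0 1)) (k : ℕ) :
    ∀ z ∈ ball (0 : ℂ) 1, iteratedDeriv k (fun z => z * g z) z =
      z * iteratedDeriv k g z + k * iteratedDeriv (k - 1) g z := by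
  induction k with
  | zero => intro z hz; simp
  | succ k ih =>
    intro z hz
    have hn := isOpen_ball.mem_nhds hz
    rw [iteratedDeriv_succ]
    have h1 : iteratedDeriv k (fun z => z * g z) =ᶠ[𝓝 z]
        fun z => z * iteratedDeriv k g z + k * iteratedDeriv (k - 1) g z := by
      filter_upwards [hn] with w hw using ih w hw
    rw [h1.deriv_eq]
    have h2 := ((differentiableOn_iteratedDeriv hg k).differentiableAt hn).hasDerivAt
    have h3 := ((differentiableOn_iteratedDeriv hg (k - 1)).differentiableAt hn).hasDerivAt
    have h4 := ((hasDerivAt_id' z).fun_mul h2).fun_add (h3.const_mul (k : ℂ))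
    rw [h4.deriv, ← iteratedDeriv_succ, ← iteratedDeriv_succ]
    rcases Nat.eq_zero_or_pos k with rfl | hk
    · simp; ring
    · rw [Nat.sub_add_cancel hk]; push_cast; ring

lemma cf_id_mul_deriv {h : ℂ → ℂ} (hh : DifferentiableOn ℂ h (ball 0 1)) (k : ℕ) :
    cf (fun z => z * deriv h z) k = k * cf h k := by
  rw [cf, iteratedDeriv_id_mul (hh.deriv isOpen_ball) k 0 zero_mem_disc, cf]
  cases k with
  | zero => simp
  | succ k => rw [Nat.add_sub_cancel, iteratedDeriv_succ' (f := h), zero_mul, zero_add, mul_div_assoc]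

lemma differentiableOn_id_mul_deriv {h : ℂ → ℂ} (hh : DifferentiableOn ℂ h (ball 0 1)) :
    DifferentiableOn ℂ (fun z => z * deriv h z) (ball 0 1) := by
  have := hh.deriv isOpen_ball
  fun_prop

lemma circleIntegrable_of_disc {E : Type*} [NormedAddCommGroup E] {F : ℂ → E} {r : ℝ} (hr0 : 0 < r)
    (hr1 : r < 1) (hF : ContinuousOn F (ball 0 1)) : CircleIntegrable F 0 r :=
  (hF.mono (sphere_subset_disc hr1)).circleIntegrable hr0.le

lemma circleAverage_re {F : ℂ → ℂ} {r : ℝ} (hF : CircleIntegrable F 0 r) :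
    circleAverage (fun z => (F z).re) 0 r = (circleAverage F 0 r).re :=
  Complex.reCLM.circleAverage_comp_comm hF

/-- The area-type functional `∑ k ‖c_k‖² q ^ k`, written as the mean of `Re (conj (z h') h)` over
the circle of radius `√q`. -/
noncomputable def S (h : ℂ → ℂ) (q : ℝ) : ℝ :=
  circleAverage (fun z => (conj (z * deriv h z) * h z).re) 0 (√q)

lemma sqrt_mem {q : ℝ} (h0 : 0 < q) (h1 : q < 1) : 0 < √q ∧ √q < 1 :=
  ⟨Real.sqrt_pos.2 h0, by rw [Real.sqrt_lt' one_pos]; simpa using h1⟩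

/-- The bilinear form that polarizes `S`, as a series in the Taylor coefficients. -/
lemma cross_hasSum {u v : ℂ → ℂ} (hu : DifferentiableOn ℂ u (ball 0 1))
    (hv : DifferentiableOn ℂ v (ball 0 1)) {q : ℝ} (h0 : 0 < q) (h1 : q < 1) :
    HasSum (fun k : ℕ => k * (conj (cf u k) * cf v k).re * q ^ k)
      (circleAverage (fun z => (conj (z * deriv u z) * v z).re) 0 (√q)) := by
  obtain ⟨hr0, hr1⟩ := sqrt_mem h0 h1
  have hz := differentiableOn_id_mul_deriv hu
  have hp := parseval hz hv hr0 hr1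
  rw [circleAverage_re (F := fun z => conj (z * deriv u z) * v z)
    (circleIntegrable_of_disc hr0 hr1
      ((Complex.continuous_conj.comp_continuousOn hz.continuousOn).mul hv.continuousOn))]
  have := Complex.reCLM.hasSum hp
  rw [Complex.reCLM_apply] at this
  convert this using 1
  funext k
  simp only [Complex.reCLM_apply]
  rw [cf_id_mul_deriv hu, ← Complex.ofReal_pow, Real.sq_sqrt h0.le, ← Complex.ofReal_pow,
    Complex.re_mul_ofReal, map_mul, Complex.conj_natCast, mul_assoc _ (conj (cf u k)),
    ← Complex.ofReal_natCast, Complex.re_ofReal_mul]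

lemma S_hasSum {h : ℂ → ℂ} (hh : DifferentiableOn ℂ h (ball 0 1)) {q : ℝ} (h0 : 0 < q)
    (h1 : q < 1) : HasSum (fun k : ℕ => k * ‖cf h k‖ ^ 2 * q ^ k) (S h q) := by
  have := cross_hasSum hh hh h0 h1
  rw [S]
  convert this using 1
  funext k
  rw [Complex.conj_mul', ← Complex.ofReal_pow, Complex.ofReal_re]

lemma S_nonneg {h : ℂ → ℂ} (hh : DifferentiableOn ℂ h (ball 0 1)) {q : ℝ} (h0 : 0 < q)
    (h1 : q < 1) : 0 ≤ S h q :=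
  (S_hasSum hh h0 h1).nonneg fun k => by positivity

lemma N_hasSum {h : ℂ → ℂ} (hh : DifferentiableOn ℂ h (ball 0 1)) {q : ℝ} (h0 : 0 < q)
    (h1 : q < 1) : HasSum (fun k : ℕ => (k : ℝ) ^ 2 * ‖cf h k‖ ^ 2 * q ^ k)
      (circleAverage (fun z => ‖z * deriv h z‖ ^ 2) 0 (√q)) := by
  have hz := differentiableOn_id_mul_deriv hh
  convert cross_hasSum hh hz h0 h1 using 1
  · funext k
    rw [cf_id_mul_deriv hh, mul_left_comm, ← Complex.ofReal_natCast,
      Complex.re_ofReal_mul, Complex.conj_mul', ← Complex.ofReal_pow, Complex.ofReal_re]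
    ring
  · congr 1
    funext z
    rw [Complex.conj_mul', ← Complex.ofReal_pow, Complex.ofReal_re]

lemma cross_symm {u v : ℂ → ℂ} (hu : DifferentiableOn ℂ u (ball 0 1))
    (hv : DifferentiableOn ℂ v (ball 0 1)) {q : ℝ} (h0 : 0 < q) (h1 : q < 1) :
    circleAverage (fun z => (conj (z * deriv u z) * v z).re) 0 (√q) =
    circleAverage (fun z => (conj (z * deriv v z) * u z).re) 0 (√q) := by
  refine (cross_hasSum hu hv h0 h1).unique ?_
  convert cross_hasSum hv hu h0 h1 using 1
  funext k
  congr 2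
  simp; ring

/-- Polarization of `S`. -/
lemma S_add {u v : ℂ → ℂ} (hu : DifferentiableOn ℂ u (ball 0 1))
    (hv : DifferentiableOn ℂ v (ball 0 1)) {q : ℝ} (h0 : 0 < q) (h1 : q < 1) :
    S (fun z => u z + v z) q =
      S u q + 2 * circleAverage (fun z => (conj (z * deriv u z) * v z).re) 0 (√q) + S v q := by
  obtain ⟨hr0, hr1⟩ := sqrt_mem h0 h1
  have hci : ∀ a b : ℂ → ℂ, DifferentiableOn ℂ a (ball 0 1) → DifferentiableOn ℂ b (ball 0 1) →
      CircleIntegrable (fun z => (conj (z * deriv a z) * b z).re) 0 (√q) := by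
    intro a b ha hb
    refine circleIntegrable_of_disc hr0 hr1 (Complex.continuous_re.comp_continuousOn ?_)
    exact (Complex.continuous_conj.comp_continuousOn
      (differentiableOn_id_mul_deriv ha).continuousOn).mul hb.continuousOn
  have e : S (fun z => u z + v z) q = circleAverage (fun z =>
      ((conj (z * deriv u z) * u z).re + (conj (z * deriv u z) * v z).re) +
      ((conj (z * deriv v z) * u z).re + (conj (z * deriv v z) * v z).re)) 0 (√q) := by
    apply circleAverage_congr_sphere
    intro z hz
    rw [abs_of_pos hr0] at hz
    have hn := isOpen_ball.mem_nhds (sphere_subset_disc hr1 hz)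
    have : deriv (fun z => u z + v z) z = deriv u z + deriv v z :=
      deriv_fun_add (hu.differentiableAt hn) (hv.differentiableAt hn)
    simp only [this, ← Complex.add_re]
    congr 1
    simp only [map_mul, map_add]; ring
  rw [e, circleAverage_fun_add ((hci u u hu hu).fun_add (hci u v hu hv))
    ((hci v u hv hu).fun_add (hci v v hv hv)), circleAverage_fun_add (hci u u hu hu) (hci u v hu hv),
    circleAverage_fun_add (hci v u hv hu) (hci v v hv hv), ← cross_symm hu hv h0 h1, S, S]
  ring

/-! ### Variation of the logarithm -/

lemma cara_add_one_ne {p : ℂ → ℂ} (hp : Cara p) {z : ℂ} (hz : z ∈ ball (0 : ℂ) 1) :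
    p z + 1 ≠ 0 := by
  intro h
  have h1 := hp.2.2 z hz
  have h2 := congrArg Complex.re h
  simp at h2
  linarith

/-- The Cayley transform of a Carathéodory function is a Schwarz function. -/
lemma cara_cayley {p : ℂ → ℂ} (hp : Cara p) :
    DifferentiableOn ℂ (fun z => (p z - 1) / (p z + 1)) (ball 0 1) ∧
    MapsTo (fun z => (p z - 1) / (p z + 1)) (ball 0 1) (closedBall 0 1) := by
  constructor
  · have := hp.1
    exact (this.sub_const 1).div (this.add_const 1) fun z hz => cara_add_one_ne hp hz
  · intro z hz
    rw [mem_closedBall_zero_iff, norm_div,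
      div_le_one (norm_pos_iff.2 (cara_add_one_ne hp hz))]
    refine le_of_sq_le_sq ?_ (norm_nonneg _)
    rw [← Complex.normSq_eq_norm_sq, ← Complex.normSq_eq_norm_sq, Complex.normSq_apply,
      Complex.normSq_apply]
    have := hp.2.2 z hz
    simp
    nlinarith

lemma cara_schwarz {p : ℂ → ℂ} (hp : Cara p) {z : ℂ} (hz : z ∈ ball (0 : ℂ) 1) :
    ‖p z - 1‖ ≤ ‖z‖ * ‖p z + 1‖ := by
  obtain ⟨h1, h2⟩ := cara_cayley hp
  have := Complex.norm_le_norm_of_mapsTo_ball h1 h2 (by simp [hp.2.1]) (mem_ball_zero_iff.1 hz)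
  rwa [norm_div, div_le_iff₀ (norm_pos_iff.2 (cara_add_one_ne hp hz))] at this

lemma cara_norm {p : ℂ → ℂ} (hp : Cara p) {z : ℂ} {r : ℝ} (hr : r < 1) (hz : ‖z‖ ≤ r) :
    ‖p z‖ ≤ (1 + r) / (1 - r) := by
  have h1 := cara_schwarz hp (z := z) (by rw [mem_ball_zero_iff]; linarith)
  have h2 : ‖p z‖ - 1 ≤ ‖p z - 1‖ := by simpa using norm_sub_norm_le (p z) 1
  have h3 : ‖p z + 1‖ ≤ ‖p z‖ + 1 := by simpa using norm_add_le (p z) 1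
  rw [le_div_iff₀ (by linarith)]
  have h4 : ‖z‖ * ‖p z + 1‖ ≤ r * (‖p z‖ + 1) := by gcongr; exact (norm_nonneg z).trans hz
  linarith

/-- The Schwarz bound for the Cayley transform of `p`, solved for the real part; this is the source
of the positivity of the first-order loss `gain`. -/
lemma cara_re {p : ℂ → ℂ} (hp : Cara p) {z : ℂ} (hz : z ∈ ball (0 : ℂ) 1) :
    (1 - ‖z‖ ^ 2) / (1 + ‖z‖ ^ 2) * (‖p z‖ ^ 2 + 1) ≤ 2 * (p z).re := by
  have h1 := cara_schwarz hp hz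
  have h2 : ‖p z - 1‖ ^ 2 ≤ ‖z‖ ^ 2 * ‖p z + 1‖ ^ 2 := by
    rw [← mul_pow]; gcongr
  have h3 : ‖p z - 1‖ ^ 2 = ‖p z‖ ^ 2 + 1 - 2 * (p z).re := by
    rw [← Complex.normSq_eq_norm_sq, ← Complex.normSq_eq_norm_sq, Complex.normSq_apply,
      Complex.normSq_apply]
    simp; ring
  have h4 : ‖p z + 1‖ ^ 2 = ‖p z‖ ^ 2 + 1 + 2 * (p z).re := by
    rw [← Complex.normSq_eq_norm_sq, ← Complex.normSq_eq_norm_sq, Complex.normSq_apply,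
      Complex.normSq_apply]
    simp; ring
  rw [h3, h4] at h2
  rw [div_mul_eq_mul_div, div_le_iff₀ (by positivity)]
  linarith

lemma norm_exp_neg_sub_one_le {w : ℂ} (hw : 0 ≤ w.re) : ‖Complex.exp (-w) - 1‖ ≤ ‖w‖ := by
  have hc : Convex ℝ {x : ℂ | x.re ≤ 0} := convex_halfSpace_re_le 0
  have := hc.norm_image_sub_le_of_norm_deriv_le (𝕜 := ℂ) (f := Complex.exp) (C := 1)
    (fun x _ => Complex.differentiableAt_exp) (fun x hx => by
      rw [Complex.deriv_exp, Complex.norm_exp]; exact Real.exp_le_one_iff.2 hx)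
    (x := 0) (y := -w) (by simp) (by simpa using hw)
  simpa using this

lemma cauchy_bound {f : ℂ → ℂ} (hf : DifferentiableOn ℂ f (ball 0 1)) {B s η : ℝ} (hη : 0 < η)
    (hs : s + η < 1) (hB : ∀ z ∈ closedBall (0 : ℂ) (s + η), ‖f z‖ ≤ B) :
    ∀ z ∈ closedBall (0 : ℂ) s, ‖deriv f z‖ ≤ B / η := by
  intro z hz
  have hsub : closedBall z η ⊆ closedBall 0 (s + η) := by
    apply closedBall_subset_closedBall'
    rw [mem_closedBall] at hz; linarith
  refine Complex.norm_deriv_le_of_forall_mem_sphere_norm_le hη ?_ fun w hw =>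
    hB w (hsub (sphere_subset_closedBall hw))
  apply DifferentiableOn.diffContOnCl
  rw [closure_ball _ hη.ne']
  exact hf.mono (hsub.trans (closedBall_subset_ball hs))

lemma flow_lip {f p : ℂ → ℂ} (hf : DifferentiableOn ℂ f (ball 0 1)) (hp : Cara p) {L M s : ℝ}
    (hs : s < 1) (hL : ∀ z ∈ closedBall (0 : ℂ) s, ‖deriv f z‖ ≤ L) {z : ℂ}
    (hz : z ∈ closedBall (0 : ℂ) s) (hM : ‖p z‖ ≤ M) {t : ℝ} (ht : 0 ≤ t) :
    ‖f (expMap t p z) - f z‖ ≤ L * (M * t) := by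
  have hzb : z ∈ ball (0 : ℂ) 1 := closedBall_subset_ball hs hz
  have hy : expMap t p z ∈ closedBall (0 : ℂ) s := by
    rw [mem_closedBall_zero_iff] at hz ⊢
    exact (expMap_norm_le ht hp hzb).trans hz
  have h1 := (convex_closedBall (0 : ℂ) s).norm_image_sub_le_of_norm_deriv_le (𝕜 := ℂ)
    (fun x hx => hf.differentiableAt (isOpen_ball.mem_nhds (closedBall_subset_ball hs hx))) hL hz hy
  have hL0 : 0 ≤ L := (norm_nonneg _).trans (hL z hz)
  refine h1.trans (mul_le_mul_of_nonneg_left ?_ hL0)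
  have h2 : expMap t p z - z = z * (Complex.exp (-(t * p z)) - 1) := by
    rw [expMap, neg_mul]; ring
  rw [h2, norm_mul]
  have h3 : ‖Complex.exp (-(t * p z)) - 1‖ ≤ ‖(t : ℂ) * p z‖ := by
    apply norm_exp_neg_sub_one_le
    rw [Complex.re_ofReal_mul]; exact mul_nonneg ht (hp.2.2 z hzb)
  rw [norm_mul, Complex.norm_real, Real.norm_of_nonneg ht] at h3
  have h4 : ‖z‖ ≤ 1 := (mem_ball_zero_iff.1 hzb).le
  calc ‖z‖ * ‖Complex.exp (-(t * p z)) - 1‖ ≤ 1 * (t * ‖p z‖) := by gcongr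
    _ ≤ M * t := by rw [one_mul, mul_comm]; gcongr

/-- Second order expansion of `h` along `t ↦ z * exp (-t * p z)`. -/
lemma flow_taylor {h p : ℂ → ℂ} (hh : DifferentiableOn ℂ h (ball 0 1)) (hp : Cara p) {L M s : ℝ}
    (hs : s < 1) (hL : ∀ z ∈ closedBall (0 : ℂ) s, ‖deriv (fun y => y * deriv h y) z‖ ≤ L) {z : ℂ}
    (hz : z ∈ closedBall (0 : ℂ) s) (hM : ‖p z‖ ≤ M) {τ : ℝ} (hτ : 0 ≤ τ) :
    ‖h (expMap τ p z) - h z + τ * (p z * (z * deriv h z))‖ ≤ M * (L * (M * τ)) * τ := by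
  have hzb : z ∈ ball (0 : ℂ) 1 := closedBall_subset_ball hs hz
  have hg := differentiableOn_id_mul_deriv hh
  have hL0 : 0 ≤ L := (norm_nonneg _).trans (hL z hz)
  have hM0 : 0 ≤ M := (norm_nonneg _).trans hM
  set F : ℝ → ℂ := fun t => h (expMap t p z) + t * (p z * (z * deriv h z)) with hF
  set F' : ℝ → ℂ := fun t => -(p z) * (expMap t p z * deriv h (expMap t p z) - z * deriv h z)
    with hF'
  have hder : ∀ t ∈ Icc (0 : ℝ) τ, HasDerivWithinAt F (F' t) (Icc 0 τ) t := by
    intro t ht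
    have hm : expMap t p z ∈ ball (0 : ℂ) 1 := expMap_mapsTo ht.1 hp hzb
    have h1 : HasDerivAt (fun t : ℂ => z * Complex.exp (-t * p z))
        (z * (Complex.exp (-(t : ℂ) * p z) * (-1 * p z))) t :=
      (((hasDerivAt_id' (t : ℂ)).neg.mul_const (p z)).cexp).const_mul z
    have h2 : HasDerivAt (fun t : ℝ => expMap t p z)
        (z * (Complex.exp (-(t : ℂ) * p z) * (-1 * p z))) t := h1.comp_ofReal
    have h3 : HasDerivAt h (deriv h (expMap t p z)) (expMap t p z) :=
      (hh.differentiableAt (isOpen_ball.mem_nhds hm)).hasDerivAt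
    have h4 := h3.scomp t h2
    have h5 : HasDerivAt (fun t : ℝ => (t : ℂ) * (p z * (z * deriv h z)))
        (1 * (p z * (z * deriv h z))) t :=
      (Complex.ofRealCLM.hasDerivAt (x := t)).mul_const _
    have h6 := (h4.add h5).hasDerivWithinAt (s := Icc 0 τ)
    refine HasDerivWithinAt.congr_deriv h6 ?_
    simp only [hF', smul_eq_mul, expMap]; ring
  have hb : ∀ t ∈ Ico (0 : ℝ) τ, ‖F' t‖ ≤ M * (L * (M * τ)) := by
    intro t ht
    rw [hF', norm_mul, norm_neg]
    have := flow_lip hg hp hs hL hz hM ht.1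
    have h2 : L * (M * t) ≤ L * (M * τ) := by gcongr; exact ht.2.le
    gcongr
    exact this.trans h2
  have := norm_image_sub_le_of_norm_deriv_le_segment' hder hb τ ⟨hτ, le_rfl⟩
  simp only [hF, sub_zero, Complex.ofReal_zero, zero_mul, add_zero] at this
  have e : expMap 0 p z = z := by simp [expMap]
  rw [e] at this
  rw [sub_add_eq_add_sub]; exact this

/-- The normalized logarithm `h (z e^{-τ p}) - τ (p - 1)` obtained from `h` when `z * exp (h z)` is
composed with `expMap τ p` and renormalized. -/
noncomputable def varLog (h : ℂ → ℂ) (τ : ℝ) (p : ℂ → ℂ) (z : ℂ) : ℂ :=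
  h (expMap τ p z) - τ * (p z - 1)

lemma varLog_diff {h p : ℂ → ℂ} (hh : DifferentiableOn ℂ h (ball 0 1)) (hp : Cara p) {τ : ℝ}
    (hτ : 0 ≤ τ) : DifferentiableOn ℂ (varLog h τ p) (ball 0 1) := by
  have h1 : DifferentiableOn ℂ (fun z => h (expMap τ p z)) (ball 0 1) :=
    hh.comp (expMap_diff τ hp) (expMap_mapsTo hτ hp)
  exact h1.sub ((hp.1.sub_const 1).const_mul (τ : ℂ))

/-- First and second order expansions of `varLog h τ p` in `τ`, uniform over all `h` bounded by `B` on
a larger disc and over all Carathéodory functions `p`. -/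
lemma varLog_estimates {B r0 r2 : ℝ} (h00 : 0 < r0) (h02 : r0 < r2) (h2 : r2 < 1) :
    ∃ C : ℝ, 0 ≤ C ∧ ∀ τ ∈ Ioc (0 : ℝ) 1, ∀ h p : ℂ → ℂ, DifferentiableOn ℂ h (ball 0 1) → Cara p →
      (∀ z ∈ closedBall (0 : ℂ) r2, ‖h z‖ ≤ B) → ∀ z ∈ closedBall (0 : ℂ) r0,
      ‖varLog h τ p z - h z‖ ≤ C * τ ∧
      ‖deriv (fun z => varLog h τ p z - h z) z‖ ≤ C * τ ∧
      ‖varLog h τ p z - h z + τ * (p z * (1 + z * deriv h z) - 1)‖ ≤ C * τ ^ 2 ∧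
      ‖z * deriv h z‖ ≤ C := by
  obtain ⟨η, hη⟩ : ∃ η, η = (r2 - r0) / 3 := ⟨_, rfl⟩
  have hη0 : 0 < η := by rw [hη]; linarith
  rcases lt_or_ge B 0 with hB | hB
  · refine ⟨0, le_rfl, fun τ _ h p _ _ hb z _ => ?_⟩
    have := hb 0 (by simp; linarith)
    linarith [norm_nonneg (h 0)]
  obtain ⟨M, hM⟩ : ∃ M, M = (1 + (r0 + η)) / (1 - (r0 + η)) := ⟨_, rfl⟩
  have hr1 : r0 + η < 1 := by rw [hη]; linarith
  have hM0 : 0 ≤ M := by rw [hM]; exact div_nonneg (by linarith) (by linarith)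
  set C1 := B / η * M + (M + 1) with hC1
  have hC10 : 0 ≤ C1 := by positivity
  refine ⟨C1 + C1 / η + M * (B / η / η * M) + B / η, by positivity, ?_⟩
  intro τ hτ h p hh hp hb z hz
  have hg := differentiableOn_id_mul_deriv hh
  have hd1 : ∀ z ∈ closedBall (0 : ℂ) (r0 + η + η), ‖deriv h z‖ ≤ B / η :=
    cauchy_bound hh hη0 (by rw [hη]; linarith) (by
      intro z hz; apply hb; convert hz using 2; rw [hη]; ring)
  have hd1' : ∀ z ∈ closedBall (0 : ℂ) (r0 + η), ‖deriv h z‖ ≤ B / η := fun z hz =>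
    hd1 z (closedBall_subset_closedBall (by linarith) hz)
  have hgb : ∀ z ∈ closedBall (0 : ℂ) (r0 + η + η), ‖z * deriv h z‖ ≤ B / η := by
    intro z hz
    have h1 := hd1 z hz
    rw [mem_closedBall_zero_iff] at hz
    rw [norm_mul]
    have h2 : ‖z‖ ≤ 1 := hz.trans (by rw [hη]; linarith)
    calc ‖z‖ * ‖deriv h z‖ ≤ 1 * (B / η) := by gcongr
      _ = B / η := one_mul _
  have hd2 := cauchy_bound hg hη0 (by rw [hη]; linarith) hgb
  have hpM : ∀ z ∈ closedBall (0 : ℂ) (r0 + η), ‖p z‖ ≤ M := by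
    intro z hz; rw [hM]; exact cara_norm hp hr1 (mem_closedBall_zero_iff.1 hz)
  have hdb : ∀ z ∈ closedBall (0 : ℂ) (r0 + η), ‖varLog h τ p z - h z‖ ≤ C1 * τ := by
    intro z hz
    have h1 := flow_lip hh hp hr1 hd1' hz (hpM z hz) hτ.1.le
    have h2 : ‖(τ : ℂ) * (p z - 1)‖ ≤ τ * (M + 1) := by
      rw [norm_mul, Complex.norm_real, Real.norm_of_nonneg hτ.1.le]
      have h3 : ‖p z - 1‖ ≤ ‖p z‖ + 1 := by simpa using norm_sub_le (p z) 1
      have h4 := hpM z hz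
      gcongr
      · exact hτ.1.le
      · linarith
    have h3 : varLog h τ p z - h z = (h (expMap τ p z) - h z) - τ * (p z - 1) := by
      rw [varLog]; ring
    rw [h3]
    refine (norm_sub_le _ _).trans ((add_le_add h1 h2).trans (le_of_eq ?_))
    rw [hC1]; ring
  have hzz : z ∈ closedBall (0 : ℂ) (r0 + η) := closedBall_subset_closedBall (by linarith) hz
  have hτ0 := hτ.1.le
  have hBη : 0 ≤ B / η := by positivity
  have hC1η : 0 ≤ C1 / η := by positivity
  have hMM : 0 ≤ M * (B / η / η * M) := by positivity
  refine ⟨?_, ?_, ?_, ?_⟩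
  · refine (hdb z hzz).trans ?_
    gcongr; linarith
  · have := cauchy_bound ((varLog_diff hh hp hτ0).sub hh) hη0 hr1 hdb z hz
    refine this.trans ?_
    rw [mul_div_right_comm]
    gcongr; linarith
  · have := flow_taylor hh hp hr1 hd2 hzz (hpM z hzz) hτ0
    have e : varLog h τ p z - h z + τ * (p z * (1 + z * deriv h z) - 1) =
        h (expMap τ p z) - h z + τ * (p z * (z * deriv h z)) := by
      rw [varLog]; ring
    rw [e]
    refine this.trans ?_
    have : M * (B / η / η * (M * τ)) * τ = M * (B / η / η * M) * τ ^ 2 := by ring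
    rw [this]
    gcongr; linarith
  · refine (hgb z (closedBall_subset_closedBall (by linarith) hz)).trans ?_
    linarith

/-! ### The step inequality -/

lemma circleIntegrable_lin {f g k : ℂ → ℝ} {r : ℝ} (hf : CircleIntegrable f 0 r)
    (hg : CircleIntegrable g 0 r) (hk : CircleIntegrable k 0 r) (a b c d : ℝ) :
    CircleIntegrable (fun z => a * f z + b * g z + c * k z + d) 0 r := by
  have i : ∀ (a : ℝ) {f : ℂ → ℝ}, CircleIntegrable f 0 r → CircleIntegrable (fun z => a * f z) 0 r :=
    fun a f hf => hf.const_mul a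
  exact (((i a hf).fun_add (i b hg)).fun_add (i c hk)).fun_add (circleIntegrable_const d 0 r)

lemma circleAverage_lin {f g k : ℂ → ℝ} {r : ℝ} (hf : CircleIntegrable f 0 r)
    (hg : CircleIntegrable g 0 r) (hk : CircleIntegrable k 0 r) (a b c d : ℝ) :
    circleAverage (fun z => a * f z + b * g z + c * k z + d) 0 r =
      a * circleAverage f 0 r + b * circleAverage g 0 r + c * circleAverage k 0 r + d := by
  have e : ∀ (a : ℝ) (f : ℂ → ℝ), circleAverage (fun z => a * f z) 0 r =
      a * circleAverage f 0 r := fun a f => circleAverage_fun_smul (a := a) (f := f)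
  have i : ∀ (a : ℝ) {f : ℂ → ℝ}, CircleIntegrable f 0 r → CircleIntegrable (fun z => a * f z) 0 r :=
    fun a f hf => hf.const_mul a
  rw [circleAverage_fun_add (((i a hf).fun_add (i b hg)).fun_add (i c hk))
      (circleIntegrable_const d 0 r), circleAverage_fun_add ((i a hf).fun_add (i b hg)) (i c hk),
    circleAverage_fun_add (i a hf) (i b hg), e, e, e, circleAverage_const]

/-- The relative rate `(1 - q) / (1 + q)` at which the squared radius shrinks in the step inequality. -/
noncomputable def lam (q : ℝ) : ℝ := (1 - q) / (1 + q)

lemma lam_mem {q : ℝ} (h0 : 0 < q) (h1 : q < 1) : 0 < lam q ∧ lam q < 1 := by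
  constructor
  · exact div_pos (by linarith) (by linarith)
  · rw [lam, div_lt_one (by linarith)]; linarith

/-- The integrand of `gain`, with `H = 1 + z h'`. Both summands are nonnegative when
`l = (1 - ‖z‖²) / (1 + ‖z‖²)` and `p` is the value at `z` of a Carathéodory function. -/
noncomputable def gainFn (l : ℝ) (p H : ℂ) : ℝ :=
  l * ‖p * H - 1‖ ^ 2 + (2 * p.re - l * (‖p‖ ^ 2 + 1)) * ‖H‖ ^ 2

/-- The first-order loss in the step inequality. -/
noncomputable def gain (h p : ℂ → ℂ) (q : ℝ) : ℝ :=
  circleAverage (fun z => gainFn (lam q) (p z) (1 + z * deriv h z)) 0 (√q)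

lemma gainFn_eq (l : ℝ) (p H : ℂ) :
    gainFn l p H = 2 * (p.re * ‖H‖ ^ 2) + -l * ‖H‖ ^ 2 + -2 * l * (p * H).re + l := by
  have : ‖p * H - 1‖ ^ 2 = ‖p‖ ^ 2 * ‖H‖ ^ 2 - 2 * (p * H).re + 1 := by
    rw [← mul_pow, ← norm_mul, ← Complex.normSq_eq_norm_sq, ← Complex.normSq_eq_norm_sq,
      Complex.normSq_apply, Complex.normSq_apply]
    simp only [Complex.sub_re, Complex.sub_im, Complex.one_re, Complex.one_im]; ring
  rw [gainFn, this]; ring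

lemma gainFn_nonneg {p : ℂ → ℂ} (hp : Cara p) {q : ℝ} (h0 : 0 < q) (h1 : q < 1) (H : ℂ) {z : ℂ}
    (hz : z ∈ sphere (0 : ℂ) √q) : 0 ≤ gainFn (lam q) (p z) H := by
  have hl := (lam_mem h0 h1).1
  have h2 := cara_re hp (sphere_subset_disc (sqrt_mem h0 h1).2 hz)
  rw [mem_sphere_zero_iff_norm] at hz
  rw [hz, Real.sq_sqrt h0.le] at h2
  have h3 : 0 ≤ 2 * (p z).re - lam q * (‖p z‖ ^ 2 + 1) := sub_nonneg.2 h2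
  rw [gainFn]; positivity

lemma circleAverage_holo_re {F : ℂ → ℂ} (hF : DifferentiableOn ℂ F (ball 0 1)) {r : ℝ}
    (hr0 : 0 < r) (hr1 : r < 1) : circleAverage (fun z => (F z).re) 0 r = (F 0).re := by
  rw [circleAverage_re (circleIntegrable_of_disc hr0 hr1 hF.continuousOn)]
  congr 1
  apply DiffContOnCl.circleAverage
  apply DifferentiableOn.diffContOnCl
  rw [abs_of_pos hr0, closure_ball _ hr0.ne']
  exact hF.mono (closedBall_subset_ball hr1)

lemma log_step {q τ : ℝ} (h0 : 0 < q) (h1 : q < 1) (hτ : τ ∈ Ioc (0 : ℝ) 1) :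
    4 * Real.log (1 - q) - 4 * Real.log (1 - q * (1 - lam q * τ)) ≤
      -(4 * q / (1 + q)) * τ + 4 * τ ^ 2 := by
  obtain ⟨x, hx⟩ : ∃ x, x = q * τ / (1 + q) := ⟨_, rfl⟩
  have hx0 : 0 ≤ x := by rw [hx]; have := hτ.1; positivity
  have hxτ : x ≤ τ := by
    rw [hx, div_le_iff₀ (by linarith)]; nlinarith [hτ.1]
  have e : 1 - q * (1 - lam q * τ) = (1 - q) * (1 + x) := by
    rw [hx, lam]; field_simp; ring
  rw [e, Real.log_mul (by linarith) (by linarith)]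
  have h2 : x - x ^ 2 ≤ Real.log (1 + x) := by
    have h3 := Real.one_sub_inv_le_log_of_pos (show 0 < 1 + x by linarith)
    refine le_trans ?_ h3
    have : 1 - (1 + x)⁻¹ = x / (1 + x) := by field_simp; ring
    rw [this, le_div_iff₀ (by linarith)]
    nlinarith [pow_nonneg hx0 3]
  have h4 : -(4 * q / (1 + q)) * τ = -4 * x := by rw [hx]; ring
  rw [h4]
  nlinarith

/-- Bernoulli's inequality, applied to each term of the series of `S`. -/
lemma S_bernoulli {h : ℂ → ℂ} (hh : DifferentiableOn ℂ h (ball 0 1)) {q : ℝ} (h0 : 0 < q)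
    (h1 : q < 1) {x : ℝ} (hx0 : 0 ≤ x) (hx1 : x < 1) :
    S h q - x * circleAverage (fun z => ‖z * deriv h z‖ ^ 2) 0 (√q) ≤ S h (q * (1 - x)) := by
  have hw0 : 0 < q * (1 - x) := mul_pos h0 (by linarith)
  have hw1 : q * (1 - x) < 1 := by nlinarith
  refine hasSum_le ?_ ((S_hasSum hh h0 h1).sub ((N_hasSum hh h0 h1).mul_left x))
    (S_hasSum hh hw0 hw1)
  intro k
  have hb : 1 + (k : ℝ) * (-x) ≤ (1 + -x) ^ k := one_add_mul_le_pow (by linarith) k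
  rw [mul_pow]
  have h2 : 0 ≤ (k : ℝ) * ‖cf h k‖ ^ 2 * q ^ k := by positivity
  have h3 := mul_le_mul_of_nonneg_left hb h2
  rw [← sub_eq_add_neg] at h3
  linarith

/-- One step of the variation. To first order in `τ`, passing from `h` to `varLog h τ p` increases
`S + 4 log (1 - q)` by no more than following `h` from the squared radius `q (1 - lam q τ)` to `q`,
minus the loss `τ * gain h p q`. The constant is uniform for bounded `h`. -/
lemma step_inequality {B q0 r2 : ℝ} (hq00 : 0 < q0) (h02 : √q0 < r2) (h2 : r2 < 1) :
    ∃ C : ℝ, 0 ≤ C ∧ ∀ τ ∈ Ioc (0 : ℝ) 1, ∀ h p : ℂ → ℂ, DifferentiableOn ℂ h (ball 0 1) → Cara p →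
      (∀ z ∈ closedBall (0 : ℂ) r2, ‖h z‖ ≤ B) → ∀ q ∈ Ioc (0 : ℝ) q0,
      S (varLog h τ p) q + 4 * Real.log (1 - q) ≤
        S h (q * (1 - lam q * τ)) + 4 * Real.log (1 - q * (1 - lam q * τ))
          - τ * gain h p q + C * τ ^ 2 := by
  obtain ⟨C, hC0, hC⟩ := varLog_estimates (B := B) (Real.sqrt_pos.2 hq00) h02 h2
  refine ⟨3 * C ^ 2 + 4, by positivity, fun τ hτ h p hh hp hb q hq => ?_⟩
  have hq0 := hq.1
  have hq1 : q < 1 := by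
    have h3 : √q0 < 1 := by linarith
    rw [Real.sqrt_lt' one_pos] at h3
    linarith [hq.2]
  obtain ⟨hr0, hr1⟩ := sqrt_mem hq0 hq1
  obtain ⟨hl0, hl1⟩ := lam_mem hq0 hq1
  have hτ0 := hτ.1
  have hest := hC τ hτ h p hh hp hb
  have hsph : ∀ z ∈ sphere (0 : ℂ) |√q|, z ∈ closedBall (0 : ℂ) √q0 := by
    intro z hz
    rw [abs_of_pos hr0] at hz
    exact closedBall_subset_closedBall (Real.sqrt_le_sqrt hq.2) (sphere_subset_closedBall hz)
  have hg := differentiableOn_id_mul_deriv hh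
  have hvd : DifferentiableOn ℂ (fun z => varLog h τ p z - h z) (ball 0 1) :=
    (varLog_diff hh hp hτ0.le).sub hh
  have hHd : DifferentiableOn ℂ (fun z => 1 + z * deriv h z) (ball 0 1) := hg.const_add 1
  have hpHd : DifferentiableOn ℂ (fun z => p z * (1 + z * deriv h z)) (ball 0 1) := hp.1.mul hHd
  -- the means that enter
  set fA : ℂ → ℝ := fun z => (p z).re * ‖1 + z * deriv h z‖ ^ 2 with hfA
  set fN : ℂ → ℝ := fun z => ‖1 + z * deriv h z‖ ^ 2 with hfN
  set fH : ℂ → ℝ := fun z => (1 + z * deriv h z).re with hfH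
  set fP : ℂ → ℝ := fun z => (p z * (1 + z * deriv h z)).re with hfP
  have iN : CircleIntegrable fN 0 √q := circleIntegrable_of_disc hr0 hr1 (hHd.continuousOn.norm.pow 2)
  have iA : CircleIntegrable fA 0 √q := circleIntegrable_of_disc hr0 hr1
    ((Complex.continuous_re.comp_continuousOn hp.1.continuousOn).mul (hHd.continuousOn.norm.pow 2))
  have iH : CircleIntegrable fH 0 √q := circleIntegrable_of_disc hr0 hr1
    (Complex.continuous_re.comp_continuousOn hHd.continuousOn)
  have iP : CircleIntegrable fP 0 √q := circleIntegrable_of_disc hr0 hr1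
    (Complex.continuous_re.comp_continuousOn hpHd.continuousOn)
  have eH : circleAverage fH 0 √q = 1 := by
    rw [hfH, circleAverage_holo_re hHd hr0 hr1]; simp
  have eP : circleAverage fP 0 √q = 1 := by
    rw [hfP, circleAverage_holo_re hpHd hr0 hr1]; simp [hp.2.1]
  have eG : gain h p q = 2 * circleAverage fA 0 √q - lam q * circleAverage fN 0 √q - lam q := by
    have : gain h p q = circleAverage (fun z => 2 * fA z + -lam q * fN z + -2 * lam q * fP z + lam q)
        0 √q := by
      rw [gain]; congr 1; funext z; exact gainFn_eq _ _ _
    rw [this, circleAverage_lin iA iN iP, eP]; ring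
  have eN : circleAverage (fun z => ‖z * deriv h z‖ ^ 2) 0 √q = circleAverage fN 0 √q - 1 := by
    have : circleAverage (fun z => ‖z * deriv h z‖ ^ 2) 0 √q =
        circleAverage (fun z => 1 * fN z + -2 * fH z + 0 * fP z + 1) 0 √q := by
      congr 1; funext z
      simp only [hfN, hfH]
      rw [← Complex.normSq_eq_norm_sq, ← Complex.normSq_eq_norm_sq, Complex.normSq_apply,
        Complex.normSq_apply]
      simp only [Complex.add_re, Complex.add_im, Complex.one_re, Complex.one_im]; ring
    rw [this, circleAverage_lin iN iH iP, eH]; ring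
  have eX : circleAverage (fun z => (conj (z * deriv h z) * (varLog h τ p z - h z)).re) 0 √q ≤
      -τ * circleAverage fA 0 √q + τ + C ^ 2 * τ ^ 2 := by
    have h3 : circleAverage (fun z => (conj (z * deriv h z) * (varLog h τ p z - h z)).re) 0 √q ≤
        circleAverage (fun z => -τ * fA z + τ * fH z + τ * fP z + (C ^ 2 * τ ^ 2 - τ)) 0 √q := by
      apply circleAverage_mono
      · refine circleIntegrable_of_disc hr0 hr1 (Complex.continuous_re.comp_continuousOn ?_)
        exact (Complex.continuous_conj.comp_continuousOn hg.continuousOn).mul hvd.continuousOn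
      · exact circleIntegrable_lin iA iH iP _ _ _ _
      · intro z hz
        obtain ⟨-, -, h5, h6⟩ := hest z (hsph z hz)
        have h7 : (conj (z * deriv h z) * (varLog h τ p z - h z)).re =
            (conj (z * deriv h z) * (varLog h τ p z - h z + τ * (p z * (1 + z * deriv h z) - 1))).re
            - τ * (conj (z * deriv h z) * (p z * (1 + z * deriv h z) - 1)).re := by
          rw [← Complex.re_ofReal_mul, ← Complex.sub_re]; congr 1; ring
        have h8 : (conj (z * deriv h z) *
            (varLog h τ p z - h z + τ * (p z * (1 + z * deriv h z) - 1))).re ≤ C * (C * τ ^ 2) := by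
          refine (Complex.re_le_norm _).trans ?_
          rw [norm_mul, RCLike.norm_conj]
          gcongr
        have h9 : (conj (z * deriv h z) * (p z * (1 + z * deriv h z) - 1)).re =
            fA z - fH z - fP z + 1 := by
          simp only [hfA, hfH, hfP]
          generalize z * deriv h z = y
          rw [← Complex.normSq_eq_norm_sq, Complex.normSq_apply]
          simp; ring
        rw [h7, h9]
        linarith
    rw [circleAverage_lin iA iH iP, eH, eP] at h3
    linarith
  have eS : S (fun z => varLog h τ p z - h z) q ≤ C ^ 2 * τ ^ 2 := by
    rw [S]
    refine circleAverage_mono_on_of_le_circle ?_ ?_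
    · refine circleIntegrable_of_disc hr0 hr1 (Complex.continuous_re.comp_continuousOn ?_)
      exact (Complex.continuous_conj.comp_continuousOn
        (differentiableOn_id_mul_deriv hvd).continuousOn).mul hvd.continuousOn
    · intro z hz
      obtain ⟨h5, h6, -, -⟩ := hest z (hsph z hz)
      rw [abs_of_pos hr0, mem_sphere_zero_iff_norm] at hz
      refine (Complex.re_le_norm _).trans ?_
      rw [norm_mul, RCLike.norm_conj, norm_mul, hz]
      calc √q * ‖deriv (fun z => varLog h τ p z - h z) z‖ * ‖varLog h τ p z - h z‖
          ≤ 1 * (C * τ) * (C * τ) := by gcongr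
        _ = C ^ 2 * τ ^ 2 := by ring
  have e1 := S_add hh hvd hq0 hq1
  have e2 : (fun z => h z + (varLog h τ p z - h z)) = varLog h τ p := by funext z; ring
  rw [e2] at e1
  have hlt : lam q * τ < 1 := by nlinarith [hτ.2]
  have e3 := S_bernoulli hh hq0 hq1 (x := lam q * τ) (by positivity) hlt
  have e4 := log_step hq0 hq1 hτ
  rw [eN] at e3
  have e5 : 4 * q / (1 + q) = 2 - 2 * lam q := by rw [lam]; field_simp; ring
  rw [e5] at e4
  rw [e1, eG]
  nlinarith

/-! ### Compactness and admissible maps -/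

lemma gain_nonneg {h p : ℂ → ℂ} (hp : Cara p) {q : ℝ} (h0 : 0 < q) (h1 : q < 1) :
    0 ≤ gain h p q := by
  refine circleAverage_nonneg_of_nonneg fun z hz => ?_
  rw [abs_of_pos (sqrt_mem h0 h1).1] at hz
  exact gainFn_nonneg hp h0 h1 _ hz

/-- Locally uniform convergence is preserved by continuous operations. -/
lemma tlu_comp {ι E : Type*} [PseudoMetricSpace E] {l : Filter ι} [l.NeBot] {a b : ι → ℂ → ℂ}
    {a' b' : ℂ → ℂ} (ha : TendstoLocallyUniformlyOn a a' l (ball 0 1))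
    (hb : TendstoLocallyUniformlyOn b b' l (ball 0 1)) (ca : ∀ i, ContinuousOn (a i) (ball 0 1))
    (cb : ∀ i, ContinuousOn (b i) (ball 0 1)) {Ψ : ℂ × ℂ × ℂ → E} (hΨ : Continuous Ψ) :
    TendstoLocallyUniformlyOn (fun i z => Ψ (z, a i z, b i z)) (fun z => Ψ (z, a' z, b' z)) l
      (ball 0 1) := by
  have ca' : ContinuousOn a' (ball 0 1) := ha.continuousOn (Frequently.of_forall ca)
  have cb' : ContinuousOn b' (ball 0 1) := hb.continuousOn (Frequently.of_forall cb)
  rw [Metric.tendstoLocallyUniformlyOn_iff] at ha hb ⊢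
  intro ε hε x hx
  obtain ⟨δ, hδ, hδΨ⟩ := Metric.continuous_iff.1 hΨ (x, a' x, b' x) (ε / 2) (by positivity)
  obtain ⟨t1, ht1, h1⟩ := ha (δ / 2) (by positivity) x hx
  obtain ⟨t2, ht2, h2⟩ := hb (δ / 2) (by positivity) x hx
  have h3 : ∀ᶠ y in 𝓝[ball 0 1] x, dist (a' y) (a' x) < δ / 2 :=
    (ca' x hx).tendsto.eventually (ball_mem_nhds _ (by positivity))
  have h4 : ∀ᶠ y in 𝓝[ball 0 1] x, dist (b' y) (b' x) < δ / 2 :=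
    (cb' x hx).tendsto.eventually (ball_mem_nhds _ (by positivity))
  have h5 : ∀ᶠ y in 𝓝[ball 0 1] x, dist y x < δ := nhdsWithin_le_nhds (ball_mem_nhds x hδ)
  refine ⟨_, inter_mem (inter_mem ht1 ht2) (inter_mem (inter_mem h3 h4) h5), ?_⟩
  filter_upwards [h1, h2] with i hi1 hi2
  rintro y ⟨⟨hy1, hy2⟩, ⟨hy3, hy4⟩, hy5⟩
  simp only [mem_ofPred_eq] at hy3 hy4 hy5
  have e1 := hi1 y hy1
  have e2 := hi2 y hy2
  have k1 : dist (Ψ (y, a' y, b' y)) (Ψ (x, a' x, b' x)) < ε / 2 := by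
    apply hδΨ
    simp only [Prod.dist_eq, max_lt_iff]
    exact ⟨hy5, by linarith, by linarith⟩
  have k2 : dist (Ψ (y, a i y, b i y)) (Ψ (x, a' x, b' x)) < ε / 2 := by
    apply hδΨ
    simp only [Prod.dist_eq, max_lt_iff]
    refine ⟨hy5, ?_, ?_⟩
    · have := dist_triangle (a i y) (a' y) (a' x)
      rw [dist_comm (a i y) (a' y)] at this; linarith
    · have := dist_triangle (b i y) (b' y) (b' x)
      rw [dist_comm (b i y) (b' y)] at this; linarith
  have := dist_triangle_right (Ψ (y, a' y, b' y)) (Ψ (y, a i y, b i y)) (Ψ (x, a' x, b' x))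
  linarith

lemma circleAverage_tendsto {ι : Type*} {l : Filter ι} [l.NeBot] {F : ι → ℂ → ℝ} {F' : ℂ → ℝ}
    (hF : TendstoLocallyUniformlyOn F F' l (ball 0 1)) (cF : ∀ i, ContinuousOn (F i) (ball 0 1))
    {r : ℝ} (hr0 : 0 < r) (hr1 : r < 1) :
    Tendsto (fun i => circleAverage (F i) 0 r) l (𝓝 (circleAverage F' 0 r)) := by
  have cF' : ContinuousOn F' (ball 0 1) := hF.continuousOn (Frequently.of_forall cF)
  have hu := (tendstoLocallyUniformlyOn_iff_forall_isCompact isOpen_ball).1 hF _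
    (sphere_subset_disc hr1) (isCompact_sphere 0 r)
  rw [Metric.tendstoUniformlyOn_iff] at hu
  rw [Metric.tendsto_nhds]
  intro ε hε
  filter_upwards [hu (ε / 2) (by positivity)] with i hi
  have i1 := circleIntegrable_of_disc hr0 hr1 (cF i)
  have i2 := circleIntegrable_of_disc hr0 hr1 cF'
  have h1 : circleAverage (fun z => F i z - F' z) 0 r ≤ ε / 2 := by
    refine circleAverage_mono_on_of_le_circle (i1.sub i2) fun z hz => ?_
    rw [abs_of_pos hr0] at hz
    have := hi z hz
    rw [Real.dist_eq, abs_lt] at this; linarith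
  have h2 : circleAverage (fun z => F' z - F i z) 0 r ≤ ε / 2 := by
    refine circleAverage_mono_on_of_le_circle (i2.sub i1) fun z hz => ?_
    rw [abs_of_pos hr0] at hz
    have := hi z hz
    rw [Real.dist_eq, abs_lt] at this; linarith
  rw [circleAverage_fun_sub i1 i2] at h1
  rw [circleAverage_fun_sub i2 i1] at h2
  rw [Real.dist_eq, abs_lt]
  constructor <;> linarith

lemma S_tendsto {ι : Type*} {l : Filter ι} [l.NeBot] {h : ι → ℂ → ℂ} {h' : ℂ → ℂ}
    (hh : TendstoLocallyUniformlyOn h h' l (ball 0 1))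
    (hd : ∀ i, DifferentiableOn ℂ (h i) (ball 0 1)) {q : ℝ} (h0 : 0 < q) (h1 : q < 1) :
    Tendsto (fun i => S (h i) q) l (𝓝 (S h' q)) := by
  obtain ⟨hr0, hr1⟩ := sqrt_mem h0 h1
  have h2 := hh.deriv (Eventually.of_forall hd) isOpen_ball
  have h3 := tlu_comp (Ψ := fun x : ℂ × ℂ × ℂ => (conj (x.1 * x.2.1) * x.2.2).re) h2 hh
    (fun i => ((hd i).deriv isOpen_ball).continuousOn) (fun i => (hd i).continuousOn)
    (Complex.continuous_re.comp ((Complex.continuous_conj.comp (by fun_prop)).mul (by fun_prop)))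
  refine circleAverage_tendsto h3 (fun i => ?_) hr0 hr1
  refine Complex.continuous_re.comp_continuousOn ((Complex.continuous_conj.comp_continuousOn
      (differentiableOn_id_mul_deriv (hd i)).continuousOn).mul (hd i).continuousOn)

lemma continuous_gainFn (l : ℝ) :
    Continuous (fun x : ℂ × ℂ × ℂ => gainFn l x.2.1 (1 + x.1 * x.2.2)) := by
  unfold gainFn
  have h : Continuous fun x : ℂ × ℂ × ℂ => (x.2.1).re := Complex.continuous_re.comp (by fun_prop)
  fun_prop

lemma gain_tendsto {ι : Type*} {l : Filter ι} [l.NeBot] {h p : ι → ℂ → ℂ} {h' p' : ℂ → ℂ}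
    (hh : TendstoLocallyUniformlyOn h h' l (ball 0 1))
    (hd : ∀ i, DifferentiableOn ℂ (h i) (ball 0 1))
    (hp : TendstoLocallyUniformlyOn p p' l (ball 0 1))
    (hpd : ∀ i, DifferentiableOn ℂ (p i) (ball 0 1)) {q : ℝ} (h0 : 0 < q) (h1 : q < 1) :
    Tendsto (fun i => gain (h i) (p i) q) l (𝓝 (gain h' p' q)) := by
  obtain ⟨hr0, hr1⟩ := sqrt_mem h0 h1
  have h2 := hh.deriv (Eventually.of_forall hd) isOpen_ball
  have h3 := tlu_comp hp h2 (fun i => (hpd i).continuousOn)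
    (fun i => ((hd i).deriv isOpen_ball).continuousOn) (continuous_gainFn (lam q))
  refine circleAverage_tendsto h3 (fun i => ?_) hr0 hr1
  exact (continuous_gainFn (lam q)).comp_continuousOn (continuousOn_id.prodMk
    ((hpd i).continuousOn.prodMk ((hd i).deriv isOpen_ball).continuousOn))

/-- Compactness of the Carathéodory class. -/
lemma cara_compact {ι : Type*} (𝒰 : Ultrafilter ι) {p : ι → ℂ → ℂ} (hp : ∀ i, Cara (p i)) :
    ∃ p', Cara p' ∧ TendstoLocallyUniformlyOn p p' (𝒰 : Filter ι) (ball 0 1) := by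
  obtain ⟨p', hp'⟩ := montel 𝒰 isOpen_ball (fun i => (hp i).1) (fun z hz => by
    rw [mem_ball_zero_iff] at hz
    refine ⟨(1 - ‖z‖) / 2, by linarith, _, fun i w hw => cara_norm (r := (1 + ‖z‖) / 2) (hp i)
      (by linarith) ?_⟩
    rw [mem_ball, dist_eq_norm] at hw
    have := norm_le_norm_add_norm_sub' w z
    linarith)
  refine ⟨p', ⟨hp'.differentiableOn (Eventually.of_forall fun i => (hp i).1) isOpen_ball, ?_, ?_⟩, hp'⟩
  · refine tendsto_nhds_unique (hp'.tendsto_at zero_mem_disc) ?_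
    simp only [fun i => (hp i).2.1, tendsto_const_nhds]
  · intro z hz
    have := (Complex.continuous_re.tendsto _).comp (hp'.tendsto_at hz)
    exact ge_of_tendsto this (Eventually.of_forall fun i => (hp i).2.2 z hz)

/-- The normalized logarithm `log (e ^ σ * expMap σ p z / z)`. -/
noncomputable def logMap (σ : ℝ) (p : ℂ → ℂ) (z : ℂ) : ℂ := -(σ : ℂ) * (p z - 1)

lemma logMap_diff (σ : ℝ) {p : ℂ → ℂ} (hp : Cara p) :
    DifferentiableOn ℂ (logMap σ p) (ball 0 1) :=
  (hp.1.sub_const 1).const_mul _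

lemma varLog_logMap {σ τ : ℝ} (hσ : 0 ≤ σ) (hτ : 0 < τ) (p P : ℂ → ℂ) :
    varLog (logMap σ p) τ P = logMap (σ + τ) (compExp σ p τ P) := by
  funext z
  have := compExp_mul hσ hτ p P z
  rw [varLog, logMap, logMap]
  push_cast at this ⊢
  linear_combination this

/-- The functional that the inequality asserts to be nonpositive. -/
noncomputable def Phi (h : ℂ → ℂ) (q : ℝ) : ℝ := S h q + 4 * Real.log (1 - q)

/-- The admissible univalent maps `expMap σ p`: those to which `u` is subordinate and which satisfy
the inequality up to the error `ε * σ`. -/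
def Adm (u : ℂ → ℂ) (ε q0 σ : ℝ) (p : ℂ → ℂ) : Prop :=
  0 ≤ σ ∧ Cara p ∧ InjOn (expMap σ p) (ball 0 1) ∧
    (∀ z ∈ ball (0 : ℂ) 1, ∃ y, ‖y‖ ≤ ‖z‖ ∧ expMap σ p y = u z) ∧
    ∀ q ∈ Ioc (0 : ℝ) q0, Phi (logMap σ p) q ≤ ε * σ

lemma adm_zero {u : ℂ → ℂ} (hu : MapsTo u (ball 0 1) (ball 0 1)) (hud : DifferentiableOn ℂ u (ball 0 1))
    (hu0 : u 0 = 0) (ε : ℝ) {q0 : ℝ} (hq0 : q0 < 1) : Adm u ε q0 0 (fun _ => 1) := by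
  have e : expMap 0 (fun _ => (1 : ℂ)) = id := by funext z; simp [expMap]
  refine ⟨le_rfl, ⟨differentiableOn_const _, rfl, fun z _ => by simp⟩, ?_, ?_, ?_⟩
  · rw [e]; exact injOn_id _
  · intro z hz
    refine ⟨u z, ?_, by rw [e]; rfl⟩
    exact Complex.norm_le_norm_of_mapsTo_ball hud (fun z hz => ball_subset_closedBall (hu hz)) hu0
      (mem_ball_zero_iff.1 hz)
  · intro q hq
    have : S (logMap 0 (fun _ => 1)) q = 0 := by
      have e2 : logMap 0 (fun _ => (1 : ℂ)) = fun _ => 0 := by funext z; simp [logMap]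
      rw [S, e2]
      simp [circleAverage_const]
    rw [Phi, this, mul_zero, zero_add]
    have := Real.log_nonpos (x := 1 - q) (by linarith [hq.2]) (by linarith [hq.1])
    linarith

/-- Admissible maps form a closed family: compactness of the Carathéodory class and Hurwitz's theorem. -/
lemma adm_limit {u : ℂ → ℂ} {ε q0 : ℝ} (hq0 : q0 < 1) {σ : ℕ → ℝ} {p : ℕ → ℂ → ℂ}
    (h : ∀ n, Adm u ε q0 (σ n) (p n)) {s : ℝ} (hs : Tendsto σ atTop (𝓝 s)) :
    ∃ p', Adm u ε q0 s p' := by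
  set 𝒰 : Ultrafilter ℕ := Filter.hyperfilter ℕ
  have h𝒰 : (𝒰 : Filter ℕ) ≤ atTop := by
    rw [← Nat.cofinite_eq_atTop]; exact Filter.hyperfilter_le_cofinite
  replace hs := hs.mono_left h𝒰
  obtain ⟨p', hp', hlim⟩ := cara_compact 𝒰 (fun n => (h n).2.1)
  have hs0 : 0 ≤ s := ge_of_tendsto hs (Eventually.of_forall fun n => (h n).1)
  have hσ : TendstoLocallyUniformlyOn (fun n (_ : ℂ) => (σ n : ℂ)) (fun _ => (s : ℂ))
      (𝒰 : Filter ℕ) (ball 0 1) := by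
    rw [Metric.tendstoLocallyUniformlyOn_iff]
    intro η hη x hx
    refine ⟨univ, univ_mem, ?_⟩
    have := (Complex.continuous_ofReal.tendsto s).comp hs
    filter_upwards [this (ball_mem_nhds _ hη)] with n hn y _
    rw [dist_comm]; exact hn
  have hpc : ∀ n, ContinuousOn (p n) (ball 0 1) := fun n => (h n).2.1.1.continuousOn
  have hG : TendstoLocallyUniformlyOn (fun n => expMap (σ n) (p n)) (expMap s p') (𝒰 : Filter ℕ)
      (ball 0 1) :=
    tlu_comp (Ψ := fun x : ℂ × ℂ × ℂ => x.1 * Complex.exp (-x.2.1 * x.2.2)) hσ hlim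
      (fun n => continuousOn_const) hpc (by fun_prop)
  have hL : TendstoLocallyUniformlyOn (fun n => logMap (σ n) (p n)) (logMap s p') (𝒰 : Filter ℕ)
      (ball 0 1) :=
    tlu_comp (Ψ := fun x : ℂ × ℂ × ℂ => -x.2.1 * (x.2.2 - 1)) hσ hlim
      (fun n => continuousOn_const) hpc (by fun_prop)
  refine ⟨p', hs0, hp', ?_, ?_, ?_⟩
  · refine hurwitz_injOn isOpen_ball (convex_ball _ _).isPreconnected
      (fun n => expMap_diff (σ n) (h n).2.1) hG (fun n => (h n).2.2.1) zero_mem_disc ?_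
    rw [expMap_deriv s hp']
    exact_mod_cast (Real.exp_pos (-s)).ne'
  · intro z hz
    choose y hy1 hy2 using fun n => (h n).2.2.2.1 z hz
    obtain ⟨y', hy', hyl⟩ := (isCompact_closedBall (0 : ℂ) ‖z‖).ultrafilter_le_nhds (𝒰.map y) (by
      rw [Ultrafilter.coe_map, le_principal_iff, mem_map]
      exact Eventually.of_forall fun n => mem_closedBall_zero_iff.2 (hy1 n))
    have hyb : y' ∈ ball (0 : ℂ) 1 := closedBall_subset_ball (mem_ball_zero_iff.1 hz) hy'
    refine ⟨y', mem_closedBall_zero_iff.1 hy', ?_⟩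
    have h3 : Tendsto y (𝒰 : Filter ℕ) (𝓝[ball 0 1] y') := by
      refine tendsto_nhdsWithin_iff.2 ⟨hyl, Eventually.of_forall fun n => ?_⟩
      exact closedBall_subset_ball (mem_ball_zero_iff.1 hz) (mem_closedBall_zero_iff.2 (hy1 n))
    have h4 := hG.tendsto_comp ((expMap_diff s hp').continuousOn y' hyb) hyb h3
    refine tendsto_nhds_unique h4 ?_
    simp only [hy2, tendsto_const_nhds]
  · intro q hq
    have h5 := S_tendsto hL (fun n => logMap_diff (σ n) (h n).2.1) hq.1 (lt_of_le_of_lt hq.2 hq0)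
    exact le_of_tendsto_of_tendsto (h5.add_const _) (hs.const_mul ε)
      (Eventually.of_forall fun n => (h n).2.2.2.2 q hq)

/-! ### Chains of slit maps -/

lemma isPreconnected_annulus (ρ : ℝ) (hρ : 0 ≤ ρ) :
    IsPreconnected {z : ℂ | ρ < ‖z‖ ∧ ‖z‖ < 1} := by
  have e : {z : ℂ | ρ < ‖z‖ ∧ ‖z‖ < 1} =
      (fun x : ℝ × ℝ => (x.1 : ℂ) * Complex.exp (x.2 * I)) '' (Ioo ρ 1 ×ˢ univ) := by
    ext z
    constructor
    · rintro ⟨h1, h2⟩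
      exact ⟨(‖z‖, z.arg), ⟨⟨h1, h2⟩, mem_univ _⟩, Complex.norm_mul_exp_arg_mul_I z⟩
    · rintro ⟨⟨s, θ⟩, ⟨⟨h1, h2⟩, -⟩, rfl⟩
      simp only at h1 h2
      have : ‖(s : ℂ) * Complex.exp (θ * I)‖ = s := by
        rw [norm_mul, Complex.norm_exp_ofReal_mul_I, mul_one, Complex.norm_real,
          Real.norm_of_nonneg (by linarith)]
      simp only [mem_ofPred_eq, this]
      exact ⟨h1, h2⟩
  rw [e]
  exact (isPreconnected_Ioo.prod isPreconnected_univ).image _ (by fun_prop)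

/-- A bounded open set not contained in the compact set `k '' closedBall 0 ρ` has a boundary
point outside of that set. -/
lemma exists_boundary_point {k : ℂ → ℂ} (hk : DifferentiableOn ℂ k (ball 0 1))
    (hki : InjOn k (ball 0 1)) (hk0 : k 0 = 0) {ρ : ℝ} (hρ0 : 0 < ρ) (hρ1 : ρ < 1) {Ω : Set ℂ}
    (hΩ : IsOpen Ω) (hΩb : Ω ⊆ ball 0 1) (hne : (Ω \ k '' closedBall 0 ρ).Nonempty) :
    ∃ w, w ∉ k '' closedBall 0 ρ ∧ w ∉ Ω ∧ w ∈ closure Ω := by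
  by_contra hcon
  have hcon' : ∀ w, w ∉ k '' closedBall 0 ρ → w ∈ closure Ω → w ∈ Ω := by
    intro w h1 h2
    by_contra h3
    exact hcon ⟨w, h1, h3, h2⟩
  have hsub : closedBall (0 : ℂ) ρ ⊆ ball 0 1 := closedBall_subset_ball hρ1
  have hKc : IsCompact (k '' closedBall 0 ρ) :=
    (isCompact_closedBall 0 ρ).image_of_continuousOn (hk.continuousOn.mono hsub)
  have hKo : IsOpen (k '' ball 0 1) := isOpen_image_of_injOn isOpen_ball hk hki subset_rfl isOpen_ball
  set A : Set ℂ := k '' {z : ℂ | ρ < ‖z‖ ∧ ‖z‖ < 1} with hA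
  have hAsub : {z : ℂ | ρ < ‖z‖ ∧ ‖z‖ < 1} ⊆ ball 0 1 := fun z hz => mem_ball_zero_iff.2 hz.2
  have hAc : IsPreconnected A :=
    (isPreconnected_annulus ρ hρ0.le).image _ (hk.continuousOn.mono hAsub)
  have hAK : ∀ w ∈ A, w ∉ k '' closedBall 0 ρ := by
    rintro _ ⟨z, hz, rfl⟩ ⟨y, hy, hyz⟩
    rw [hki (hsub hy) (hAsub hz) hyz] at hy
    rw [mem_closedBall_zero_iff] at hy
    linarith [hz.1]
  have hKA : ∀ w ∈ k '' ball 0 1, w ∈ k '' closedBall 0 ρ ∨ w ∈ A := by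
    rintro _ ⟨z, hz, rfl⟩
    rcases le_or_gt ‖z‖ ρ with h | h
    · exact Or.inl ⟨z, mem_closedBall_zero_iff.2 h, rfl⟩
    · exact Or.inr ⟨z, ⟨h, mem_ball_zero_iff.1 hz⟩, rfl⟩
  have hKsub : k '' closedBall 0 ρ ⊆ k '' ball 0 1 := image_mono hsub
  rcases (A ∩ Ω).eq_empty_or_nonempty with he | he
  · have hcl : IsClosed (Ω \ k '' closedBall 0 ρ) := by
      refine isClosed_of_closure_subset fun w hw => ?_
      have hwK : w ∉ k '' closedBall 0 ρ := by
        intro hwK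
        obtain ⟨x, hx1, hx2⟩ := mem_closure_iff.1 hw _ hKo (hKsub hwK)
        rcases hKA x hx1 with h | h
        · exact hx2.2 h
        · exact (he ▸ (⟨h, hx2.1⟩ : x ∈ A ∩ Ω) : x ∈ (∅ : Set ℂ))
      exact ⟨hcon' w hwK (closure_mono sdiff_subset hw), hwK⟩
    have := IsClopen.eq_univ ⟨hcl, hΩ.sdiff hKc.isClosed⟩ hne
    have h0 : (0 : ℂ) ∈ Ω \ k '' closedBall 0 ρ := this ▸ mem_univ _
    exact h0.2 ⟨0, mem_closedBall_self hρ0.le, hk0⟩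
  · have hAΩ : A ⊆ Ω := hAc.subset_of_closure_inter_subset hΩ he
      fun w hw => hcon' w (hAK w hw.2) hw.1
    have hcl : IsClosed (Ω ∪ k '' closedBall 0 ρ) := by
      refine isClosed_of_closure_subset fun w hw => ?_
      rw [closure_union, hKc.isClosed.closure_eq] at hw
      by_cases hwK : w ∈ k '' closedBall 0 ρ
      · exact Or.inr hwK
      · exact Or.inl (hcon' w hwK (hw.resolve_right hwK))
    have hop : IsOpen (Ω ∪ k '' closedBall 0 ρ) := by
      have : Ω ∪ k '' closedBall 0 ρ = Ω ∪ k '' ball 0 1 := by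
        refine Subset.antisymm (union_subset_union_right _ hKsub) ?_
        rintro w (hw | hw)
        · exact Or.inl hw
        · exact (hKA w hw).elim Or.inr fun h => Or.inl (hAΩ h)
      rw [this]; exact hΩ.union hKo
    have := IsClopen.eq_univ ⟨hcl, hop⟩ (hne.mono (sdiff_subset.trans subset_union_left))
    apply NormedSpace.unbounded_univ ℂ ℂ
    rw [← this]
    exact (isBounded_ball.subset hΩb).union hKc.isBounded

/-- An open `Ω` not contained in `k '' closedBall 0 ρ` can be slit from its boundary without touching
that set: the slit joins a point `b`, close to a boundary point outside, to the nearest point `a` of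
the complement of `Ω`. -/
lemma exists_slit {k : ℂ → ℂ} (hk : DifferentiableOn ℂ k (ball 0 1))
    (hki : InjOn k (ball 0 1)) (hk0 : k 0 = 0) {ρ : ℝ} (hρ0 : 0 < ρ) (hρ1 : ρ < 1) {Ω : Set ℂ}
    (hΩ : IsOpen Ω) (hΩb : Ω ⊆ ball 0 1) (hne : (Ω \ k '' closedBall 0 ρ).Nonempty) :
    ∃ a b, a ∉ Ω ∧ ∀ t ∈ Ioc (0 : ℝ) 1, a + t * (b - a) ∈ Ω ∧
      a + t * (b - a) ∉ k '' closedBall 0 ρ := by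
  obtain ⟨w, hwK, hwΩ, hwc⟩ := exists_boundary_point hk hki hk0 hρ0 hρ1 hΩ hΩb hne
  have hKc : IsCompact (k '' closedBall 0 ρ) :=
    (isCompact_closedBall 0 ρ).image_of_continuousOn
      (hk.continuousOn.mono (closedBall_subset_ball hρ1))
  obtain ⟨δ, hδ, hδK⟩ := Metric.isOpen_iff.1 hKc.isClosed.isOpen_compl w hwK
  obtain ⟨b, hb, hbw⟩ := Metric.mem_closure_iff.1 hwc (δ / 2) (by linarith)
  obtain ⟨a, ha, hab⟩ := hΩ.isClosed_compl.exists_infDist_eq_dist ⟨w, hwΩ⟩ b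
  have h1 : dist b a ≤ dist b w := by rw [← hab]; exact infDist_le_dist_of_mem hwΩ
  have hba : 0 < dist b a := dist_pos.2 (by rintro rfl; exact ha hb)
  refine ⟨a, b, ha, fun t ht => ?_⟩
  have h2 : dist b (a + t * (b - a)) = (1 - t) * dist b a := by
    rw [Complex.dist_eq, Complex.dist_eq, show b - (a + t * (b - a)) = ((1 - t : ℝ) : ℂ) * (b - a) by
      push_cast; ring, norm_mul, Complex.norm_real, Real.norm_of_nonneg (by linarith [ht.2])]
  have h3 : dist b (a + t * (b - a)) < dist b a := by
    rw [h2]; nlinarith [ht.1]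
  constructor
  · by_contra hx
    have := infDist_le_dist_of_mem (x := b) (show a + t * (b - a) ∈ Ωᶜ from hx)
    linarith
  · refine hδK (mem_ball.2 ?_)
    have := dist_triangle_left (a + t * (b - a)) w b
    rw [dist_comm w b] at hbw
    linarith

/-- The image of an admissible map whose derivative at the origin exceeds that of
`u = k (ρ ·)` is not contained in `k '' closedBall 0 ρ`. -/
lemma image_not_subset {k : ℂ → ℂ} (hk : DifferentiableOn ℂ k (ball 0 1))
    (hki : InjOn k (ball 0 1)) (hk0 : k 0 = 0) {ρ : ℝ} (hρ0 : 0 < ρ) (hρ1 : ρ < 1) {G : ℂ → ℂ}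
    (hG : DifferentiableOn ℂ G (ball 0 1)) (hGi : InjOn G (ball 0 1)) (hG0 : G 0 = 0)
    (hd : ‖deriv (fun z => k (ρ * z)) 0‖ < ‖deriv G 0‖) :
    (G '' ball 0 1 \ k '' closedBall 0 ρ).Nonempty := by
  rw [sdiff_nonempty]
  intro hsub
  have hmem : ∀ z ∈ ball (0 : ℂ) 1, (ρ : ℂ) * z ∈ ball (0 : ℂ) 1 := by
    intro z hz
    rw [mem_ball_zero_iff] at hz ⊢
    rw [norm_mul, Complex.norm_real, Real.norm_of_nonneg hρ0.le]
    nlinarith [norm_nonneg z]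
  have hud : DifferentiableOn ℂ (fun z => k (ρ * z)) (ball 0 1) :=
    hk.comp (differentiableOn_id.const_mul _) hmem
  have hui : InjOn (fun z => k (ρ * z)) (ball 0 1) := by
    intro x hx y hy hxy
    have := hki (hmem x hx) (hmem y hy) hxy
    exact mul_left_cancel₀ (by exact_mod_cast hρ0.ne') this
  have hGo : IsOpen (G '' ball 0 1) := isOpen_image_of_injOn isOpen_ball hG hGi subset_rfl isOpen_ball
  have hVo : IsOpen (ball (0 : ℂ) 1 ∩ k ⁻¹' (G '' ball 0 1)) :=
    hk.continuousOn.isOpen_inter_preimage isOpen_ball hGo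
  have hV : ball (0 : ℂ) 1 ∩ k ⁻¹' (G '' ball 0 1) ⊆ ball 0 ρ := by
    rw [← interior_closedBall (0 : ℂ) hρ0.ne']
    refine interior_maximal ?_ hVo
    rintro z ⟨hz, hz2⟩
    obtain ⟨y, hy, hyz⟩ := hsub hz2
    rwa [← hki (closedBall_subset_ball hρ1 hy) hz hyz]
  obtain ⟨φ, -, -, -, -, -, h1, h2⟩ := subordination hG hGi hG0 hud hui (by simp [hk0]) (by
    intro w hw
    obtain ⟨y, hy, rfl⟩ := hsub hw
    have hyV := hV ⟨closedBall_subset_ball hρ1 hy, hw⟩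
    refine ⟨y / ρ, ?_, ?_⟩
    · rw [mem_ball_zero_iff] at hyV ⊢
      rw [norm_div, Complex.norm_real, Real.norm_of_nonneg hρ0.le, div_lt_one hρ0]
      exact hyV
    · have : (ρ : ℂ) ≠ 0 := by exact_mod_cast hρ0.ne'
      simp only
      rw [mul_div_cancel₀ _ this])
  rw [← h1, norm_mul] at hd
  have := mul_le_of_le_one_right (norm_nonneg (deriv (fun z => k (ρ * z)) 0)) h2
  linarith

lemma norm_logMap_le {σ s : ℝ} (h0 : 0 ≤ σ) (hs : σ ≤ s) {p : ℂ → ℂ} (hp : Cara p) {r : ℝ} (hr : r < 1)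
    {z : ℂ} (hz : ‖z‖ ≤ r) : ‖logMap σ p z‖ ≤ s * ((1 + r) / (1 - r) + 1) := by
  rw [logMap, norm_mul, norm_neg, Complex.norm_real, Real.norm_of_nonneg h0]
  have h1 := cara_norm hp hr hz
  have h2 : ‖p z - 1‖ ≤ (1 + r) / (1 - r) + 1 := (norm_sub_le _ _).trans (by simpa using h1)
  exact mul_le_mul hs h2 (norm_nonneg _) (h0.trans hs)

/-- An admissible map with parameter `σ < t` can be improved: a slit of its image disjoint from the
image of `u` is removed, and the step is so short that its error `C τ²` is below `ε τ`. -/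
lemma adm_step {k : ℂ → ℂ} (hk : DifferentiableOn ℂ k (ball 0 1))
    (hki : InjOn k (ball 0 1)) (hk0 : k 0 = 0) {ρ : ℝ} (hρ0 : 0 < ρ) (hρ1 : ρ < 1) {s : ℝ}
    (hs : deriv (fun z => k (ρ * z)) 0 = (Real.exp (-s) : ℝ))
    {ε q0 : ℝ} (hε : 0 < ε) (hq00 : 0 < q0) (hq0 : q0 < 1) {σ t : ℝ} (hσt : σ < t) (hts : t < s)
    {p : ℂ → ℂ} (h : Adm (fun z => k (ρ * z)) ε q0 σ p) :
    ∃ σ' p', σ < σ' ∧ σ' ≤ t ∧ Adm (fun z => k (ρ * z)) ε q0 σ' p' := by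
  obtain ⟨hσ, hp, hi, hu, hPhi⟩ := h
  have hG := expMap_diff σ hp
  have hmap := expMap_mapsTo hσ hp
  have hGo := isOpen_image_of_injOn isOpen_ball hG hi subset_rfl isOpen_ball
  have hmem : ∀ z ∈ ball (0 : ℂ) 1, (ρ : ℂ) * z ∈ closedBall (0 : ℂ) ρ := by
    intro z hz
    rw [mem_ball_zero_iff] at hz
    rw [mem_closedBall_zero_iff, norm_mul, Complex.norm_real, Real.norm_of_nonneg hρ0.le]
    nlinarith [norm_nonneg z]
  have hmem' : ∀ z ∈ ball (0 : ℂ) 1, (ρ : ℂ) * z ∈ ball (0 : ℂ) 1 := fun z hz =>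
    closedBall_subset_ball hρ1 (hmem z hz)
  have hud : DifferentiableOn ℂ (fun z => k (ρ * z)) (ball 0 1) :=
    hk.comp (differentiableOn_id.const_mul _) hmem'
  have hui : InjOn (fun z => k (ρ * z)) (ball 0 1) := by
    intro x hx y hy hxy
    have := hki (hmem' x hx) (hmem' y hy) hxy
    exact mul_left_cancel₀ (by exact_mod_cast hρ0.ne') this
  have hu0 : (fun z => k (ρ * z)) 0 = 0 := by simp [hk0]
  obtain ⟨a, b, ha, hab⟩ := exists_slit hk hki hk0 hρ0 hρ1 hGo hmap.image_subset
    (image_not_subset hk hki hk0 hρ0 hρ1 hG hi (expMap_zero σ p) (by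
      rw [hs, expMap_deriv σ hp, Complex.norm_real, Complex.norm_real,
        Real.norm_of_nonneg (Real.exp_pos _).le, Real.norm_of_nonneg (Real.exp_pos _).le,
        Real.exp_lt_exp]
      linarith))
  have hr : √q0 < 1 := by rw [Real.sqrt_lt' one_pos]; linarith
  obtain ⟨r2, hr1, hr2⟩ := exists_between hr
  obtain ⟨C, hC0, hC⟩ := step_inequality (B := s * ((1 + r2) / (1 - r2) + 1)) hq00 hr1 hr2
  obtain ⟨τ, hτ0, hτδ, P, hP, hPi, hPim⟩ := slit_step hG hi (expMap_zero σ p) (Real.exp_pos (-σ))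
    (expMap_deriv σ hp) hmap ha (fun t ht => (hab t ht).1)
    (δ := min (ε / (C + 1)) (min (t - σ) 1)) (by
      refine lt_min (by positivity) (lt_min (by linarith) one_pos))
  rw [lt_min_iff, lt_min_iff] at hτδ
  obtain ⟨hτε, hτt, hτ1⟩ := hτδ
  have hcara := compExp_cara hσ hτ0 hp hP
  have heq : ∀ z, expMap (σ + τ) (compExp σ p τ P) z = expMap σ p (expMap τ P z) :=
    expMap_compExp hσ hτ0 p P
  have hinj : InjOn (expMap (σ + τ) (compExp σ p τ P)) (ball 0 1) := by
    intro x hx y hy hxy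
    rw [heq, heq] at hxy
    exact hPi hx hy (hi (expMap_mapsTo hτ0.le hP hx) (expMap_mapsTo hτ0.le hP hy) hxy)
  refine ⟨σ + τ, compExp σ p τ P, by linarith, by linarith, by linarith, hcara, hinj, ?_, ?_⟩
  · obtain ⟨φ, hφd, -, hφm, hφ0, hφ, -⟩ := subordination hud hui hu0 (expMap_diff (σ + τ) hcara) hinj
      (expMap_zero _ _) (by
        rintro _ ⟨z, hz, rfl⟩
        obtain ⟨y, hy, hyz⟩ := hu z hz
        have hyb : y ∈ ball (0 : ℂ) 1 := mem_ball_zero_iff.2 (hy.trans_lt (mem_ball_zero_iff.1 hz))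
        obtain ⟨x, hx, hxz⟩ := hPim (k (ρ * z)) ⟨y, hyb, hyz⟩ (by
          intro t ht he
          refine (hab t ht).2 ?_
          rw [← he]
          exact mem_image_of_mem _ (hmem z hz))
        exact ⟨x, hx, (heq x).trans hxz⟩)
    intro z hz
    exact ⟨φ z, Complex.norm_le_norm_of_mapsTo_ball hφd
      (fun z hz => ball_subset_closedBall (hφm hz)) hφ0 (mem_ball_zero_iff.1 hz), hφ z hz⟩
  · intro q hq
    have hq1 : q < 1 := hq.2.trans_lt hq0
    have h1 := hC τ ⟨hτ0, hτ1.le⟩ (logMap σ p) P (logMap_diff σ hp) hP (fun z hz =>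
      norm_logMap_le hσ (by linarith) hp hr2 (mem_closedBall_zero_iff.1 hz)) q hq
    have hl := lam_mem hq.1 hq1
    have hlt : 0 < lam q * τ ∧ lam q * τ < 1 :=
      ⟨mul_pos hl.1 hτ0, by nlinarith [hl.1, hl.2]⟩
    have h2 := hPhi (q * (1 - lam q * τ)) ⟨mul_pos hq.1 (by linarith [hlt.2]), by
      nlinarith [hq.1, hq.2, hlt.1]⟩
    have h3 := gain_nonneg (h := logMap σ p) hP hq.1 hq1
    rw [← varLog_logMap hσ hτ0, Phi]
    rw [Phi] at h2
    have h4 : C * τ ≤ ε := by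
      rw [lt_div_iff₀ (by linarith)] at hτε
      nlinarith
    nlinarith [mul_nonneg hτ0.le h3, mul_le_mul_of_nonneg_right h4 hτ0.le]

/-- Admissible maps exist for every parameter below the one of `u`, since the supremum of the
parameters reached is attained and could otherwise be increased. -/
lemma adm_exists {k : ℂ → ℂ} (hk : DifferentiableOn ℂ k (ball 0 1))
    (hki : InjOn k (ball 0 1)) (hk0 : k 0 = 0) {ρ : ℝ} (hρ0 : 0 < ρ) (hρ1 : ρ < 1)
    (hk1 : MapsTo k (closedBall 0 ρ) (ball 0 1)) {s : ℝ}
    (hs : deriv (fun z => k (ρ * z)) 0 = (Real.exp (-s) : ℝ))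
    {ε q0 : ℝ} (hε : 0 < ε) (hq00 : 0 < q0) (hq0 : q0 < 1) {t : ℝ} (ht0 : 0 ≤ t) (hts : t < s) :
    ∃ p, Adm (fun z => k (ρ * z)) ε q0 t p := by
  set T : Set ℝ := {σ | σ ≤ t ∧ ∃ p, Adm (fun z => k (ρ * z)) ε q0 σ p} with hT
  have hmem : ∀ z ∈ ball (0 : ℂ) 1, (ρ : ℂ) * z ∈ closedBall (0 : ℂ) ρ := by
    intro z hz
    rw [mem_ball_zero_iff] at hz
    rw [mem_closedBall_zero_iff, norm_mul, Complex.norm_real, Real.norm_of_nonneg hρ0.le]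
    nlinarith [norm_nonneg z]
  have hud : DifferentiableOn ℂ (fun z => k (ρ * z)) (ball 0 1) :=
    hk.comp (differentiableOn_id.const_mul _) fun z hz => closedBall_subset_ball hρ1 (hmem z hz)
  have hne : T.Nonempty := ⟨0, ht0, _, adm_zero (fun z hz => hk1 (hmem z hz)) hud (by simp [hk0]) ε hq0⟩
  have hbdd : BddAbove T := ⟨t, fun x hx => hx.1⟩
  obtain ⟨σ, -, hσ, hσT⟩ := exists_seq_tendsto_sSup hne hbdd
  choose h1 p hp using hσT
  obtain ⟨p', hp'⟩ := adm_limit hq0 hp hσ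
  have hle : sSup T ≤ t := csSup_le hne fun x hx => hx.1
  rcases hle.lt_or_eq with hlt | heq
  · obtain ⟨σ', q, h2, h3, h4⟩ := adm_step hk hki hk0 hρ0 hρ1 hs hε hq00 hq0 hlt hts hp'
    exact absurd (le_csSup hbdd ⟨h3, q, h4⟩) (not_le.2 h2)
  · exact ⟨p', heq ▸ hp'⟩

/-! ### The inequality -/

lemma eqOn_of_exp_eq {a b : ℂ → ℂ} (ha : DifferentiableOn ℂ a (ball 0 1))
    (hb : DifferentiableOn ℂ b (ball 0 1)) (h0 : a 0 = b 0)
    (h : ∀ z ∈ ball (0 : ℂ) 1, Complex.exp (a z) = Complex.exp (b z)) :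
    ∀ z ∈ ball (0 : ℂ) 1, a z = b z := by
  refine isOpen_ball.eqOn_of_deriv_eq (convex_ball _ _).isPreconnected ha hb ?_ zero_mem_disc h0
  intro z hz
  have hz' := isOpen_ball.mem_nhds hz
  have h1 := (ha.differentiableAt hz').hasDerivAt.cexp
  have h2 := (hb.differentiableAt hz').hasDerivAt.cexp
  have h3 : (fun z => Complex.exp (a z)) =ᶠ[𝓝 z] fun z => Complex.exp (b z) := by
    filter_upwards [hz'] with y hy using h y hy
  have h4 := (h1.congr_of_eventuallyEq h3.symm).unique h2
  rw [h z hz] at h4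
  exact mul_left_cancel₀ (Complex.exp_ne_zero _) h4

/-- `g` is the normalized logarithm of `f z / z` for a univalent `f` in the class `𝒮`, which is
recovered as `f z = z * exp (g z)`. -/
def ULog (g : ℂ → ℂ) : Prop :=
  DifferentiableOn ℂ g (ball 0 1) ∧ g 0 = 0 ∧ InjOn (fun z => z * Complex.exp (g z)) (ball 0 1)

lemma expMap_eq_logMap (σ : ℝ) (p : ℂ → ℂ) (z : ℂ) :
    expMap σ p z = z * Complex.exp (logMap σ p z) * (Real.exp (-σ) : ℝ) := by
  rw [expMap, logMap, Complex.ofReal_exp, mul_assoc, ← Complex.exp_add]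
  congr 2
  push_cast; ring

lemma uLog_logMap {σ : ℝ} {p : ℂ → ℂ} (hp : Cara p) (hi : InjOn (expMap σ p) (ball 0 1)) :
    ULog (logMap σ p) := by
  refine ⟨logMap_diff σ hp, by simp [logMap, hp.2.1], fun x hx y hy hxy => hi hx hy ?_⟩
  simp only at hxy
  rw [expMap_eq_logMap, expMap_eq_logMap, hxy]

lemma scale_mem {ρ : ℝ} (hρ0 : 0 < ρ) (hρ1 : ρ ≤ 1) {z : ℂ} (hz : z ∈ ball (0 : ℂ) 1) :
    (ρ : ℂ) * z ∈ ball (0 : ℂ) 1 := by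
  rw [mem_ball_zero_iff] at hz ⊢
  rw [norm_mul, Complex.norm_real, Real.norm_of_nonneg hρ0.le]
  nlinarith [norm_nonneg z]

/-- Every dilation `g (ρ ·)` is obtained by a variation of small size `τ` from a function for which
the inequality is already known up to an arbitrarily small error. -/
lemma chain_final {g : ℂ → ℂ} (hg : ULog g) {ρ : ℝ} (hρ0 : 0 < ρ) (hρ1 : ρ < 1) :
    ∃ s : ℝ, 1 / 2 ≤ s ∧ ∀ ε > 0, ∀ q0 ∈ Ioo (0 : ℝ) 1, ∀ τ ∈ Ioc (0 : ℝ) s, ∃ σ p P,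
      0 ≤ σ ∧ σ ≤ s ∧ Cara p ∧ InjOn (expMap σ p) (ball 0 1) ∧ Cara P ∧
      (∀ z ∈ ball (0 : ℂ) 1, g (ρ * z) = varLog (logMap σ p) τ P z) ∧
      ∀ q ∈ Ioc (0 : ℝ) q0, Phi (logMap σ p) q ≤ ε * σ := by
  obtain ⟨hgd, hg0, hgi⟩ := hg
  have hfd : DifferentiableOn ℂ (fun z => z * Complex.exp (g z)) (ball 0 1) :=
    differentiableOn_id.mul hgd.cexp
  obtain ⟨M, hM⟩ := (isCompact_closedBall (0 : ℂ) ρ).exists_bound_of_continuousOn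
    (hfd.continuousOn.mono (closedBall_subset_ball hρ1))
  set R : ℝ := max M 1 + 1 with hR
  have hR2 : 2 ≤ R := by have := le_max_right M 1; linarith
  have hRM : M < R := by have := le_max_left M 1; linarith
  have hR0 : (R : ℂ) ≠ 0 := by exact_mod_cast (show R ≠ 0 by linarith)
  have hρc : (ρ : ℂ) ≠ 0 := by exact_mod_cast hρ0.ne'
  set k : ℂ → ℂ := fun z => z * Complex.exp (g z) / R with hk
  have hkd : DifferentiableOn ℂ k (ball 0 1) := hfd.div_const _
  have hki : InjOn k (ball 0 1) := by
    intro x hx y hy hxy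
    exact hgi hx hy ((div_left_inj' hR0).1 hxy)
  have hk0 : k 0 = 0 := by simp [hk]
  have hk1 : MapsTo k (closedBall 0 ρ) (ball 0 1) := by
    intro z hz
    rw [mem_ball_zero_iff, hk]
    simp only
    rw [norm_div, Complex.norm_real, Real.norm_of_nonneg (by linarith), div_lt_one (by linarith)]
    exact (hM z hz).trans_lt hRM
  set s : ℝ := Real.log (R / ρ) with hs
  have hexp : Real.exp (-s) = ρ / R := by
    rw [Real.exp_neg, hs, Real.exp_log (by positivity), inv_div]
  have hsh : 1 / 2 ≤ s := by
    have h1 : Real.log 2 ≤ s := Real.log_le_log (by norm_num) (by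
      rw [le_div_iff₀ hρ0]; nlinarith)
    linarith [Real.log_two_gt_d9]
  have hkder : HasDerivAt (fun z => k (ρ * z)) (ρ / R) 0 := by
    have h1 : HasDerivAt g (deriv g 0) ((ρ : ℂ) * 0) := by
      rw [mul_zero]
      exact (hgd.differentiableAt (isOpen_ball.mem_nhds zero_mem_disc)).hasDerivAt
    have h2 : HasDerivAt (fun z : ℂ => (ρ : ℂ) * z) (ρ * 1) 0 := (hasDerivAt_id' _).const_mul _
    have h3 : HasDerivAt (fun z => g (ρ * z)) (deriv g 0 * (ρ * 1)) 0 :=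
      HasDerivAt.comp (h₂ := g) (0 : ℂ) h1 h2
    have h4 := (h2.fun_mul h3.cexp).div_const (R : ℂ)
    exact h4.congr_deriv (by simp [hg0])
  have hder : deriv (fun z => k (ρ * z)) 0 = (Real.exp (-s) : ℝ) := by
    rw [hkder.deriv, hexp]; push_cast; rfl
  refine ⟨s, hsh, fun ε hε q0 hq0 τ hτ => ?_⟩
  obtain ⟨p, hp⟩ := adm_exists hkd hki hk0 hρ0 hρ1 hk1 hder hε hq0.1 hq0.2 (t := s - τ)
    (by linarith [hτ.2]) (by linarith [hτ.1])
  obtain ⟨hσ, hpc, hpi, hpu, hpP⟩ := hp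
  have hud : DifferentiableOn ℂ (fun z => k (ρ * z)) (ball 0 1) :=
    hkd.comp (differentiableOn_id.const_mul _) fun z hz => scale_mem hρ0 hρ1.le hz
  have hui : InjOn (fun z => k (ρ * z)) (ball 0 1) := by
    intro x hx y hy hxy
    exact mul_left_cancel₀ hρc (hki (scale_mem hρ0 hρ1.le hx) (scale_mem hρ0 hρ1.le hy) hxy)
  obtain ⟨φ, hφd, hφi, hφm, hφ0, hφ, hφ1, -⟩ := subordination hud hui (by simp [hk0])
    (expMap_diff (s - τ) hpc) hpi (expMap_zero _ _) (by
      rintro _ ⟨z, hz, rfl⟩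
      obtain ⟨y, hy, hyz⟩ := hpu z hz
      exact ⟨y, mem_ball_zero_iff.2 (hy.trans_lt (mem_ball_zero_iff.1 hz)), hyz⟩)
  obtain ⟨P, hP, hPφ⟩ := exists_expMap hφd hφi hφm hφ0 hτ.1 (by
    rw [hder, expMap_deriv _ hpc] at hφ1
    have h1 : ((Real.exp (-(s - τ)) : ℝ) : ℂ) ≠ 0 := by exact_mod_cast (Real.exp_pos _).ne'
    apply mul_left_cancel₀ h1
    rw [hφ1, ← Complex.ofReal_mul, ← Real.exp_add]
    congr 2; ring)
  refine ⟨s - τ, p, P, hσ, by linarith [hτ.1], hpc, hpi, hP, ?_, hpP⟩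
  have hcomp := compExp_cara hσ hτ.1 hpc hP
  refine eqOn_of_exp_eq (hgd.comp (differentiableOn_id.const_mul _)
    fun z hz => scale_mem hρ0 hρ1.le hz) ?_ ?_ ?_
  · rw [varLog_logMap hσ hτ.1]; exact logMap_diff _ hcomp
  · rw [varLog_logMap hσ hτ.1]
    simp [hg0, logMap, hcomp.2.1]
  · intro z hz
    rw [varLog_logMap hσ hτ.1]
    rcases eq_or_ne z 0 with rfl | hz0
    · simp [hg0, logMap, hcomp.2.1]
    have h1 := hφ z hz
    rw [hPφ z hz, ← expMap_compExp hσ hτ.1, expMap_eq_logMap] at h1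
    rw [show s - τ + τ = s by ring] at h1 ⊢
    rw [hexp] at h1
    simp only [hk] at h1
    push_cast at h1
    have h2 : z * (ρ / R : ℂ) ≠ 0 := mul_ne_zero hz0 (div_ne_zero hρc hR0)
    apply mul_left_cancel₀ h2
    linear_combination -h1

lemma S_scale (g : ℂ → ℂ) {ρ q : ℝ} (hρ : 0 ≤ ρ) :
    S (fun z => g (ρ * z)) q = S g (ρ ^ 2 * q) := by
  rw [S, S, Real.sqrt_mul (sq_nonneg ρ), Real.sqrt_sq hρ, circleAverage, circleAverage]
  congr 1
  refine intervalIntegral.integral_congr fun θ _ => ?_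
  have h1 : ∀ z, deriv (fun z => g (ρ * z)) z = ρ * deriv g (ρ * z) := by
    intro z
    rw [deriv_comp_mul_left, smul_eq_mul]
  have h2 : circleMap 0 (ρ * √q) θ = ρ * circleMap 0 (√q) θ := by
    simp [circleMap]; ring
  simp only [h1, h2]
  congr 3
  ring_nf

lemma S_congr {a b : ℂ → ℂ} (h : ∀ z ∈ ball (0 : ℂ) 1, a z = b z) {q : ℝ} (h0 : 0 < q) (h1 : q < 1) :
    S a q = S b q := by
  obtain ⟨hs0, hs1⟩ := sqrt_mem h0 h1
  refine circleAverage_congr_sphere fun z hz => ?_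
  rw [abs_of_pos hs0] at hz
  have hz' := sphere_subset_disc hs1 hz
  have : a =ᶠ[𝓝 z] b := by filter_upwards [isOpen_ball.mem_nhds hz'] with y hy using h y hy
  simp only [this.deriv_eq, h z hz']

/-- The mean of `‖z g'‖²` on the circle of radius `√q`, which controls the modulus of continuity of `S`. -/
noncomputable def Nmean (g : ℂ → ℂ) (q : ℝ) : ℝ := circleAverage (fun z => ‖z * deriv g z‖ ^ 2) 0 (√q)

lemma le_zero_of_forall_small {a K c : ℝ} (hc : 0 < c) (h : ∀ τ, 0 < τ → τ ≤ c → a ≤ K * τ) : a ≤ 0 := by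
  by_contra ha
  push Not at ha
  have hK : 0 < |K| + 1 := by positivity
  set τ := min c (a / (2 * (|K| + 1))) with hτ
  have hτ0 : 0 < τ := lt_min hc (by positivity)
  have h1 := h τ hτ0 (min_le_left _ _)
  have h2 : τ * (2 * (|K| + 1)) ≤ a := by
    have := min_le_right c (a / (2 * (|K| + 1)))
    rwa [← hτ, le_div_iff₀ (by positivity)] at this
  nlinarith [le_abs_self K, mul_le_mul_of_nonneg_right (le_abs_self K) hτ0.le]

/-- The inequality for the dilation `g (ρ ·)`: the step inequality is applied to the last step of the
chain, and its size `τ`, which also bounds the error of the chain, tends to `0`. -/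
lemma phi_scale_nonpos {g : ℂ → ℂ} (hg : ULog g) {ρ : ℝ} (hρ0 : 0 < ρ) (hρ1 : ρ < 1) {q : ℝ}
    (h0 : 0 < q) (h1 : q < 1) : S g (ρ ^ 2 * q) + 4 * Real.log (1 - q) ≤ 0 := by
  obtain ⟨s, hs, H⟩ := chain_final hg hρ0 hρ1
  obtain ⟨r2, hr1, hr2⟩ := exists_between (sqrt_mem h0 h1).2
  obtain ⟨C, hC0, hC⟩ := step_inequality (B := s * ((1 + r2) / (1 - r2) + 1)) h0 hr1 hr2
  refine le_zero_of_forall_small (K := s + C) (c := 1 / 2) (by norm_num) fun τ hτ0 hτ1 => ?_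
  obtain ⟨σ, p, P, hσ, hσs, hp, hpi, hP, he, hPhi⟩ := H τ hτ0 q ⟨h0, h1⟩ τ ⟨hτ0, by linarith⟩
  have h2 := hC τ ⟨hτ0, by linarith⟩ (logMap σ p) P (logMap_diff σ hp) hP (fun z hz =>
    norm_logMap_le hσ hσs hp hr2 (mem_closedBall_zero_iff.1 hz)) q ⟨h0, le_rfl⟩
  rw [← S_congr he h0 h1, S_scale g hρ0.le] at h2
  have hl := lam_mem h0 h1
  have hlt : 0 < lam q * τ ∧ lam q * τ < 1 := ⟨mul_pos hl.1 hτ0, by nlinarith [hl.1, hl.2]⟩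
  have h3 := hPhi (q * (1 - lam q * τ)) ⟨mul_pos h0 (by linarith [hlt.2]), by nlinarith [hlt.1]⟩
  have h4 := gain_nonneg (h := logMap σ p) hP h0 h1
  rw [Phi] at h3
  nlinarith [mul_nonneg hτ0.le h4, mul_le_mul_of_nonneg_left hσs hτ0.le,
    mul_nonneg (mul_nonneg hC0 hτ0.le) (show (0 : ℝ) ≤ 1 - τ by linarith)]

/-- The inequality for all of `𝒮`, as the limit `ρ → 1`. -/
lemma phi_nonpos {g : ℂ → ℂ} (hg : ULog g) {q : ℝ} (h0 : 0 < q) (h1 : q < 1) : Phi g q ≤ 0 := by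
  refine le_zero_of_forall_small (K := Nmean g q) (c := 1 / 2) (by norm_num) fun x hx0 hx1 => ?_
  have h2 := S_bernoulli hg.1 h0 h1 hx0.le (show x < 1 by linarith)
  have h3 := phi_scale_nonpos hg (ρ := √(1 - x)) (Real.sqrt_pos.2 (by linarith))
    (by rw [Real.sqrt_lt' one_pos]; linarith) h0 h1
  rw [Real.sq_sqrt (by linarith), mul_comm (1 - x)] at h3
  rw [Phi]
  change S g q - x * Nmean g q ≤ _ at h2
  linarith

/-! ### The case of equality -/

/-- A bound on compact sets that is uniform over the class `𝒮`, derived from the inequality itself. -/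
lemma uLog_bound {g : ℂ → ℂ} (hg : ULog g) {r : ℝ} (h0 : 0 < r) (h1 : r < 1) {z : ℂ} (hz : ‖z‖ ≤ r) :
    ‖g z‖ ≤ (-4 * Real.log (1 - r) + (1 - r)⁻¹) / 2 := by
  have hzb : z ∈ ball (0 : ℂ) 1 := mem_ball_zero_iff.2 (hz.trans_lt h1)
  have hS := S_hasSum hg.1 h0 h1
  have hsum := (hS.add (hasSum_geometric_of_lt_one h0.le h1)).div_const 2
  have hle := tsum_of_norm_bounded (f := fun k => cf g k * z ^ k) hsum (by
    intro k
    rw [norm_mul, norm_pow]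
    have hzk : ‖z‖ ^ k ≤ r ^ k := pow_le_pow_left₀ (norm_nonneg _) hz k
    have hrk : 0 < r ^ k := pow_pos h0 k
    rcases Nat.eq_zero_or_pos k with rfl | hk
    · simp [cf, hg.2.1]
    have hk1 : (1 : ℝ) ≤ k := by exact_mod_cast hk
    have h2 : ‖cf g k‖ ≤ (k * ‖cf g k‖ ^ 2 + 1) / 2 := by
      nlinarith [sq_nonneg (‖cf g k‖ - 1), sq_nonneg ‖cf g k‖]
    calc ‖cf g k‖ * ‖z‖ ^ k ≤ (k * ‖cf g k‖ ^ 2 + 1) / 2 * r ^ k :=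
          mul_le_mul h2 hzk (by positivity) (by positivity)
      _ = _ := by ring)
  rw [(cf_hasSum hg.1 hzb).tsum_eq] at hle
  have h3 := phi_nonpos hg h0 h1
  rw [Phi] at h3
  linarith

/-- If equality holds for `g`, then a Carathéodory function makes the first-order loss vanish: it is
a limit of the last steps of the chains for `g (ρ ·)`, `ρ → 1`, along which the loss is `O(τ)`. -/
lemma exists_gain_eq_zero {g : ℂ → ℂ} (hg : ULog g) {q : ℝ} (h0 : 0 < q) (h1 : q < 1)
    (heq : Phi g q = 0) : ∃ P, Cara P ∧ gain g P q = 0 := by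
  obtain ⟨hs0, hs1⟩ := sqrt_mem h0 h1
  obtain ⟨r2, hr1, hr2⟩ := exists_between hs1
  have hr0 : 0 < r2 := hs0.trans hr1
  obtain ⟨C, hC0, hC⟩ := step_inequality (B := (-4 * Real.log (1 - r2) + (1 - r2)⁻¹) / 2) h0 hr1 hr2
  -- For every small `τ` the dilation with `ρ ^ 2 = 1 - τ ^ 2` costs only `O (τ ^ 2)`.
  have key : ∀ τ : ℝ, 0 < τ → τ ≤ 1 / 2 → ∃ h P, ULog h ∧ Cara P ∧
      gain h P q ≤ (1 + C + Nmean g q) * τ ∧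
      ∀ z ∈ ball (0 : ℂ) 1, g ((√(1 - τ ^ 2) : ℝ) * z) = varLog h τ P z := by
    intro τ hτ0 hτ1
    have hτ2 : 0 < 1 - τ ^ 2 := by nlinarith
    have hρ0 : 0 < √(1 - τ ^ 2) := Real.sqrt_pos.2 hτ2
    obtain ⟨s, hs, H⟩ := chain_final hg hρ0 (by rw [Real.sqrt_lt' one_pos]; nlinarith)
    have hs' : 0 < s := by linarith
    obtain ⟨σ, p, P, hσ, hσs, hp, hpi, hP, he, hPhi⟩ :=
      H (τ ^ 2 / s) (by positivity) q ⟨h0, h1⟩ τ ⟨hτ0, by linarith⟩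
    have hU := uLog_logMap hp hpi
    refine ⟨logMap σ p, P, hU, hP, ?_, he⟩
    have h2 := hC τ ⟨hτ0, by linarith⟩ (logMap σ p) P hU.1 hP (fun z hz =>
      uLog_bound hU hr0 hr2 (mem_closedBall_zero_iff.1 hz)) q ⟨h0, le_rfl⟩
    rw [← S_congr he h0 h1, S_scale g hρ0.le, Real.sq_sqrt hτ2.le, mul_comm (1 - τ ^ 2)] at h2
    have hl := lam_mem h0 h1
    have hlt : 0 < lam q * τ ∧ lam q * τ < 1 := ⟨mul_pos hl.1 hτ0, by nlinarith [hl.1, hl.2]⟩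
    have h3 := hPhi (q * (1 - lam q * τ)) ⟨mul_pos h0 (by linarith [hlt.2]), by nlinarith [hlt.1]⟩
    have h4 : τ ^ 2 / s * σ ≤ τ ^ 2 := by
      rw [div_mul_eq_mul_div, div_le_iff₀ hs']
      exact mul_le_mul_of_nonneg_left hσs (sq_nonneg _)
    have h5 := S_bernoulli hg.1 h0 h1 (sq_nonneg τ) (show τ ^ 2 < 1 by linarith)
    change S g q - τ ^ 2 * Nmean g q ≤ _ at h5
    rw [Phi] at h3 heq
    have h6 : τ * gain (logMap σ p) P q ≤ τ * ((1 + C + Nmean g q) * τ) := by nlinarith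
    exact le_of_mul_le_mul_left h6 hτ0
  set t : ℕ → ℝ := fun n => 1 / ((n : ℝ) + 2) with ht
  have ht0 : ∀ n, 0 < t n := fun n => by simp only [ht]; positivity
  have ht1 : ∀ n, t n ≤ 1 / 2 := fun n => by
    simp only [ht]
    exact one_div_le_one_div_of_le two_pos (by linarith [n.cast_nonneg (α := ℝ)])
  have htl : Tendsto t atTop (𝓝 0) := by
    have := (tendsto_one_div_add_atTop_nhds_zero_nat (𝕜 := ℝ)).comp (tendsto_add_atTop_nat 1)
    refine this.congr fun n => ?_
    simp only [ht, Function.comp]; push_cast; ring_nf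
  choose h P hU hP hgain he using fun n => key (t n) (ht0 n) (ht1 n)
  set 𝒰 : Ultrafilter ℕ := Filter.hyperfilter ℕ
  have h𝒰 : (𝒰 : Filter ℕ) ≤ atTop := by
    rw [← Nat.cofinite_eq_atTop]; exact Filter.hyperfilter_le_cofinite
  replace htl := htl.mono_left h𝒰
  obtain ⟨P', hP', hPl⟩ := cara_compact 𝒰 hP
  obtain ⟨h', hh'⟩ := montel 𝒰 isOpen_ball (fun n => (hU n).1) (fun z hz => by
    rw [mem_ball_zero_iff] at hz
    refine ⟨(1 - ‖z‖) / 2, by linarith, _, fun n w hw => uLog_bound (r := (1 + ‖z‖) / 2) (hU n)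
      (by linarith [norm_nonneg z]) (by linarith) ?_⟩
    have := norm_le_norm_add_norm_sub' w z
    rw [mem_ball_iff_norm] at hw
    linarith)
  have hh'g : ∀ z ∈ ball (0 : ℂ) 1, h' z = g z := by
    intro z hz
    have hz1 := mem_ball_zero_iff.1 hz
    obtain ⟨r0, hr0a, hr0b⟩ := exists_between hz1
    obtain ⟨r3, hr3a, hr3b⟩ := exists_between hr0b
    have hr00 : 0 < r0 := (norm_nonneg z).trans_lt hr0a
    obtain ⟨C', -, hC'⟩ := varLog_estimates (B := (-4 * Real.log (1 - r3) + (1 - r3)⁻¹) / 2)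
      hr00 hr3a hr3b
    have e1 : ∀ n, ‖g ((√(1 - t n ^ 2) : ℝ) * z) - h n z‖ ≤ C' * t n := by
      intro n
      rw [he n z hz]
      exact (hC' (t n) ⟨ht0 n, by linarith [ht1 n]⟩ (h n) (P n) (hU n).1 (hP n) (fun w hw =>
        uLog_bound (hU n) (hr00.trans hr3a) hr3b (mem_closedBall_zero_iff.1 hw)) z
        (mem_closedBall_zero_iff.2 hr0a.le)).1
    have e2 : Tendsto (fun n => g ((√(1 - t n ^ 2) : ℝ) * z) - h n z) 𝒰 (𝓝 0) :=
      squeeze_zero_norm e1 (by simpa using htl.const_mul C')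
    have e3 : Tendsto (fun n => g ((√(1 - t n ^ 2) : ℝ) * z)) 𝒰 (𝓝 (g z)) := by
      have c1 : ContinuousAt g z := (hg.1.differentiableAt (isOpen_ball.mem_nhds hz)).continuousAt
      have c2 : Tendsto (fun x : ℝ => ((√(1 - x ^ 2) : ℝ) : ℂ) * z) (𝓝 0) (𝓝 z) := by
        have : Continuous fun x : ℝ => ((√(1 - x ^ 2) : ℝ) : ℂ) * z := by fun_prop
        simpa using this.tendsto 0
      exact c1.tendsto.comp (c2.comp htl)
    have e4 : Tendsto (fun n => h n z) 𝒰 (𝓝 (g z)) := by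
      simpa using e3.sub e2
    exact tendsto_nhds_unique (hh'.tendsto_at hz) e4
  have hlim := gain_tendsto (hh'.congr_right hh'g) (fun n => (hU n).1) hPl (fun n => (hP n).1) h0 h1
  refine ⟨P', hP', le_antisymm ?_ (gain_nonneg hP' h0 h1)⟩
  refine le_of_tendsto_of_tendsto hlim (g := fun n => (1 + C + Nmean g q) * t n) ?_
    (Eventually.of_forall hgain)
  simpa using htl.const_mul (1 + C + Nmean g q)

lemma eq_zero_of_circleAverage_eq_zero {F : ℂ → ℝ} {r : ℝ} (hr0 : 0 < r)
    (hF : ContinuousOn F (sphere 0 r)) (hnn : ∀ z ∈ sphere (0 : ℂ) r, 0 ≤ F z)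
    (h : circleAverage F 0 r = 0) : ∀ z ∈ sphere (0 : ℂ) r, F z = 0 := by
  intro z hz
  by_contra hne
  have hmem : ∀ θ, circleMap 0 r θ ∈ sphere (0 : ℂ) r := circleMap_mem_sphere 0 hr0.le
  have hz' : z ∈ circleMap 0 r '' Ioc 0 (2 * π) := by
    rw [image_circleMap_Ioc, abs_of_pos hr0]; exact hz
  obtain ⟨θ, hθ, rfl⟩ := hz'
  have hpos : 0 < ∫ θ in (0)..(2 * π), F (circleMap 0 r θ) := by
    refine intervalIntegral.integral_pos Real.two_pi_pos ?_ (fun θ _ => hnn _ (hmem θ))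
      ⟨θ, ⟨hθ.1.le, hθ.2⟩, (hnn _ hz).lt_of_ne' hne⟩
    exact (hF.comp (continuous_circleMap 0 r).continuousOn fun θ _ => hmem θ)
  rw [circleAverage, smul_eq_mul, mul_eq_zero] at h
  rcases h with h | h
  · have := Real.pi_pos
    exact absurd h (by positivity)
  · exact hpos.ne' h

set_option maxHeartbeats 1000000 in
/-- Vanishing of the first-order loss forces `f z = z * exp (g z)` to be a Koebe function. -/
lemma koebe_of_gain_eq_zero {g P : ℂ → ℂ} (hg : ULog g) (hP : Cara P) {q : ℝ} (h0 : 0 < q) (h1 : q < 1)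
    (hgain : gain g P q = 0) :
    ∃ κ : ℂ, ‖κ‖ = 1 ∧ ∀ z ∈ ball (0 : ℂ) 1, Complex.exp (g z) * (1 - κ * z) ^ 2 = 1 := by
  obtain ⟨hs0, hs1⟩ := sqrt_mem h0 h1
  have hl := (lam_mem h0 h1).1
  have hdg : DifferentiableOn ℂ (deriv g) (ball 0 1) := hg.1.deriv isOpen_ball
  have hH : DifferentiableOn ℂ (fun z => 1 + z * deriv g z) (ball 0 1) :=
    (differentiableOn_id.mul hdg).const_add 1
  have hFc : ContinuousOn (fun z => gainFn (lam q) (P z) (1 + z * deriv g z)) (sphere 0 √q) := by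
    have c1 : ContinuousOn P (sphere 0 √q) := hP.1.continuousOn.mono (sphere_subset_disc hs1)
    have c2 : ContinuousOn (fun z => 1 + z * deriv g z) (sphere 0 √q) :=
      hH.continuousOn.mono (sphere_subset_disc hs1)
    have c3 : ContinuousOn (fun z => (P z).re) (sphere 0 √q) :=
      Complex.continuous_re.comp_continuousOn c1
    unfold gainFn
    exact (continuousOn_const.mul (((c1.mul c2).sub continuousOn_const).norm.pow 2)).add
      (((continuousOn_const.mul c3).sub (continuousOn_const.mul ((c1.norm.pow 2).add
        continuousOn_const))).mul (c2.norm.pow 2))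
  have hz := eq_zero_of_circleAverage_eq_zero hs0 hFc
    (fun z hz => gainFn_nonneg hP h0 h1 _ hz) hgain
  have hsph : ∀ z ∈ sphere (0 : ℂ) √q, P z * (1 + z * deriv g z) = 1 ∧
      2 * (P z).re = lam q * (‖P z‖ ^ 2 + 1) := by
    intro z hzs
    have e := hz z hzs
    have h2 := cara_re hP (sphere_subset_disc hs1 hzs)
    rw [mem_sphere_zero_iff_norm] at hzs
    rw [hzs, Real.sq_sqrt h0.le] at h2
    have h3 : 0 ≤ 2 * (P z).re - lam q * (‖P z‖ ^ 2 + 1) := sub_nonneg.2 h2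
    rw [gainFn] at e
    have h4 : lam q * ‖P z * (1 + z * deriv g z) - 1‖ ^ 2 = 0 :=
      le_antisymm (by nlinarith [mul_nonneg h3 (sq_nonneg ‖1 + z * deriv g z‖)]) (by positivity)
    have h5 : P z * (1 + z * deriv g z) = 1 := by
      have := (mul_eq_zero.1 h4).resolve_left hl.ne'
      rw [sq_eq_zero_iff, norm_eq_zero, sub_eq_zero] at this
      exact this
    refine ⟨h5, ?_⟩
    rw [h4, zero_add, mul_eq_zero] at e
    rcases e with e | e
    · linarith
    · rw [sq_eq_zero_iff, norm_eq_zero] at e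
      rw [e, mul_zero] at h5
      exact absurd h5 zero_ne_one
  have hPH : ∀ z ∈ ball (0 : ℂ) 1, P z * (1 + z * deriv g z) = 1 := by
    have hd : DifferentiableOn ℂ (fun z => P z * (1 + z * deriv g z)) (ball 0 1) := hP.1.mul hH
    have hsub : closedBall (0 : ℂ) √q ⊆ ball 0 1 := closedBall_subset_ball hs1
    have hE : EqOn (fun z => P z * (1 + z * deriv g z)) (fun _ => 1) (closure (ball 0 √q)) := by
      refine Complex.eqOn_closure_of_eqOn_frontier isBounded_ball
        (DifferentiableOn.diffContOnCl ?_) diffContOnCl_const ?_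
      · rw [closure_ball _ hs0.ne']; exact hd.mono hsub
      · rw [frontier_ball _ hs0.ne']; exact fun z hz => (hsph z hz).1
    have := (hd.analyticOnNhd isOpen_ball).eqOn_of_preconnected_of_eventuallyEq
      (analyticOnNhd_const (v := (1 : ℂ))) (convex_ball _ _).isPreconnected zero_mem_disc (by
        filter_upwards [ball_mem_nhds (0 : ℂ) hs0] with z hz using hE (subset_closure hz))
    exact this
  -- At one point of the circle the Schwarz function `(P - 1) / (P + 1)` has modulus `‖z‖`.
  set ω : ℂ → ℂ := fun z => (P z - 1) / (P z + 1) with hω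
  obtain ⟨hωd, hωm⟩ := cara_cayley hP
  have hω0 : ω 0 = 0 := by simp [hω, hP.2.1]
  obtain ⟨z0, hz0⟩ : ∃ z0 : ℂ, z0 = ((√q : ℝ) : ℂ) := ⟨_, rfl⟩
  have hz0n : ‖z0‖ = √q := by rw [hz0, Complex.norm_real, Real.norm_of_nonneg hs0.le]
  have hz0s : z0 ∈ sphere (0 : ℂ) √q := mem_sphere_zero_iff_norm.2 hz0n
  have hz0b := sphere_subset_disc hs1 hz0s
  have hz0ne : z0 ≠ 0 := norm_pos_iff.1 (hz0n ▸ hs0)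
  have hωz : ‖P z0 - 1‖ = √q * ‖P z0 + 1‖ := by
    have e := (hsph z0 hz0s).2
    refine (sq_eq_sq₀ (norm_nonneg _) (by positivity)).1 ?_
    rw [mul_pow, Real.sq_sqrt h0.le]
    have n1 : ‖P z0 - 1‖ ^ 2 = ‖P z0‖ ^ 2 + 1 - 2 * (P z0).re := by
      rw [← Complex.normSq_eq_norm_sq, ← Complex.normSq_eq_norm_sq, Complex.normSq_apply,
        Complex.normSq_apply]
      simp only [Complex.sub_re, Complex.sub_im, Complex.one_re, Complex.one_im]; ring
    have n2 : ‖P z0 + 1‖ ^ 2 = ‖P z0‖ ^ 2 + 1 + 2 * (P z0).re := by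
      rw [← Complex.normSq_eq_norm_sq, ← Complex.normSq_eq_norm_sq, Complex.normSq_apply,
        Complex.normSq_apply]
      simp only [Complex.add_re, Complex.add_im, Complex.one_re, Complex.one_im]; ring
    rw [n1, n2, e, lam]
    have : 1 + q ≠ 0 := by linarith
    field_simp; ring
  have hds : ‖dslope ω 0 z0‖ = 1 / 1 := by
    rw [dslope_of_ne _ hz0ne, slope_def_field, hω0, sub_zero, sub_zero, norm_div, hz0n, hω]
    simp only
    have : ‖P z0 + 1‖ ≠ 0 := norm_ne_zero_iff.2 (cara_add_one_ne hP hz0b)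
    rw [norm_div, hωz]
    field_simp
  have haff := Complex.affine_of_mapsTo_ball_of_norm_dslope_eq_div hωd (c := 0) (R₂ := 1)
    (by rw [show (P 0 - 1) / (P 0 + 1) = (0 : ℂ) from hω0]; exact hωm) hz0b hds
  set κ : ℂ := dslope ω 0 z0 with hκ
  have hκn : ‖κ‖ = 1 := by rw [hds]; norm_num
  have hPκ : ∀ z ∈ ball (0 : ℂ) 1, P z * (1 - z * κ) = 1 + z * κ := by
    intro z hz
    have e : ω z = z * κ := by
      have := haff hz
      simp only at this
      rw [show (P 0 - 1) / (P 0 + 1) = (0 : ℂ) from hω0] at this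
      simpa using this
    have h3 := cara_add_one_ne hP hz
    rw [← e, hω]
    field_simp; ring
  have hne : ∀ z ∈ ball (0 : ℂ) 1, 1 + z * κ ≠ 0 := by
    intro z hz h
    have : ‖z * κ‖ = 1 := by rw [eq_neg_of_add_eq_zero_right h]; simp
    rw [norm_mul, hκn, mul_one] at this
    rw [mem_ball_zero_iff] at hz
    linarith
  have hODE : ∀ z ∈ ball (0 : ℂ) 1, z ≠ 0 → (1 + z * κ) * deriv g z + 2 * κ = 0 := by
    intro z hz hz0
    have e1 := hPH z hz
    have e2 := hPκ z hz
    apply mul_left_cancel₀ hz0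
    linear_combination (1 - z * κ) * e1 - (1 + z * deriv g z) * e2
  have hODE' : ∀ z ∈ ball (0 : ℂ) 1, (1 + z * κ) * deriv g z + 2 * κ = 0 := by
    intro z hz
    rcases eq_or_ne z 0 with rfl | hz0
    · have hc : ContinuousAt (fun z => (1 + z * κ) * deriv g z + 2 * κ) 0 := by
        have := (hdg.differentiableAt (isOpen_ball.mem_nhds hz)).continuousAt
        fun_prop
      refine tendsto_nhds_unique (hc.tendsto.mono_left (nhdsWithin_le_nhds (s := {0}ᶜ))) ?_
      refine tendsto_const_nhds.congr' ?_
      filter_upwards [self_mem_nhdsWithin, nhdsWithin_le_nhds (isOpen_ball.mem_nhds hz)] with y hy hyb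
      exact (hODE y hyb hy).symm
    · exact hODE z hz hz0
  refine ⟨-κ, by rw [norm_neg, hκn], fun z hz => ?_⟩
  have hder : ∀ z ∈ ball (0 : ℂ) 1, HasDerivAt (fun z => Complex.exp (g z) * (1 - -κ * z) ^ 2) 0 z := by
    intro z hz
    have d1 := (hg.1.differentiableAt (isOpen_ball.mem_nhds hz)).hasDerivAt.cexp
    have d2 : HasDerivAt (fun z : ℂ => (1 - -κ * z) ^ 2) (2 * (1 - -κ * z) * κ) z := by
      have := (((hasDerivAt_id' z).const_mul (-κ)).const_sub 1).fun_pow 2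
      exact this.congr_deriv (by push_cast; ring)
    refine (d1.fun_mul d2).congr_deriv ?_
    linear_combination Complex.exp (g z) * (1 - -κ * z) * hODE' z hz
  have := isOpen_ball.is_const_of_deriv_eq_zero (convex_ball (0 : ℂ) 1).isPreconnected
    (fun z hz => (hder z hz).differentiableAt.differentiableWithinAt)
    (fun z hz => (hder z hz).deriv) hz zero_mem_disc
  rw [this, hg.2.1]
  simp

/-! ### Koebe functions -/

/-- The derivatives at `0` of `-2 log (1 - e z)`, the logarithm that belongs to the Koebe function. -/
lemma iteratedDeriv_koebe {g : ℂ → ℂ} (hg : DifferentiableOn ℂ g (ball 0 1)) {e : ℂ}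
    (h : ∀ z ∈ ball (0 : ℂ) 1, Complex.exp (g z) * (1 - e * z) ^ 2 = 1) (n : ℕ) :
    iteratedDeriv (n + 1) g 0 = 2 * e ^ (n + 1) * n.factorial := by
  have hne : ∀ z ∈ ball (0 : ℂ) 1, 1 - e * z ≠ 0 := by
    intro z hz h0
    have := h z hz
    rw [h0] at this
    simp at this
  have key : ∀ n : ℕ, ∀ z ∈ ball (0 : ℂ) 1,
      iteratedDeriv (n + 1) g z = 2 * e ^ (n + 1) * n.factorial / (1 - e * z) ^ (n + 1) := by
    intro n
    induction n with
    | zero =>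
      intro z hz
      have hz' := isOpen_ball.mem_nhds hz
      rw [zero_add, iteratedDeriv_one]
      have d1 := (hg.differentiableAt hz').hasDerivAt.cexp
      have d2 : HasDerivAt (fun z : ℂ => (1 - e * z) ^ 2) (-(2 * (1 - e * z) * e)) z := by
        have := (((hasDerivAt_id' z).const_mul e).const_sub 1).fun_pow 2
        exact this.congr_deriv (by push_cast; ring)
      have d3 : HasDerivAt (fun z => Complex.exp (g z) * (1 - e * z) ^ 2) 0 z := by
        refine (hasDerivAt_const z (1 : ℂ)).congr_of_eventuallyEq ?_
        filter_upwards [hz'] with y hy using h y hy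
      have d4 := (d1.fun_mul d2).unique d3
      have hz0 := hne z hz
      rw [eq_div_iff (by simpa using hz0)]
      have h5 : Complex.exp (g z) * (1 - e * z) ≠ 0 := mul_ne_zero (Complex.exp_ne_zero _) hz0
      apply mul_left_cancel₀ h5
      simp only [pow_one, Nat.factorial_zero, Nat.cast_one, mul_one]
      linear_combination d4
    | succ n ih =>
      intro z hz
      have hz' := isOpen_ball.mem_nhds hz
      rw [iteratedDeriv_succ]
      have e1 : iteratedDeriv (n + 1) g =ᶠ[𝓝 z]
          fun z => 2 * e ^ (n + 1) * n.factorial / (1 - e * z) ^ (n + 1) := by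
        filter_upwards [hz'] with y hy using ih y hy
      rw [e1.deriv_eq]
      have hz0 := hne z hz
      have d1 := (((hasDerivAt_id' z).const_mul e).const_sub 1).fun_pow (n + 1)
      have d2 := (hasDerivAt_const z (2 * e ^ (n + 1) * (n.factorial : ℂ))).fun_div d1
        (pow_ne_zero _ hz0)
      rw [d2.deriv, Nat.factorial_succ]
      push_cast
      field_simp
      ring
  rw [key n 0 zero_mem_disc]
  simp

/-- Equality for the rotated Koebe functions, whose logarithmic coefficients are `e ^ n / n`. -/
lemma tsum_koebe {r : ℝ} (hr0 : 0 < r) (hr1 : r < 1) {γ : ℕ → ℂ} {e : ℂ} (he : ‖e‖ = 1)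
    (hγ : ∀ n : ℕ, ((n : ℂ) + 1) * γ (n + 1) = e ^ (n + 1)) :
    ∑' n : ℕ, ((n : ℝ) + 1) * ‖γ (n + 1)‖ ^ 2 * r ^ (2 * (n + 1)) = Real.log (1 / (1 - r ^ 2)) := by
  have h1 : |r ^ 2| < 1 := by rw [abs_of_nonneg (sq_nonneg r)]; nlinarith
  rw [one_div, Real.log_inv, ← (Real.hasSum_pow_div_log_of_abs_lt_one h1).tsum_eq]
  refine tsum_congr fun n => ?_
  have h2 := congrArg norm (hγ n)
  have hn : (0 : ℝ) < (n : ℝ) + 1 := by positivity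
  rw [norm_mul, norm_pow, he, one_pow, show ((n : ℂ) + 1) = (((n : ℝ) + 1 : ℝ) : ℂ) by push_cast; rfl,
    Complex.norm_real, Real.norm_of_nonneg hn.le] at h2
  have h3 : ‖γ (n + 1)‖ = 1 / ((n : ℝ) + 1) := by rw [eq_div_iff hn.ne']; linarith
  rw [h3, pow_mul]
  field_simp

theorem bazilevic_inequality
    (r : ℝ) (hr0 : 0 < r) (hr1 : r < 1) (f : ℂ → ℂ) (γ : ℕ → ℂ) (hf : InClassS f) (hγ : IsLogCoeffs f γ) :
    (∑' n : ℕ, ((n : ℝ) + 1) * ‖γ (n + 1)‖ ^ 2 * r ^ (2 * (n + 1))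
        ≤ Real.log (1 / (1 - r ^ 2))) ∧
    (∑' n : ℕ, ((n : ℝ) + 1) * ‖γ (n + 1)‖ ^ 2 * r ^ (2 * (n + 1))
        = Real.log (1 / (1 - r ^ 2)) ↔ IsKoebeRotation f) := by
  obtain ⟨hfa, hfi, hf0, -⟩ := hf
  obtain ⟨g, hga, hg0, hexp, hco⟩ := hγ
  have hgd : DifferentiableOn ℂ g (ball 0 1) := hga.differentiableOn
  have hfg : ∀ z ∈ ball (0 : ℂ) 1, z * Complex.exp (g z) = f z := by
    intro z hz
    rcases eq_or_ne z 0 with rfl | hz0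
    · rw [zero_mul, hf0]
    · rw [hexp z hz hz0]; field_simp
  have hU : ULog g := by
    refine ⟨hgd, hg0, fun x hx y hy hxy => hfi hx hy ?_⟩
    simp only at hxy
    rw [← hfg x hx, ← hfg y hy, hxy]
  have hq0 : 0 < r ^ 2 := by positivity
  have hq1 : r ^ 2 < 1 := by nlinarith
  have hcf : ∀ n, cf g (n + 1) = 2 * γ (n + 1) := by
    intro n
    have : ((n + 1).factorial : ℂ) ≠ 0 := by exact_mod_cast (n + 1).factorial_ne_zero
    rw [cf, hco (n + 1) (by omega), mul_div_cancel_left₀ _ this]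
  -- `S g (r ^ 2)` is four times the sum in question.
  have hS : 4 * ∑' n : ℕ, ((n : ℝ) + 1) * ‖γ (n + 1)‖ ^ 2 * r ^ (2 * (n + 1)) = S g (r ^ 2) := by
    have h1 := S_hasSum hgd hq0 hq1
    rw [← h1.tsum_eq, h1.summable.tsum_eq_zero_add, ← tsum_mul_left]
    simp only [Nat.cast_zero, zero_mul, zero_add]
    refine tsum_congr fun n => ?_
    rw [hcf n, norm_mul, pow_mul]
    push_cast
    rw [Complex.norm_ofNat]
    ring
  have hlog : Real.log (1 / (1 - r ^ 2)) = -Real.log (1 - r ^ 2) := by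
    rw [one_div, Real.log_inv]
  have hPhi := phi_nonpos hU hq0 hq1
  refine ⟨?_, ?_, ?_⟩
  · rw [hlog]
    rw [Phi] at hPhi
    linarith
  · intro heq
    rw [heq, hlog] at hS
    obtain ⟨P, hP, hgain⟩ := exists_gain_eq_zero hU hq0 hq1 (by rw [Phi, ← hS]; ring)
    obtain ⟨κ, hκ, hk⟩ := koebe_of_gain_eq_zero hU hP hq0 hq1 hgain
    obtain ⟨θ, hθ⟩ := (Complex.norm_eq_one_iff κ).1 hκ
    refine ⟨θ, fun z hz => ?_⟩
    have h1 := hk z hz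
    have h2 : (1 - κ * z) ^ 2 ≠ 0 := fun h => by rw [h, mul_zero] at h1; exact zero_ne_one h1
    simp only
    rw [hθ, ← hfg z hz, eq_div_iff h2]
    linear_combination z * h1
  · rintro ⟨θ, hθ⟩
    set e : ℂ := Complex.exp (θ * Complex.I) with he
    have hen : ‖e‖ = 1 := Complex.norm_exp_ofReal_mul_I θ
    have hk : ∀ z ∈ ball (0 : ℂ) 1, Complex.exp (g z) * (1 - e * z) ^ 2 = 1 := by
      intro z hz
      rcases eq_or_ne z 0 with rfl | hz0
      · simp [hg0]
      have h2 : (1 - e * z) ^ 2 ≠ 0 := by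
        refine pow_ne_zero _ fun h => ?_
        have : ‖e * z‖ = 1 := by rw [← sub_eq_zero.1 h, norm_one]
        rw [norm_mul, hen, one_mul] at this
        rw [mem_ball_zero_iff] at hz
        linarith
      have h1 := hθ hz
      simp only at h1
      rw [← hfg z hz, eq_div_iff h2, mul_assoc] at h1
      exact mul_left_cancel₀ hz0 (h1.trans (mul_one z).symm)
    refine tsum_koebe hr0 hr1 hen fun n => ?_
    have h1 := iteratedDeriv_koebe hgd hk n
    rw [hco (n + 1) (by omega), Nat.factorial_succ] at h1
    push_cast at h1
    have : (n.factorial : ℂ) * 2 ≠ 0 := mul_ne_zero (by exact_mod_cast n.factorial_ne_zero) two_ne_zero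
    apply mul_left_cancel₀ this
    linear_combination h1
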